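/- Let n ≥ 0 be an integer such that n² − 4 is a nonsquare integer and O_{n²−4} is a maximal order (i.e., n² − 4 is a fundamental discriminant, meaning O_{n²−4} equals the full ring of integers of the quadratic field ℚ(√(n²−4))). Then the class number h_{n²−4} equals 1 if and only if n ∈ {0, 1, 3, 4, 5, 9, 21}, i.e., if and only if n² − 4 ∈ {−4, −3, 5, 12, 21, 77, 437}. -/

import Mathlib

noncomputable section

/-- A complex square root of an integer `d`. -/
def sqrtD (d : ℤ) : ℂ :=
  if 0 ≤ d then ((Real.sqrt d : ℝ) : ℂ) else Complex.I * ((Real.sqrt (-d) : ℝ) : ℂ)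

/-- The element `(Δ + √Δ)/2` generating the quadratic order of discriminant `Δ`. -/
def omegaD (d : ℤ) : ℂ := ((d : ℂ) + sqrtD d) / 2

/-- The quadratic order `O_Δ = ℤ[(Δ + √Δ)/2]` of discriminant `Δ`, as a subring of `ℂ`. -/
def QOrder (d : ℤ) : Subring ℂ := Subring.closure {omegaD d}

/-- The class number `h_Δ`: the order of the (wide) class group of `O_Δ`,
the group of invertible fractional ideals modulo principal fractional ideals. -/
def classNumber (d : ℤ) : ℕ := Nat.card (ClassGroup (QOrder d))

/-- `O_Δ` is a maximal order: every element of `ℚ(√Δ)` (the subfield of `ℂ` generated by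
`(Δ+√Δ)/2`) that is integral over `ℤ` already lies in `O_Δ`. -/
def IsMaximalOrder (d : ℤ) : Prop :=
  ∀ x ∈ Subfield.closure {omegaD d}, IsIntegral ℤ x → x ∈ QOrder d


abbrev RQ (n : ℤ) := QuadraticAlgebra ℤ (-1) n

lemma sqrtD_sq (d : ℤ) : sqrtD d * sqrtD d = d := by
  unfold sqrtD
  split_ifs with h
  · rw [← Complex.ofReal_mul, Real.mul_self_sqrt (by exact_mod_cast h)]; simp
  · have h' : (0:ℝ) ≤ -(d:ℝ) := by
      have : (d:ℝ) < 0 := by exact_mod_cast (not_le.mp h)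
      linarith
    have : (Complex.I * ((Real.sqrt (-d) : ℝ) : ℂ)) * (Complex.I * ((Real.sqrt (-d) : ℝ) : ℂ))
       = (Complex.I * Complex.I) * (((Real.sqrt (-d) * Real.sqrt (-d) : ℝ)) : ℂ) := by
      push_cast; ring
    rw [this, Real.mul_self_sqrt h']; simp

def epsC (n : ℤ) : ℂ := ((n:ℂ) + sqrtD (n ^ 2 - 4)) / 2

lemma epsC_mul (n : ℤ) : epsC n * epsC n = (-1 : ℤ) • (1:ℂ) + n • epsC n := by
  have h := sqrtD_sq (n ^ 2 - 4)
  push_cast at h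
  unfold epsC
  simp only [zsmul_eq_mul]
  push_cast
  linear_combination h / 4

def phi (n : ℤ) : RQ n →ₐ[ℤ] ℂ := QuadraticAlgebra.lift ⟨epsC n, epsC_mul n⟩

lemma phi_apply (n : ℤ) (z : RQ n) : phi n z = z.re + z.im * epsC n := by
  simp [phi, QuadraticAlgebra.lift]

lemma phi_inj (n : ℤ) (hns : ¬ IsSquare (n ^ 2 - 4)) : Function.Injective (phi n) := by
  rw [injective_iff_map_eq_zero]
  intro z hz
  rw [phi_apply] at hz
  unfold epsC at hz
  have h1 : ((2 * z.re + n * z.im : ℤ) : ℂ) = -(z.im * sqrtD (n ^ 2 - 4)) := by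
    push_cast; linear_combination 2 * hz
  have h2 : (2 * z.re + n * z.im) ^ 2 = (n ^ 2 - 4) * z.im ^ 2 := by
    have h := sqrtD_sq (n ^ 2 - 4)
    have : (((2 * z.re + n * z.im) ^ 2 : ℤ) : ℂ) = (((n ^ 2 - 4) * z.im ^ 2 : ℤ) : ℂ) := by
      rw [Int.cast_pow, h1]; push_cast; push_cast at h; linear_combination (z.im : ℂ) ^ 2 * h
    exact_mod_cast this
  have h3 : z.im = 0 := by
    by_contra h0
    have hd : z.im ^ 2 ∣ (2 * z.re + n * z.im) ^ 2 := ⟨n ^ 2 - 4, by rw [h2]; ring⟩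
    rw [Int.pow_dvd_pow_iff (by norm_num)] at hd
    obtain ⟨k, hk⟩ := hd
    rw [hk] at h2
    apply hns
    refine ⟨k, ?_⟩
    have : z.im ^ 2 ≠ 0 := pow_ne_zero _ h0
    apply mul_right_cancel₀ this
    rw [← h2]; ring
  rw [h3] at h2
  have h4 : z.re = 0 := by nlinarith
  ext <;> assumption

lemma phi_mem (n : ℤ) (z : RQ n) : phi n z ∈ QOrder (n ^ 2 - 4) := by
  have h1 : omegaD (n ^ 2 - 4) ∈ QOrder (n ^ 2 - 4) := Subring.subset_closure rfl
  obtain ⟨k, hk⟩ : Even (n ^ 2 - 4 - n) := by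
    have := Int.even_mul_pred_self n
    obtain ⟨j, hj⟩ := this
    exact ⟨j - 2, by linear_combination hj⟩
  have h2 : epsC n = omegaD (n ^ 2 - 4) - (k : ℤ) := by
    unfold epsC omegaD
    have : ((n ^ 2 - 4 - n : ℤ) : ℂ) = ((k + k : ℤ) : ℂ) := by rw [hk]
    push_cast at this ⊢
    linear_combination -this / 2
  rw [phi_apply, h2]
  exact add_mem (intCast_mem _ _) (mul_mem (intCast_mem _ _) (sub_mem h1 (intCast_mem _ _)))

def psi (n : ℤ) : RQ n →+* QOrder (n ^ 2 - 4) :=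
  (phi n).toRingHom.codRestrict _ (phi_mem n)

lemma psi_bij (n : ℤ) (hns : ¬ IsSquare (n ^ 2 - 4)) : Function.Bijective (psi n) := by
  constructor
  · intro a b hab
    exact phi_inj n hns (congrArg Subtype.val hab)
  · rintro ⟨x, hx⟩
    have hle : QOrder (n ^ 2 - 4) ≤ (phi n).toRingHom.range := by
      unfold QOrder
      rw [Subring.closure_le]
      rintro _ rfl
      obtain ⟨k, hk⟩ : Even (n ^ 2 - 4 - n) := by
        have := Int.even_mul_pred_self n
        obtain ⟨j, hj⟩ := this
        exact ⟨j - 2, by linear_combination hj⟩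
      refine ⟨⟨k, 1⟩, ?_⟩
      change phi n _ = _
      rw [phi_apply]
      unfold epsC omegaD
      have : ((n ^ 2 - 4 - n : ℤ) : ℂ) = ((k + k : ℤ) : ℂ) := by rw [hk]
      push_cast at this ⊢
      linear_combination -this / 2
    obtain ⟨z, hz⟩ := hle hx
    exact ⟨z, Subtype.ext hz⟩

def psiE (n : ℤ) (hns : ¬ IsSquare (n ^ 2 - 4)) : RQ n ≃+* QOrder (n ^ 2 - 4) :=
  RingEquiv.ofBijective (psi n) (psi_bij n hns)

theorem cn_of_pid (n : ℤ) (hns : ¬ IsSquare (n ^ 2 - 4)) (h : IsPrincipalIdealRing (RQ n)) :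
    classNumber (n ^ 2 - 4) = 1 := by
  have : IsPrincipalIdealRing (QOrder (n ^ 2 - 4)) :=
    IsPrincipalIdealRing.of_surjective (psi n) (psi_bij n hns).2
  unfold classNumber
  rw [Nat.card_eq_fintype_card]
  exact card_classGroup_eq_one

set_option maxHeartbeats 800000 in
theorem pid_of (n : ℤ) (hns : ¬ IsSquare (n ^ 2 - 4)) (hmax : IsMaximalOrder (n ^ 2 - 4))
    (h : classNumber (n ^ 2 - 4) = 1) : IsPrincipalIdealRing (RQ n) := by
  have hfin : Module.Finite ℤ (QOrder (n ^ 2 - 4)) :=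
    Module.Finite.equiv (psiE n hns).toAddEquiv.toIntLinearEquiv
  have hN : IsNoetherianRing (QOrder (n ^ 2 - 4)) := isNoetherian_of_tower ℤ inferInstance
  have hAlgInt : Algebra.IsIntegral ℤ (QOrder (n ^ 2 - 4)) := Algebra.IsIntegral.of_finite _ _
  have hdim : Ring.DimensionLEOne (QOrder (n ^ 2 - 4)) := by
    constructor
    intro p hp hpp
    exact Ring.DimensionLEOne.maximalOfPrime hp hpp
  have hic : IsIntegrallyClosed (QOrder (n ^ 2 - 4)) := by
    rw [isIntegrallyClosed_iff (FractionRing (QOrder (n ^ 2 - 4)))]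
    intro x hx
    have hinj : Function.Injective (QOrder (n ^ 2 - 4)).subtype := Subtype.val_injective
    let g : FractionRing (QOrder (n ^ 2 - 4)) →+* ℂ := IsFractionRing.lift hinj
    have hg : ∀ a : QOrder (n ^ 2 - 4), g (algebraMap _ _ a) = (a : ℂ) := fun a => IsFractionRing.lift_algebraMap hinj a
    have hyq : IsIntegral (QOrder (n ^ 2 - 4)) (g x) :=
      hx.map_of_comp_eq (RingHom.id _) g (by ext a; exact (hg a).symm)
    have hyi : IsIntegral ℤ (g x) := isIntegral_trans (R := ℤ) (A := QOrder (n ^ 2 - 4)) (g x) hyq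
    have hsub : ∀ a : QOrder (n ^ 2 - 4), (a : ℂ) ∈ Subfield.closure {omegaD (n ^ 2 - 4)} := by
      intro a
      have : QOrder (n ^ 2 - 4) ≤ (Subfield.closure {omegaD (n ^ 2 - 4)}).toSubring := by
        unfold QOrder
        rw [Subring.closure_le]
        exact Subfield.subset_closure
      exact this a.2
    obtain ⟨a, b, hb, hab⟩ := IsFractionRing.div_surjective (A := QOrder (n ^ 2 - 4)) x
    have hym : g x ∈ Subfield.closure {omegaD (n ^ 2 - 4)} := by
      rw [← hab, map_div₀, hg, hg]
      exact div_mem (hsub a) (hsub b)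
    refine ⟨⟨g x, hmax _ hym hyi⟩, ?_⟩
    apply g.injective
    rw [hg]
  have hD : IsDedekindDomain (QOrder (n ^ 2 - 4)) := { }
  unfold classNumber at h
  have hs := (Nat.card_eq_one_iff_unique.mp h).1
  have hP : IsPrincipalIdealRing (QOrder (n ^ 2 - 4)) := by
    constructor
    intro I
    by_cases hI : I = ⊥
    · rw [hI]; infer_instance
    · rw [← ClassGroup.mk0_eq_one_iff (mem_nonZeroDivisors_of_ne_zero hI)]
      exact Subsingleton.elim _ _
  exact IsPrincipalIdealRing.of_surjective (psiE n hns).symm.toRingHom (psiE n hns).symm.surjective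


lemma RQ_dom (n : ℤ) (hns : ¬ IsSquare (n ^ 2 - 4)) : IsDomain (RQ n) :=
  (phi_inj n hns).isDomain (phi n).toRingHom

lemma normRQ (n : ℤ) (z : RQ n) : z.norm = z.re ^ 2 + n * z.re * z.im + z.im ^ 2 := by
  rw [QuadraticAlgebra.norm_def]; ring

lemma quad_ne (n b : ℤ) (hns : ¬ IsSquare (n ^ 2 - 4)) : b ^ 2 + n * b + 1 ≠ 0 := by
  intro h
  exact hns ⟨2 * b + n, by linear_combination -4 * h⟩

lemma exists_small_rep (n b a : ℤ) (ha : 1 ≤ a) : ∃ k : ℤ, |2 * (b + k * a) + n| ≤ a := by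
  refine ⟨-((2 * b + n + a) / (2 * a)), ?_⟩
  have h1 := Int.mul_ediv_add_emod (2 * b + n + a) (2 * a)
  have h2 := Int.emod_nonneg (2 * b + n + a) (show 2 * a ≠ 0 by omega)
  have h3 := Int.emod_lt_of_pos (2 * b + n + a) (show 0 < 2 * a by omega)
  rw [abs_le]
  constructor <;> nlinarith

lemma J_principal (n : ℤ) (hns : ¬ IsSquare (n ^ 2 - 4))
    (H : ∀ a b : ℤ, 2 ≤ a → 4 * a ^ 2 ≤ |n ^ 2 - 4| → ¬ a ∣ b ^ 2 + n * b + 1) :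
    ∀ N : ℕ, ∀ a b : ℤ, 1 ≤ a → a ≤ N → a ∣ b ^ 2 + n * b + 1 →
      ∃ g : RQ n, Ideal.span {(⟨a, 0⟩ : RQ n), ⟨b, 1⟩} = Ideal.span {g} := by
  have hdom := RQ_dom n hns
  intro N
  induction N with
  | zero => intro a b h1 h2; push_cast at h2; omega
  | succ N ih =>
    intro a b0 ha haN hdvd0
    by_cases ha1 : a = 1
    · subst ha1
      refine ⟨1, ?_⟩
      rw [Ideal.span_singleton_one, Ideal.eq_top_iff_one]
      exact Ideal.subset_span (Or.inl rfl)
    obtain ⟨k, hk⟩ := exists_small_rep n b0 a ha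
    set b := b0 + k * a with hb
    have hJ : Ideal.span {(⟨a, 0⟩ : RQ n), ⟨b0, 1⟩} = Ideal.span {(⟨a, 0⟩ : RQ n), ⟨b, 1⟩} := by
      have : (⟨b, 1⟩ : RQ n) = ⟨b0, 1⟩ + (k : RQ n) * ⟨a, 0⟩ := by
        ext <;> simp [hb]
      rw [this, Ideal.span_pair_comm, Ideal.span_pair_comm (x := (⟨a, 0⟩ : RQ n))]
      exact (Ideal.span_pair_add_mul_right _ _ _).symm
    have hdvd : a ∣ b ^ 2 + n * b + 1 := by
      have : b ^ 2 + n * b + 1 = (b0 ^ 2 + n * b0 + 1) + a * (2 * b0 * k + k ^ 2 * a + n * k) := by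
        rw [hb]; ring
      rw [this]
      exact dvd_add hdvd0 (dvd_mul_right _ _)
    rw [hJ]
    obtain ⟨a', ha'⟩ := hdvd
    have ha2 : 2 ≤ a := by omega
    have hbig : |n ^ 2 - 4| < 4 * a ^ 2 := by
      by_contra hcon
      exact H a b ha2 (not_lt.mp hcon) ⟨a', ha'⟩
    have ha'0 : a' ≠ 0 := by
      rintro rfl
      exact quad_ne n b hns (by linarith)
    have hlt : |a'| < a := by
      have hsq : (2 * b + n) ^ 2 ≤ a ^ 2 := by
        rw [← sq_abs]; exact pow_le_pow_left₀ (abs_nonneg _) hk 2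
      have e : 4 * (a * a') = (2 * b + n) ^ 2 - (n ^ 2 - 4) := by rw [← ha']; ring
      have hb1 := abs_lt.mp hbig
      have hn0 := sq_nonneg n
      have hs0 := sq_nonneg (2 * b + n)
      rw [abs_lt]
      constructor
      · by_contra hc; push Not at hc; nlinarith
      · by_contra hc; push Not at hc; nlinarith
    obtain ⟨g, hg⟩ := ih |a'| (-b - n) (by have := abs_pos.mpr ha'0; omega)
      (by push_cast at haN; omega) (by
        rw [abs_dvd]; refine ⟨a, ?_⟩; linear_combination ha')
    have hg' : Ideal.span {(⟨a', 0⟩ : RQ n), ⟨-b - n, 1⟩} = Ideal.span {g} := by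
      rw [← hg]
      rcases abs_choice a' with h | h
      · rw [h]
      · rw [h]
        have : (⟨-a', 0⟩ : RQ n) = -⟨a', 0⟩ := by ext <;> simp
        rw [this]
        apply le_antisymm
        · rw [Ideal.span_le]
          rintro x (rfl | rfl)
          · exact neg_mem_iff.mp (Ideal.subset_span (Or.inl rfl))
          · exact Ideal.subset_span (Or.inr rfl)
        · rw [Ideal.span_le]
          rintro x (rfl | rfl)
          · exact neg_mem_iff.mpr (Ideal.subset_span (Or.inl rfl))
          · exact Ideal.subset_span (Or.inr rfl)
    set η : RQ n := ⟨b, 1⟩ with hη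
    set ηb : RQ n := ⟨b + n, -1⟩ with hηb
    have hηη : η * ηb = (⟨a, 0⟩ : RQ n) * ⟨a', 0⟩ := by
      ext
      · simp [hη, hηb]; linear_combination ha'
      · simp [hη, hηb]
    have hηb' : (⟨-b - n, 1⟩ : RQ n) = -ηb := by ext <;> simp [hηb]; ring
    have hηb0 : ηb ≠ 0 := by
      intro h; have := congrArg QuadraticAlgebra.im h; simp [hηb] at this
    have ha0 : (⟨a, 0⟩ : RQ n) ≠ 0 := by
      intro h; have := congrArg QuadraticAlgebra.re h; simp at this; omega
    rw [hηb'] at hg'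
    -- g = r a' + s ηb
    have hgm : g ∈ Ideal.span {(⟨a', 0⟩ : RQ n), -ηb} := by
      rw [hg']; exact Ideal.mem_span_singleton_self g
    obtain ⟨r, s, hrs⟩ := Ideal.mem_span_pair.mp hgm
    have hda : g ∣ ⟨a', 0⟩ := by
      rw [← Ideal.mem_span_singleton, ← hg']; exact Ideal.subset_span (Or.inl rfl)
    have hdη : g ∣ -ηb := by
      rw [← Ideal.mem_span_singleton, ← hg']; exact Ideal.subset_span (Or.inr rfl)
    refine ⟨r * η - s * ⟨a, 0⟩, ?_⟩
    have key : ηb * (r * η - s * ⟨a, 0⟩) = ⟨a, 0⟩ * g := by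
      rw [← hrs]; linear_combination r * hηη
    apply le_antisymm
    · rw [Ideal.span_le]
      rintro x (rfl | rfl)
      · rw [SetLike.mem_coe, Ideal.mem_span_singleton]
        obtain ⟨c, hc⟩ := hdη
        refine ⟨-c, mul_left_cancel₀ hηb0 ?_⟩
        linear_combination (-⟨a, 0⟩ : RQ n) * hc + c * key
      · rw [SetLike.mem_coe, Ideal.mem_span_singleton]
        obtain ⟨c, hc⟩ := hda
        refine ⟨c, mul_left_cancel₀ hηb0 ?_⟩
        linear_combination hηη + (⟨a, 0⟩ : RQ n) * hc - c * key
    · rw [Ideal.span_le]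
      rintro x (rfl | rfl)
      exact sub_mem (Ideal.mul_mem_left _ _ (Ideal.subset_span (Or.inr rfl)))
        (Ideal.mul_mem_left _ _ (Ideal.subset_span (Or.inl rfl)))

lemma pid_of_check (n : ℤ) (hns : ¬ IsSquare (n ^ 2 - 4))
    (H : ∀ a b : ℤ, 2 ≤ a → 4 * a ^ 2 ≤ |n ^ 2 - 4| → ¬ a ∣ b ^ 2 + n * b + 1) :
    IsPrincipalIdealRing (RQ n) := by
  constructor
  intro I
  by_cases hI : I = ⊥
  · rw [hI]; infer_instance
  let L : Ideal ℤ :=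
    { carrier := {k | ∃ x, (⟨x, k⟩ : RQ n) ∈ I}
      add_mem' := by
        rintro k l ⟨x, hx⟩ ⟨y, hy⟩
        exact ⟨x + y, I.add_mem hx hy⟩
      zero_mem' := ⟨0, I.zero_mem⟩
      smul_mem' := by
        rintro c k ⟨x, hx⟩
        refine ⟨c * x, ?_⟩
        have := I.mul_mem_left (c : RQ n) hx
        convert this using 1
        ext <;> simp }
  obtain ⟨c, hc⟩ := (IsPrincipalIdealRing.principal L).principal
  have hmemL : ∀ k, k ∈ L ↔ c ∣ k := by
    intro k; rw [hc]; exact Ideal.mem_span_singleton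
  have hcim : ∀ z ∈ I, c ∣ z.im := fun z hz => (hmemL _).mp ⟨z.re, hz⟩
  have hcre : ∀ z ∈ I, c ∣ z.re := by
    intro z hz
    have := hcim _ (I.mul_mem_left (⟨0, 1⟩ : RQ n) hz)
    simp at this
    exact (dvd_add_left (Dvd.dvd.mul_left (hcim z hz) n)).mp this
  have hc0 : c ≠ 0 := by
    rintro rfl
    apply hI
    rw [eq_bot_iff]
    intro z hz
    have h1 := hcim z hz
    have h2 := hcre z hz
    rw [zero_dvd_iff] at h1 h2
    rw [Submodule.mem_bot]
    ext <;> assumption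
  obtain ⟨x0, hx0⟩ := (hmemL c).mpr dvd_rfl
  obtain ⟨b, hb⟩ := hcre _ hx0
  simp only at hb
  subst hb
  let A : Ideal ℤ :=
    { carrier := {k | (⟨c * k, 0⟩ : RQ n) ∈ I}
      add_mem' := by
        intro k l hx hy
        have := I.add_mem (show (⟨c * k, 0⟩ : RQ n) ∈ I from hx) (show (⟨c * l, 0⟩ : RQ n) ∈ I from hy)
        change _ ∈ I
        convert this using 1
        ext <;> simp
        ring
      zero_mem' := by
        change _ ∈ I
        convert I.zero_mem using 1
        ext <;> simp
      smul_mem' := by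
        intro e k hx
        have := I.mul_mem_left (e : RQ n) (show (⟨c * k, 0⟩ : RQ n) ∈ I from hx)
        change _ ∈ I
        convert this using 1
        ext <;> simp
        ring }
  obtain ⟨a0, ha0⟩ := (IsPrincipalIdealRing.principal A).principal
  have hmemA : ∀ k, (⟨c * k, 0⟩ : RQ n) ∈ I ↔ a0 ∣ k := by
    intro k
    change k ∈ A ↔ _
    rw [ha0]; exact Ideal.mem_span_singleton
  have hNd : a0 ∣ b ^ 2 + n * b + 1 := by
    rw [← hmemA]
    have := I.mul_mem_left (⟨b + n, -1⟩ : RQ n) hx0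
    convert this using 1
    ext <;> simp <;> ring
  have ha00 : a0 ≠ 0 := by
    rintro rfl
    exact quad_ne n b hns (zero_dvd_iff.mp hNd)
  obtain ⟨g, hg⟩ := J_principal n hns H (|a0|).toNat |a0| b
    (by have := abs_pos.mpr ha00; omega) (by omega) (by rwa [abs_dvd])
  refine ⟨(c : RQ n) * g, ?_⟩
  have hIa : (⟨c * |a0|, 0⟩ : RQ n) ∈ I := by
    rw [hmemA]; exact (dvd_abs _ _).mpr dvd_rfl
  change I = Ideal.span _
  apply le_antisymm
  · intro z hz
    rw [Ideal.mem_span_singleton]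
    obtain ⟨u, hu⟩ := hcre z hz
    obtain ⟨v, hv⟩ := hcim z hz
    have h1 : (⟨c * (u - v * b), 0⟩ : RQ n) ∈ I := by
      have := sub_mem hz (I.mul_mem_left (v : RQ n) hx0)
      convert this using 1
      ext <;> simp [hu, hv] <;> ring
    rw [hmemA] at h1
    rw [← abs_dvd] at h1
    obtain ⟨k, hk⟩ := h1
    have h2 : (⟨u, v⟩ : RQ n) ∈ Ideal.span {g} := by
      rw [← hg, Ideal.mem_span_pair]
      refine ⟨(k : RQ n), (v : RQ n), ?_⟩
      ext
      · simp; linear_combination -hk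
      · simp
    rw [Ideal.mem_span_singleton] at h2
    have : z = (c : RQ n) * ⟨u, v⟩ := by ext <;> simp [hu, hv]
    rw [this]
    exact mul_dvd_mul_left _ h2
  · rw [Ideal.span_singleton_le_iff_mem]
    have h2 : g ∈ Ideal.span {(⟨|a0|, 0⟩ : RQ n), ⟨b, 1⟩} := by
      rw [hg]; exact Ideal.mem_span_singleton_self g
    obtain ⟨r, s, hrs⟩ := Ideal.mem_span_pair.mp h2
    have : (c : RQ n) * g = r * ⟨c * |a0|, 0⟩ + s * ⟨c * b, c⟩ := by
      rw [← hrs]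
      ext <;> simp <;> ring
    rw [this]
    exact add_mem (I.mul_mem_left _ hIa) (I.mul_mem_left _ hx0)

lemma zmod_check (n a b : ℤ) (k : ℕ) (hk : a = k)
    (h : ∀ x : ZMod k, x ^ 2 + (n : ZMod k) * x + 1 ≠ 0) : ¬ a ∣ b ^ 2 + n * b + 1 := by
  subst hk
  intro hd
  have := (ZMod.intCast_zmod_eq_zero_iff_dvd _ _).mpr hd
  push_cast at this
  exact h _ this

theorem reverse_dir (n : ℤ) (hns : ¬ IsSquare (n ^ 2 - 4))
    (h : n ∈ ({0, 1, 3, 4, 5, 9, 21} : Set ℤ)) : classNumber (n ^ 2 - 4) = 1 := by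
  apply cn_of_pid n hns
  apply pid_of_check n hns
  intro a b ha hle
  simp only [Set.mem_insert_iff, Set.mem_singleton_iff] at h
  have ha10 : a ≤ 10 := by
    have : |n ^ 2 - 4| ≤ 437 := by
      rcases h with rfl | rfl | rfl | rfl | rfl | rfl | rfl <;> norm_num
    nlinarith
  rcases h with rfl | rfl | rfl | rfl | rfl | rfl | rfl <;> interval_cases a <;>
    first
    | (exfalso; revert hle; norm_num; done)
    | exact zmod_check _ _ _ 2 rfl (by decide)
    | exact zmod_check _ _ _ 3 rfl (by decide)
    | exact zmod_check _ _ _ 4 rfl (by decide)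
    | exact zmod_check _ _ _ 5 rfl (by decide)
    | exact zmod_check _ _ _ 6 rfl (by decide)
    | exact zmod_check _ _ _ 7 rfl (by decide)
    | exact zmod_check _ _ _ 8 rfl (by decide)
    | exact zmod_check _ _ _ 9 rfl (by decide)
    | exact zmod_check _ _ _ 10 rfl (by decide)


lemma assoc_omega (n : ℤ) (x y : ℤ) : Associated (⟨x, y⟩ : RQ n) ⟨-y, x + n * y⟩ := by
  have hu : IsUnit (⟨0, 1⟩ : RQ n) := by
    rw [QuadraticAlgebra.isUnit_iff_norm_isUnit, normRQ]; simp
  obtain ⟨u, hu⟩ := hu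
  refine ⟨u, ?_⟩
  rw [hu]; ext <;> simp

lemma assoc_neg (n : ℤ) (x y : ℤ) : Associated (⟨x, y⟩ : RQ n) ⟨-x, -y⟩ := by
  refine ⟨-1, ?_⟩
  ext <;> simp

lemma assoc_omega_inv (n : ℤ) (x y : ℤ) : Associated (⟨x, y⟩ : RQ n) ⟨n * x + y, -x⟩ := by
  have := (assoc_omega n (n * x + y) (-x)).symm
  convert this using 2 <;> ring

lemma exists_C1_aux (n : ℤ) (hn : 3 ≤ n) : ∀ N : ℕ, ∀ x y : ℤ, |x| + |y| ≤ N →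
    0 < x ^ 2 + n * x * y + y ^ 2 →
    ∃ a b : ℤ, 1 ≤ a ∧ 0 ≤ b ∧ Associated (⟨x, y⟩ : RQ n) ⟨a, b⟩ := by
  intro N
  induction N with
  | zero =>
    intro x y h hq
    have hx : x = 0 := abs_nonpos_iff.mp (by have := abs_nonneg y; push_cast at h; linarith)
    have hy : y = 0 := abs_nonpos_iff.mp (by have := abs_nonneg x; push_cast at h; linarith)
    subst hx hy; simp at hq
  | succ N ih =>
    -- the case x > 0
    have key : ∀ x y : ℤ, 0 < x → |x| + |y| ≤ (N + 1 : ℕ) → 0 < x ^ 2 + n * x * y + y ^ 2 →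
        ∃ a b : ℤ, 1 ≤ a ∧ 0 ≤ b ∧ Associated (⟨x, y⟩ : RQ n) ⟨a, b⟩ := by
      intro x y hx h hq
      by_cases hy : 0 ≤ y
      · exact ⟨x, y, hx, hy, Associated.refl _⟩
      push Not at hy
      rw [abs_of_pos hx, abs_of_neg hy] at h
      rcases lt_trichotomy x (-y) with hlt | heq | hgt
      · obtain ⟨a, b, h1, h2, h3⟩ := ih (n * x + y) (-x) (by
          rw [abs_neg, abs_of_pos hx]
          have : |n * x + y| < -y := by
            rw [abs_lt]
            constructor
            · nlinarith
            · by_contra hc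
              push Not at hc
              nlinarith
          push_cast at h; omega) (by nlinarith)
        exact ⟨a, b, h1, h2, (assoc_omega_inv n x y).trans h3⟩
      · exfalso
        have : y = -x := by omega
        subst this
        nlinarith
      · obtain ⟨a, b, h1, h2, h3⟩ := ih (-y) (x + n * y) (by
          rw [abs_neg, abs_of_neg hy]
          have : |x + n * y| < x := by
            rw [abs_lt]
            constructor
            · by_contra hc
              push Not at hc
              nlinarith
            · nlinarith
          push_cast at h; omega) (by nlinarith)
        exact ⟨a, b, h1, h2, (assoc_omega n x y).trans h3⟩
    intro x y h hq
    rcases lt_trichotomy x 0 with hx | hx | hx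
    · obtain ⟨a, b, h1, h2, h3⟩ := key (-x) (-y) (by omega) (by simpa using h) (by nlinarith)
      exact ⟨a, b, h1, h2, (assoc_neg n x y).trans h3⟩
    · subst hx
      have hy : y ≠ 0 := by rintro rfl; simp at hq
      have h1 := assoc_omega_inv n 0 y
      simp only [mul_zero, zero_add, neg_zero] at h1
      rcases lt_or_gt_of_ne hy with h2 | h2
      · refine ⟨-y, 0, by omega, le_rfl, h1.trans ?_⟩
        simpa using assoc_neg n y 0
      · exact ⟨y, 0, by omega, le_rfl, h1⟩
    · exact key x y hx h hq

lemma exists_C1 (n : ℤ) (hn : 3 ≤ n) (z : RQ n) (hz : 0 < z.norm) :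
    ∃ a b : ℤ, 1 ≤ a ∧ 0 ≤ b ∧ Associated z ⟨a, b⟩ := by
  rw [normRQ] at hz
  exact exists_C1_aux n hn (|z.re| + |z.im|).toNat z.re z.im (by
    have := abs_nonneg z.re; have := abs_nonneg z.im; omega) hz

lemma natAbs_norm_assoc {n : ℤ} {z w : RQ n} (h : Associated z w) :
    z.norm.natAbs = w.norm.natAbs := by
  obtain ⟨u, rfl⟩ := h
  rw [map_mul, Int.natAbs_mul]
  have : IsUnit ((u : RQ n).norm) := QuadraticAlgebra.isUnit_iff_norm_isUnit.mp u.isUnit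
  rw [Int.isUnit_iff_natAbs_eq.mp this, mul_one]

lemma C1_norm_pos {n : ℤ} (hn : 3 ≤ n) {x y : ℤ} (hx : 1 ≤ x) (hy : 0 ≤ y) :
    0 < (⟨x, y⟩ : RQ n).norm := by
  rw [normRQ]; simp only; 
  have : 0 ≤ n * x * y := by positivity
  nlinarith

lemma C1_unique (n : ℤ) (hn : 3 ≤ n) (x y x' y' : ℤ) (hx : 1 ≤ x) (hy : 0 ≤ y)
    (hx' : 1 ≤ x') (hy' : 0 ≤ y') (h : Associated (⟨x, y⟩ : RQ n) ⟨x', y'⟩) : x = x' ∧ y = y' := by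
  have h1 := C1_norm_pos hn hx hy
  have h2 := C1_norm_pos hn hx' hy'
  obtain ⟨u, hu⟩ := h
  have hN : (⟨x, y⟩ : RQ n).norm = (⟨x', y'⟩ : RQ n).norm := by
    have := natAbs_norm_assoc ⟨u, hu⟩; omega
  have hNu : (u : RQ n).norm = 1 := by
    have := congrArg QuadraticAlgebra.norm hu
    rw [map_mul, ← hN] at this
    nlinarith
  set a := (u : RQ n).re with ha
  set b := (u : RQ n).im with hb
  have e1 := congrArg QuadraticAlgebra.re hu
  have e2 := congrArg QuadraticAlgebra.im hu
  simp only [QuadraticAlgebra.re_mul, QuadraticAlgebra.im_mul, ← ha, ← hb] at e1 e2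
  rw [normRQ] at h1 h2 hN hNu
  simp only [← ha, ← hb] at h1 h2 hN hNu
  -- k a = x'x + n x' y + y' y
  have k1 : (x ^ 2 + n * x * y + y ^ 2) * a = x' * x + n * x' * y + y' * y := by
    rw [← e1, ← e2]; ring
  have k2 : (x ^ 2 + n * x * y + y ^ 2) * (a + n * b) = x' * x + n * y' * x + y' * y := by
    rw [← e1, ← e2]; ring
  have p1 : 0 < a := by
    have h3 : 0 ≤ n * x' * y := by positivity
    have h4 : 0 ≤ y' * y := by positivity
    by_contra hc
    push Not at hc
    nlinarith
  have p2 : 0 < a + n * b := by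
    have h3 : 0 ≤ n * y' * x := by positivity
    have h4 : 0 ≤ y' * y := by positivity
    by_contra hc
    push Not at hc
    nlinarith
  have hb0 : b = 0 := by
    rcases lt_trichotomy b 0 with h | h | h
    · exfalso
      have : (a + n * b) * (-b) * n > 0 := by
        apply mul_pos (mul_pos p2 (by omega)) (by omega)
      nlinarith [sq_nonneg (a + n * b), sq_nonneg b]
    · exact h
    · exfalso
      have : n * a * b > 0 := by
        apply mul_pos (mul_pos (by omega) p1) h
      nlinarith [sq_nonneg a, sq_nonneg b]
  rw [hb0] at hNu e1 e2
  have ha1 : a = 1 := by nlinarith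
  rw [ha1] at e1 e2
  constructor <;> linarith

def piR (n : ℤ) : RQ n := ⟨-1, 1⟩

lemma piR_norm (n : ℤ) : (piR n).norm = -(n - 2) := by
  rw [normRQ]; simp [piR]; ring

lemma piR_dvd (n : ℤ) (hn : 3 ≤ n) (x y : ℤ) : piR n ∣ ⟨x, y⟩ ↔ n - 2 ∣ x + y := by
  constructor
  · rintro ⟨z, hz⟩
    have e1 := congrArg QuadraticAlgebra.re hz
    have e2 := congrArg QuadraticAlgebra.im hz
    simp [piR] at e1 e2
    exact ⟨z.im, by rw [e1, e2]; ring⟩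
  · rintro ⟨k, hk⟩
    refine ⟨⟨-x - k, k⟩, ?_⟩
    ext
    · simp [piR]
    · simp [piR]; linear_combination hk

lemma exists_C1_neg (n : ℤ) (hn : 3 ≤ n) (z : RQ n) (hz : z.norm < 0) :
    ∃ a b : ℤ, 1 ≤ a ∧ 0 ≤ b ∧ n - 2 ∣ a + b ∧ Associated (piR n * z) ⟨a, b⟩ := by
  obtain ⟨a, b, h1, h2, h3⟩ := exists_C1 n hn (piR n * z) (by
    rw [map_mul, piR_norm]; nlinarith)
  refine ⟨a, b, h1, h2, ?_, h3⟩
  rw [← piR_dvd n hn]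
  exact (dvd_mul_right _ _).trans h3.dvd

lemma neg_norm_ge (n : ℤ) (hn : 3 ≤ n) (z : RQ n) (hz : z.norm < 0) : n - 2 ≤ -z.norm := by
  obtain ⟨a, b, h1, h2, ⟨s, hs⟩, h4⟩ := exists_C1_neg n hn z hz
  have h5 := natAbs_norm_assoc h4
  have h6 := C1_norm_pos hn h1 h2
  have h7 : (⟨a, b⟩ : RQ n).norm = (n - 2) * -z.norm := by
    have : 0 < (piR n * z).norm := by rw [map_mul, piR_norm]; nlinarith
    have : (⟨a, b⟩ : RQ n).norm = (piR n * z).norm := by omega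
    rw [this, map_mul, piR_norm]; ring
  rw [normRQ] at h7
  simp only at h7
  have h8 : (a + b) ^ 2 + (n - 2) * (a * b) = (n - 2) * -z.norm := by rw [← h7]; ring
  rw [hs] at h8
  have h9 : (n - 2) * s ^ 2 + a * b = - z.norm := by
    have : n - 2 ≠ 0 := by omega
    apply mul_left_cancel₀ this
    linear_combination h8
  have hs1 : 1 ≤ s := by
    by_contra hc; push Not at hc; nlinarith
  have : 0 ≤ a * b := by positivity
  nlinarith

lemma pos_norm_small (n : ℤ) (hn : 3 ≤ n) (z : RQ n) (hz : 0 < z.norm) (hlt : z.norm < n + 2) :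
    IsSquare z.norm := by
  obtain ⟨a, b, h1, h2, h4⟩ := exists_C1 n hn z hz
  have h5 := natAbs_norm_assoc h4
  have h6 := C1_norm_pos hn h1 h2
  have h7 : z.norm = a ^ 2 + n * a * b + b ^ 2 := by
    have : z.norm = (⟨a, b⟩ : RQ n).norm := by omega
    rw [this, normRQ]
  have hb : b = 0 := by
    by_contra hb
    have : 1 ≤ b := by omega
    have h8 : 1 ≤ a * b := by nlinarith
    nlinarith
  rw [hb] at h7
  exact ⟨a, by rw [h7]; ring⟩

lemma unit_norm (n : ℤ) (hn : 4 ≤ n) (u : (RQ n)ˣ) : (u : RQ n).norm = 1 := by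
  have := Int.isUnit_iff.mp (QuadraticAlgebra.isUnit_iff_norm_isUnit.mp u.isUnit)
  rcases this with h | h
  · exact h
  · have := neg_norm_ge n (by omega) (u : RQ n) (by rw [h]; norm_num)
    omega

/-- the element of norm ±p -/
lemma exists_norm_prime (n : ℤ) (hns : ¬ IsSquare (n ^ 2 - 4)) [IsPrincipalIdealRing (RQ n)]
    (p : ℕ) (hp : p.Prime) (z : RQ n) (hz : (p : ℤ) ∣ z.norm) (hnz : ¬ (p : RQ n) ∣ z) :
    ∃ g : RQ n, g.norm.natAbs = p := by
  have := RQ_dom n hns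
  have hnp : ¬ Prime (p : RQ n) := by
    intro hpr
    have h1 : (p : RQ n) ∣ z * star z := by
      rw [← QuadraticAlgebra.algebraMap_norm_eq_mul_star]
      obtain ⟨k, hk⟩ := hz
      rw [hk, map_mul]
      exact Dvd.intro _ rfl
    rcases hpr.dvd_or_dvd h1 with h | h
    · exact hnz h
    · apply hnz
      obtain ⟨k, hk⟩ := h
      refine ⟨star k, ?_⟩
      have := congrArg star hk
      simp only [star_star, star_mul', star_natCast] at this
      exact this
  rw [← irreducible_iff_prime] at hnp
  have hp0 : ¬ IsUnit (p : RQ n) := by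
    rw [QuadraticAlgebra.isUnit_iff_norm_isUnit, QuadraticAlgebra.norm_natCast, Int.isUnit_iff_natAbs_eq]
    simp [Int.natAbs_pow, hp.one_lt.ne']
  rw [irreducible_iff] at hnp
  push Not at hnp
  obtain ⟨a, b, hab, ha, hb⟩ := hnp hp0
  rw [QuadraticAlgebra.isUnit_iff_norm_isUnit, Int.isUnit_iff_natAbs_eq] at ha hb
  have h2 : a.norm.natAbs * b.norm.natAbs = p ^ 2 := by
    rw [← Int.natAbs_mul, ← map_mul, ← hab, QuadraticAlgebra.norm_natCast]
    simp [Int.natAbs_pow]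
  have h3 : a.norm.natAbs ∣ p ^ 2 := ⟨_, h2.symm⟩
  obtain ⟨i, hi, hia⟩ := (Nat.dvd_prime_pow hp).mp h3
  interval_cases i
  · simp at hia; omega
  · exact ⟨a, by simpa using hia⟩
  · rw [hia] at h2
    have : 0 < p ^ 2 := by have := hp.pos; positivity
    exact absurd (by nlinarith) hb

lemma no_root (n : ℤ) (hn : 3 ≤ n) (hns : ¬ IsSquare (n ^ 2 - 4)) [IsPrincipalIdealRing (RQ n)]
    (p : ℕ) (hp : p.Prime) (hpn : (p : ℤ) < n - 2) (b : ℤ) : ¬ (p : ℤ) ∣ b ^ 2 + n * b + 1 := by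
  intro hd
  obtain ⟨g, hg⟩ := exists_norm_prime n hns p hp ⟨b, 1⟩ (by rw [normRQ]; simpa using hd) (by
    rintro ⟨k, hk⟩
    have := congrArg QuadraticAlgebra.im hk
    simp at this
    have h2 : (p : ℤ) ∣ 1 := ⟨k.im, this⟩
    have := Int.eq_one_of_dvd_one (by positivity) h2
    have := hp.one_lt; omega)
  rcases Int.natAbs_eq g.norm with h | h
  · rw [hg] at h
    have := pos_norm_small n hn g (by rw [h]; exact_mod_cast hp.pos) (by omega)
    rw [h] at this
    exact (Nat.prime_iff_prime_int.mp hp).not_isSquare this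
  · rw [hg] at h
    have := neg_norm_ge n hn g (by rw [h]; have := hp.pos; omega)
    omega


def SA (n : ℤ) (k : ℕ) : Set (Associates (RQ n)) := {c | ∃ z, Associates.mk z = c ∧ z.norm.natAbs = k}

lemma mem_SA {n : ℤ} {k : ℕ} {z : RQ n} : Associates.mk z ∈ SA n k ↔ z.norm.natAbs = k := by
  constructor
  · rintro ⟨w, hw, hk⟩
    rw [← hk]
    exact natAbs_norm_assoc (Associates.mk_eq_mk_iff_associated.mp hw).symm
  · intro h; exact ⟨z, rfl, h⟩

/-- elements of the cone with norm `k` -/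
def A1 (n : ℤ) (k : ℕ) : Set (ℕ × ℕ) :=
  {p | ((p.1 : ℤ) + 1) ^ 2 + n * (p.1 + 1) * p.2 + (p.2 : ℤ) ^ 2 = k}

def A2 (n : ℤ) (k : ℕ) : Set (ℕ × ℕ) :=
  {p | (n - 2 ∣ (p.1 : ℤ) + 1 + p.2) ∧
    ((p.1 : ℤ) + 1) ^ 2 + n * (p.1 + 1) * p.2 + (p.2 : ℤ) ^ 2 = (n - 2) * k}

def toR (n : ℤ) (p : ℕ × ℕ) : RQ n := ⟨(p.1 : ℤ) + 1, p.2⟩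

lemma toR_inj (n : ℤ) (hn : 3 ≤ n) : Function.Injective (fun p => Associates.mk (toR n p)) := by
  rintro ⟨a, b⟩ ⟨a', b'⟩ h
  have := C1_unique n hn _ _ _ _ (by omega) (by omega) (by omega) (by omega)
    (Associates.mk_eq_mk_iff_associated.mp h)
  ext <;> simp <;> omega

lemma toR_norm (n : ℤ) (p : ℕ × ℕ) :
    (toR n p).norm = ((p.1 : ℤ) + 1) ^ 2 + n * (p.1 + 1) * p.2 + (p.2 : ℤ) ^ 2 := by
  rw [normRQ]; rfl

lemma A1_sub (n : ℤ) (hn : 3 ≤ n) (k : ℕ) : A1 n k ⊆ (Finset.range (k + 1) ×ˢ Finset.range (k + 1) : Finset (ℕ × ℕ)) := by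
  rintro ⟨x, y⟩ h
  have h : ((x : ℤ) + 1) ^ 2 + n * (x + 1) * y + (y : ℤ) ^ 2 = k := h
  have h0 : 0 ≤ n * (x + 1) * y := by positivity
  simp only [Finset.coe_product, Set.mem_prod, Finset.mem_coe, Finset.mem_range]
  constructor
  · have : (x : ℤ) < k + 1 := by nlinarith
    omega
  · have : (y : ℤ) < k + 1 := by nlinarith
    omega

lemma A1_fin (n : ℤ) (hn : 3 ≤ n) (k : ℕ) : (A1 n k).Finite :=
  (Finset.finite_toSet _).subset (A1_sub n hn k)

lemma A2_fin (n : ℤ) (hn : 3 ≤ n) (k : ℕ) : (A2 n k).Finite := by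
  apply (A1_fin n hn ((n - 2).toNat * k)).subset
  rintro p ⟨_, h⟩
  change _ = _
  rw [h]; push_cast; rw [Int.toNat_of_nonneg (by omega)]

def SP (n : ℤ) (k : ℤ) : Set (Associates (RQ n)) := {c | ∃ z, Associates.mk z = c ∧ z.norm = k}

lemma mem_SP {n : ℤ} (hn : 4 ≤ n) {k : ℤ} {z : RQ n} : Associates.mk z ∈ SP n k ↔ z.norm = k := by
  constructor
  · rintro ⟨w, hw, hk⟩
    obtain ⟨u, rfl⟩ := Associates.mk_eq_mk_iff_associated.mp hw
    rw [map_mul, hk, unit_norm n hn, mul_one]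
  · intro h; exact ⟨z, rfl, h⟩

lemma SP_eq (n : ℤ) (hn : 4 ≤ n) (k : ℕ) (hk : 1 ≤ k) :
    SP n k = Set.image (fun p => Associates.mk (toR n p)) (A1 n k) := by
  ext c
  constructor
  · rintro ⟨z, rfl, hz⟩
    obtain ⟨a, b, ha, hb, hab⟩ := exists_C1 n (by omega) z (by omega)
    obtain ⟨a', rfl⟩ : ∃ a' : ℕ, a = a' + 1 := ⟨(a - 1).toNat, by omega⟩
    obtain ⟨b', rfl⟩ := Int.eq_ofNat_of_zero_le hb
    refine ⟨(a', b'), ?_, ?_⟩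
    · change _ = (k : ℤ)
      have h1 := toR_norm n (a', b')
      rw [← h1, ← hz, ← mem_SP hn, ← show _ = Associates.mk (toR n (a', b')) from Associates.mk_eq_mk_iff_associated.mpr hab]
      exact (mem_SP hn).mpr rfl
    · exact (Associates.mk_eq_mk_iff_associated.mpr hab).symm
  · rintro ⟨p, hp, rfl⟩
    refine ⟨_, rfl, ?_⟩
    rw [toR_norm]; exact hp

lemma SN_eq (n : ℤ) (hn : 4 ≤ n) (k : ℕ) (hk : 1 ≤ k) :
    Set.image (fun c => Associates.mk (piR n) * c) (SP n (-k)) = Set.image (fun p => Associates.mk (toR n p)) (A2 n k) := by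
  ext c
  constructor
  · rintro ⟨_, ⟨z, rfl, hz⟩, rfl⟩
    obtain ⟨a, b, ha, hb, hdv, hab⟩ := exists_C1_neg n (by omega) z (by omega)
    obtain ⟨a', rfl⟩ : ∃ a' : ℕ, a = a' + 1 := ⟨(a - 1).toNat, by omega⟩
    obtain ⟨b', rfl⟩ := Int.eq_ofNat_of_zero_le hb
    refine ⟨(a', b'), ⟨hdv, ?_⟩, ?_⟩
    · have h1 := toR_norm n (a', b')
      have h2 : (n - 2) * (k : ℤ) = (piR n * z).norm := by rw [map_mul, piR_norm, hz]; ring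
      rw [← h1, h2, ← mem_SP hn, ← show _ = Associates.mk (toR n (a', b')) from Associates.mk_eq_mk_iff_associated.mpr hab]
      exact (mem_SP hn).mpr rfl
    · exact (Associates.mk_eq_mk_iff_associated.mpr hab).symm
  · rintro ⟨p, ⟨hp1, hp2⟩, rfl⟩
    obtain ⟨w, hw⟩ := (piR_dvd n (by omega) _ _).mpr hp1
    have hw : toR n p = piR n * w := hw
    refine ⟨Associates.mk w, ⟨w, rfl, ?_⟩, ?_⟩
    · have := toR_norm n p
      rw [hp2, hw, map_mul, piR_norm] at this
      have h0 : n - 2 ≠ 0 := by omega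
      apply mul_left_cancel₀ h0
      linarith
    · change _ = Associates.mk (toR n p)
      rw [hw]; rfl

lemma SA_eq (n : ℤ) (k : ℕ) : SA n k = SP n k ∪ SP n (-k) := by
  ext c
  constructor
  · rintro ⟨z, rfl, hz⟩
    rcases Int.natAbs_eq z.norm with h | h
    · exact Or.inl ⟨z, rfl, by omega⟩
    · exact Or.inr ⟨z, rfl, by omega⟩
  · rintro (⟨z, rfl, hz⟩ | ⟨z, rfl, hz⟩) <;> exact ⟨z, rfl, by omega⟩

lemma mk_ne_zero_norm {n : ℤ} {z : RQ n} (h : z.norm ≠ 0) : Associates.mk z ≠ 0 := by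
  rw [Associates.mk_ne_zero]; rintro rfl; simp at h

lemma mk_mul_inj (n : ℤ) (hns : ¬ IsSquare (n ^ 2 - 4)) {z : RQ n} (h : z.norm ≠ 0) :
    Function.Injective (fun c => Associates.mk z * c) := by
  have := RQ_dom n hns
  exact mul_right_injective₀ (mk_ne_zero_norm h)

lemma SA_fin_card (n : ℤ) (hn : 4 ≤ n) (hns : ¬ IsSquare (n ^ 2 - 4)) (k : ℕ) (hk : 1 ≤ k) :
    (SA n k).Finite ∧ (SA n k).ncard = (A1 n k).ncard + (A2 n k).ncard := by
  have hpi := mk_mul_inj n hns (z := piR n) (by rw [piR_norm]; omega)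
  have hti := toR_inj n (by omega)
  have f1 : (SP n k).Finite := by rw [SP_eq n hn k hk]; exact (A1_fin n (by omega) k).image _
  have f2 : (SP n (-k)).Finite := by
    apply Set.Finite.of_finite_image _ hpi.injOn
    rw [SN_eq n hn k hk]; exact (A2_fin n (by omega) k).image _
  rw [SA_eq]
  refine ⟨f1.union f2, ?_⟩
  rw [Set.ncard_union_eq _ f1 f2]
  · congr 1
    · rw [SP_eq n hn k hk, Set.ncard_image_of_injective _ hti]
    · rw [← Set.ncard_image_of_injective _ hpi, SN_eq n hn k hk, Set.ncard_image_of_injective _ hti]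
  · rw [Set.disjoint_left]
    rintro _ ⟨z, rfl, hz⟩ h2
    rw [mem_SP hn] at h2
    omega

noncomputable def aA (n : ℤ) (k : ℕ) : ℤ := (SA n k).ncard

lemma aA_zero (n : ℤ) (hns : ¬ IsSquare (n ^ 2 - 4)) : ∀ z : RQ n, z.norm = 0 → z = 0 := by
  have := RQ_dom n hns
  intro z hz
  have h := QuadraticAlgebra.algebraMap_norm_eq_mul_star z
  rw [hz, map_zero] at h
  rcases mul_eq_zero.mp h.symm with h | h
  · exact h
  · simpa using h

lemma aA_one (n : ℤ) : aA n 1 = 1 := by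
  unfold aA
  have : SA n 1 = {1} := by
    ext c
    constructor
    · rintro ⟨z, rfl, hz⟩
      rw [Set.mem_singleton_iff, Associates.mk_eq_one, QuadraticAlgebra.isUnit_iff_norm_isUnit,
        Int.isUnit_iff_natAbs_eq, hz]
    · rintro rfl
      exact ⟨1, rfl, by simp⟩
  rw [this]; simp

lemma aA_inert (n : ℤ) (hns : ¬ IsSquare (n ^ 2 - 4)) (p : ℕ) (hp : p.Prime)
    (hin : ∀ z : RQ n, (p : ℤ) ∣ z.norm → (p : RQ n) ∣ z) (k : ℕ) (hk : 1 ≤ k) :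
    aA n (p * k) = if p ∣ k then aA n (k / p) else 0 := by
  have hp0 := hp.pos
  have hmem : ∀ z : RQ n, z.norm.natAbs = p * k → ∃ w, z = p * w ∧ p * w.norm.natAbs = k := by
    intro z hz
    obtain ⟨w, rfl⟩ := hin z (by rw [Int.natCast_dvd, hz]; exact dvd_mul_right _ _)
    refine ⟨w, rfl, ?_⟩
    rw [map_mul, QuadraticAlgebra.norm_natCast, Int.natAbs_mul, Int.natAbs_pow, Int.natAbs_natCast] at hz
    apply Nat.eq_of_mul_eq_mul_left hp0
    rw [← hz]; ring
  unfold aA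
  split_ifs with h
  · obtain ⟨j, rfl⟩ := h
    rw [Nat.mul_div_cancel_left _ hp0]
    have hinj := mk_mul_inj n hns (z := (p : RQ n)) (by
      rw [QuadraticAlgebra.norm_natCast]; positivity)
    rw [← Set.ncard_image_of_injective (SA n j) hinj]
    congr 2
    ext c
    constructor
    · rintro ⟨z, rfl, hz⟩
      obtain ⟨w, rfl, hw⟩ := hmem z hz
      exact ⟨Associates.mk w, ⟨w, rfl, Nat.eq_of_mul_eq_mul_left hp0 hw⟩, rfl⟩
    · rintro ⟨_, ⟨w, rfl, hw⟩, rfl⟩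
      refine ⟨p * w, rfl, ?_⟩
      rw [map_mul, QuadraticAlgebra.norm_natCast, Int.natAbs_mul, hw, Int.natAbs_pow, Int.natAbs_natCast]
      ring
  · have : SA n (p * k) = ∅ := by
      rw [Set.eq_empty_iff_forall_notMem]
      rintro _ ⟨z, rfl, hz⟩
      obtain ⟨w, -, hw⟩ := hmem z hz
      exact h ⟨_, hw.symm⟩
    rw [this]; simp

lemma prime_of_norm (n : ℤ) (hns : ¬ IsSquare (n ^ 2 - 4)) [IsPrincipalIdealRing (RQ n)]
    (p : ℕ) (hp : p.Prime) (g : RQ n) (hg : g.norm.natAbs = p) : Prime g := by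
  have := RQ_dom n hns
  rw [← irreducible_iff_prime, irreducible_iff]
  simp only [QuadraticAlgebra.isUnit_iff_norm_isUnit, Int.isUnit_iff_natAbs_eq]
  refine ⟨by rw [hg]; exact hp.one_lt.ne', ?_⟩
  intro a b hab
  rw [hab, map_mul, Int.natAbs_mul] at hg
  rcases Nat.prime_mul_iff.mp (hg ▸ hp) with h | h
  · exact Or.inr h.2
  · exact Or.inl h.2

lemma star_dvd_iff {n : ℤ} {a b : RQ n} : star a ∣ b ↔ a ∣ star b := by
  constructor
  · rintro ⟨k, rfl⟩; exact ⟨star k, by simp⟩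
  · rintro ⟨k, hk⟩; exact ⟨star k, by have := congrArg star hk; simpa using this⟩

lemma assoc_p (n : ℤ) (p : ℕ) (g : RQ n) (hg : g.norm.natAbs = p) : Associated (p : RQ n) (g * star g) := by
  rw [← QuadraticAlgebra.algebraMap_norm_eq_mul_star]
  rcases Int.natAbs_eq g.norm with h | h
  · rw [h, hg]; simp
  · rw [h, hg]; simp

lemma SA_split (n : ℤ) (hns : ¬ IsSquare (n ^ 2 - 4)) [IsPrincipalIdealRing (RQ n)]
    (p : ℕ) (hp : p.Prime) (g : RQ n) (hg : g.norm.natAbs = p) (k : ℕ) :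
    SA n (p * k) = Set.image (fun c => Associates.mk g * c) (SA n k) ∪
      Set.image (fun c => Associates.mk (star g) * c) (SA n k) := by
  have hpr := prime_of_norm n hns p hp g hg
  ext c
  constructor
  · rintro ⟨z, rfl, hz⟩
    have h1 : g ∣ z * star z := by
      rw [← QuadraticAlgebra.algebraMap_norm_eq_mul_star]
      have h2 : (p : ℤ) ∣ z.norm := by rw [Int.natCast_dvd, hz]; exact dvd_mul_right _ _
      obtain ⟨j, hj⟩ := h2
      rw [hj, map_mul]
      apply Dvd.dvd.mul_right
      refine dvd_trans (dvd_mul_right g (star g)) ?_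
      exact (assoc_p n p g hg).symm.dvd
    rcases hpr.dvd_or_dvd h1 with h | h
    · obtain ⟨w, rfl⟩ := h
      left
      refine ⟨Associates.mk w, ⟨w, rfl, ?_⟩, rfl⟩
      rw [map_mul, Int.natAbs_mul, hg] at hz
      exact Nat.eq_of_mul_eq_mul_left hp.pos hz
    · rw [← star_dvd_iff] at h
      obtain ⟨w, rfl⟩ := h
      right
      refine ⟨Associates.mk w, ⟨w, rfl, ?_⟩, rfl⟩
      rw [map_mul, QuadraticAlgebra.norm_star, Int.natAbs_mul, hg] at hz
      exact Nat.eq_of_mul_eq_mul_left hp.pos hz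
  · rintro (⟨_, ⟨w, rfl, hw⟩, rfl⟩ | ⟨_, ⟨w, rfl, hw⟩, rfl⟩)
    · exact ⟨g * w, rfl, by rw [map_mul, Int.natAbs_mul, hg, hw]⟩
    · exact ⟨star g * w, rfl, by rw [map_mul, QuadraticAlgebra.norm_star, Int.natAbs_mul, hg, hw]⟩

lemma aA_ram (n : ℤ) (hns : ¬ IsSquare (n ^ 2 - 4)) [IsPrincipalIdealRing (RQ n)]
    (p : ℕ) (hp : p.Prime) (g : RQ n) (hg : g.norm.natAbs = p) (hd : g ∣ star g) (k : ℕ) :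
    aA n (p * k) = aA n k := by
  have := RQ_dom n hns
  have h2 : star g ∣ g := star_dvd_iff.mpr hd
  have h3 : Associates.mk (star g) = Associates.mk g :=
    Associates.mk_eq_mk_iff_associated.mpr (associated_of_dvd_dvd h2 hd)
  have hinj := mk_mul_inj n hns (z := g) (by have := hp.pos; omega)
  unfold aA
  rw [SA_split n hns p hp g hg, h3, Set.union_self, Set.ncard_image_of_injective _ hinj]

lemma aA_split (n : ℤ) (hn : 4 ≤ n) (hns : ¬ IsSquare (n ^ 2 - 4)) [IsPrincipalIdealRing (RQ n)]
    (p : ℕ) (hp : p.Prime) (g : RQ n) (hg : g.norm.natAbs = p) (hd : ¬ g ∣ star g) (k : ℕ) (hk : 1 ≤ k) :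
    aA n (p * k) = 2 * aA n k - if p ∣ k then aA n (k / p) else 0 := by
  have := RQ_dom n hns
  have hp0 := hp.pos
  have hinj := mk_mul_inj n hns (z := g) (by omega)
  have hinj' := mk_mul_inj n hns (z := star g) (by rw [QuadraticAlgebra.norm_star]; omega)
  have hpr := prime_of_norm n hns p hp g hg
  have hf := (SA_fin_card n hn hns k hk).1
  have hcard := Set.ncard_union_add_ncard_inter (Set.image (fun c => Associates.mk g * c) (SA n k))
    (Set.image (fun c => Associates.mk (star g) * c) (SA n k)) (hf.image _) (hf.image _)
  rw [← SA_split n hns p hp g hg, Set.ncard_image_of_injective _ hinj,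
    Set.ncard_image_of_injective _ hinj'] at hcard
  have hap := assoc_p n p g hg
  have hmem : ∀ c ∈ (Set.image (fun c => Associates.mk g * c) (SA n k)) ∩
    (Set.image (fun c => Associates.mk (star g) * c) (SA n k)), ∃ w, c = Associates.mk ((p : RQ n) * w) ∧
      p * w.norm.natAbs = k := by
    rintro _ ⟨⟨_, ⟨w, rfl, hw⟩, rfl⟩, ⟨_, ⟨w', rfl, hw'⟩, h⟩⟩
    have h : Associates.mk (star g * w') = Associates.mk (g * w) := h
    have h1 : g ∣ star g * w' := by
      have := (Associates.mk_eq_mk_iff_associated.mp h).symm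
      exact (dvd_mul_right _ _).trans this.dvd
    rcases hpr.dvd_or_dvd h1 with h2 | ⟨v, rfl⟩
    · exact absurd h2 hd
    · refine ⟨v, ?_, ?_⟩
      · change Associates.mk (g * w) = _
        rw [← h, Associates.mk_eq_mk_iff_associated, ← mul_assoc, mul_comm (star g) g]
        exact (hap.mul_right v).symm
      · rw [map_mul, Int.natAbs_mul, hg] at hw'; exact hw'
  have hinter : (((Set.image (fun c => Associates.mk g * c) (SA n k)) ∩
    (Set.image (fun c => Associates.mk (star g) * c) (SA n k))).ncard : ℤ) =
      if p ∣ k then aA n (k / p) else 0 := by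
    split_ifs with h
    · obtain ⟨j, rfl⟩ := h
      rw [Nat.mul_div_cancel_left _ hp0]
      unfold aA
      have hinjp := mk_mul_inj n hns (z := (p : RQ n)) (by
        rw [QuadraticAlgebra.norm_natCast]; positivity)
      rw [← Set.ncard_image_of_injective (SA n j) hinjp]
      congr 2
      ext c
      constructor
      · intro hc
        obtain ⟨w, rfl, hw⟩ := hmem c hc
        exact ⟨Associates.mk w, ⟨w, rfl, Nat.eq_of_mul_eq_mul_left hp0 hw⟩, rfl⟩
      · rintro ⟨_, ⟨w, rfl, hw⟩, rfl⟩
        have e : Associates.mk (p : RQ n) * Associates.mk w = Associates.mk (g * star g * w) :=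
          Associates.mk_eq_mk_iff_associated.mpr (hap.mul_right w)
        simp only [e]
        constructor
        · refine ⟨Associates.mk (star g * w), ⟨_, rfl, ?_⟩, ?_⟩
          · rw [map_mul, QuadraticAlgebra.norm_star, Int.natAbs_mul, hg, hw]
          · change Associates.mk (g * (star g * w)) = _
            rw [mul_assoc]
        · refine ⟨Associates.mk (g * w), ⟨_, rfl, ?_⟩, ?_⟩
          · rw [map_mul, Int.natAbs_mul, hg, hw]
          · change Associates.mk (star g * (g * w)) = _
            congr 1; ring
    · have : (Set.image (fun c => Associates.mk g * c) (SA n k)) ∩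
        (Set.image (fun c => Associates.mk (star g) * c) (SA n k)) = ∅ := by
        rw [Set.eq_empty_iff_forall_notMem]
        intro c hc
        obtain ⟨w, -, hw⟩ := hmem c hc
        exact h ⟨_, hw.symm⟩
      rw [this]; simp
  have := congrArg (Nat.cast : ℕ → ℤ) hcard
  push_cast at this
  rw [hinter] at this
  unfold aA at this ⊢
  linarith

open scoped NumberTheorySymbols

lemma divisors_prime_mul (p : ℕ) (hp : p.Prime) (k : ℕ) (hk : 1 ≤ k) :
    (p * k).divisors = k.divisors ∪ k.divisors.image (p * ·) := by
  have hp0 := hp.pos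
  ext b
  simp only [Nat.mem_divisors, Finset.mem_union, Finset.mem_image]
  constructor
  · rintro ⟨h, -⟩
    by_cases hb : p ∣ b
    · obtain ⟨c, rfl⟩ := hb
      exact Or.inr ⟨c, ⟨Nat.dvd_of_mul_dvd_mul_left hp0 h, by omega⟩, rfl⟩
    · left
      refine ⟨?_, by omega⟩
      exact (Nat.Coprime.dvd_mul_left ((Nat.Prime.coprime_iff_not_dvd hp).mpr hb).symm).mp h
  · have : p * k ≠ 0 := by positivity
    rintro (⟨h, -⟩ | ⟨c, ⟨h, -⟩, rfl⟩)
    · exact ⟨h.mul_left _, this⟩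
    · exact ⟨mul_dvd_mul_left _ h, this⟩

lemma divisors_inter (p : ℕ) (hp : p.Prime) (k : ℕ) (hk : 1 ≤ k) :
    k.divisors ∩ k.divisors.image (p * ·) = if p ∣ k then (k / p).divisors.image (p * ·) else ∅ := by
  have hp0 := hp.pos
  ext b
  simp only [Finset.mem_inter, Nat.mem_divisors, Finset.mem_image]
  split_ifs with h
  · obtain ⟨j, rfl⟩ := h
    have hj : j ≠ 0 := by rintro rfl; simp at hk
    rw [Nat.mul_div_cancel_left _ hp0]
    simp only [Finset.mem_image, Nat.mem_divisors]
    constructor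
    · rintro ⟨⟨h1, -⟩, c, ⟨-, -⟩, rfl⟩
      exact ⟨c, ⟨Nat.dvd_of_mul_dvd_mul_left hp0 h1, hj⟩, rfl⟩
    · rintro ⟨c, ⟨h1, -⟩, rfl⟩
      exact ⟨⟨mul_dvd_mul_left _ h1, by omega⟩, c, ⟨h1.mul_left _, by omega⟩, rfl⟩
  · simp only [Finset.notMem_empty, iff_false]
    rintro ⟨⟨h1, -⟩, c, -, rfl⟩
    exact h ((dvd_mul_right _ _).trans h1)

lemma divsum_rec (χ : ℕ → ℤ) (hχ : ∀ a b, χ (a * b) = χ a * χ b) (p : ℕ) (hp : p.Prime) (k : ℕ)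
    (hk : 1 ≤ k) : ∑ b ∈ (p * k).divisors, χ b = (1 + χ p) * ∑ b ∈ k.divisors, χ b -
      χ p * if p ∣ k then ∑ b ∈ (k / p).divisors, χ b else 0 := by
  have hinj : ∀ s : Finset ℕ, Set.InjOn (p * ·) (s : Set ℕ) := fun s a _ b _ h =>
    Nat.eq_of_mul_eq_mul_left hp.pos h
  have h := Finset.sum_union_inter (s₁ := k.divisors) (s₂ := k.divisors.image (p * ·)) (f := χ)
  rw [← divisors_prime_mul p hp k hk, divisors_inter p hp k hk,
    Finset.sum_image (hinj _)] at h
  simp only [hχ, ← Finset.mul_sum] at h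
  split_ifs at h ⊢
  · rw [Finset.sum_image (hinj _)] at h
    simp only [hχ, ← Finset.mul_sum] at h
    linarith
  · simp at h; simp; linarith

lemma count_of_tri (n : ℤ) (hn : 4 ≤ n) (hns : ¬ IsSquare (n ^ 2 - 4)) [IsPrincipalIdealRing (RQ n)]
    (χ : ℕ → ℤ) (hχ : ∀ a b, χ (a * b) = χ a * χ b) (h1 : χ 1 = 1)
    (htri : ∀ p : ℕ, p.Prime → (χ p = -1 ∧ ∀ z : RQ n, (p : ℤ) ∣ z.norm → (p : RQ n) ∣ z) ∨
      (χ p = 0 ∧ ∃ g : RQ n, g.norm.natAbs = p ∧ g ∣ star g) ∨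
      (χ p = 1 ∧ ∃ g : RQ n, g.norm.natAbs = p ∧ ¬ g ∣ star g)) (k : ℕ) (hk : 1 ≤ k) :
    ∑ b ∈ k.divisors, χ b = aA n k := by
  induction k using Nat.strong_induction_on with
  | _ k ih =>
  by_cases hk1 : k = 1
  · subst hk1; simp [h1, aA_one]
  have hp := Nat.minFac_prime hk1
  obtain ⟨j, hj⟩ := Nat.minFac_dvd k
  set p := k.minFac
  have hp2 := hp.two_le
  have hj1 : 1 ≤ j := by
    rcases Nat.eq_zero_or_pos j with h | h
    · subst h; omega
    · exact h
  have hjk : j < k := by rw [hj]; nlinarith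
  rw [hj, divsum_rec χ hχ p hp j hj1]
  have e1 := ih j hjk hj1
  have e2 : (if p ∣ j then ∑ b ∈ (j / p).divisors, χ b else 0) = if p ∣ j then aA n (j / p) else 0 := by
    split_ifs with h
    · have : j / p ≤ j := Nat.div_le_self _ _
      exact ih _ (by omega) (Nat.div_pos (Nat.le_of_dvd (by omega) h) (by omega))
    · rfl
  rw [e1, e2]
  rcases htri p hp with ⟨hc, h⟩ | ⟨hc, g, hg, hd⟩ | ⟨hc, g, hg, hd⟩
  · rw [aA_inert n hns p hp h j hj1, hc]; ring
  · rw [aA_ram n hns p hp g hg hd, hc]; ring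
  · rw [aA_split n hn hns p hp g hg hd j hj1, hc]; ring

lemma four_norm (n : ℤ) (z : RQ n) : 4 * z.norm = (2 * z.re + n * z.im) ^ 2 - (n ^ 2 - 4) * z.im ^ 2 := by
  rw [normRQ]; ring

lemma natCast_dvd_RQ {n : ℤ} {p : ℕ} {z : RQ n} (h1 : (p : ℤ) ∣ z.re) (h2 : (p : ℤ) ∣ z.im) :
    (p : RQ n) ∣ z := by
  obtain ⟨a, ha⟩ := h1
  obtain ⟨b, hb⟩ := h2
  refine ⟨⟨a, b⟩, ?_⟩
  ext <;> simp [ha, hb]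

lemma not_dvd_norm_prime {n : ℤ} {p : ℕ} (hp : p.Prime) {g : RQ n} (hg : g.norm.natAbs = p) :
    ¬ ((p : ℤ) ∣ g.im) := by
  intro h
  have hpi := Nat.prime_iff_prime_int.mp hp
  have hN : (p : ℤ) ∣ g.norm := by rw [Int.natCast_dvd, hg]
  have hre : (p : ℤ) ∣ g.re := by
    apply hpi.dvd_of_dvd_pow (n := 2)
    have : g.re ^ 2 = g.norm - g.im * (n * g.re + g.im) := by rw [normRQ]; ring
    rw [this]
    exact dvd_sub hN (h.mul_right _)
  obtain ⟨a, ha⟩ := hre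
  obtain ⟨b, hb⟩ := h
  have h2 : ((p ^ 2 : ℕ) : ℤ) ∣ g.norm := by
    refine ⟨a ^ 2 + n * a * b + b ^ 2, ?_⟩
    rw [normRQ, ha, hb]; push_cast; ring
  rw [Int.natCast_dvd, hg] at h2
  have := Nat.le_of_dvd hp.pos h2
  have := hp.one_lt
  nlinarith

lemma half_sub_dvd (n c : ℤ) (p : ℕ) (hodd : Odd p) : ∃ b : ℤ, (p : ℤ) ∣ 2 * b + n - c := by
  obtain ⟨k, hk⟩ := hodd
  refine ⟨(n - c) * k, (n - c), ?_⟩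
  rw [hk]; push_cast; ring

lemma dvd_of_four {p : ℕ} (hodd : Odd p) {x : ℤ} (h : (p : ℤ) ∣ 4 * x) : (p : ℤ) ∣ x := by
  have : IsCoprime (p : ℤ) 4 := by
    have : Nat.Coprime p 4 := by
      have := (Nat.coprime_two_right.mpr hodd)
      exact Nat.Coprime.pow_right 2 this
    exact_mod_cast Nat.isCoprime_iff_coprime.mpr this
  exact this.dvd_of_dvd_mul_left h

lemma trich (n : ℤ) (hn : 5 ≤ n) (hno : Odd n) (hns : ¬ IsSquare (n ^ 2 - 4)) [IsPrincipalIdealRing (RQ n)]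
    (D : ℕ) (hD : (D : ℤ) = n ^ 2 - 4) (p : ℕ) (hp : p.Prime) :
      (J((p : ℤ) | D) = -1 ∧ ∀ z : RQ n, (p : ℤ) ∣ z.norm → (p : RQ n) ∣ z) ∨
      (J((p : ℤ) | D) = 0 ∧ ∃ g : RQ n, g.norm.natAbs = p ∧ g ∣ star g) ∨
      (J((p : ℤ) | D) = 1 ∧ ∃ g : RQ n, g.norm.natAbs = p ∧ ¬ g ∣ star g) := by
  have hpi := Nat.prime_iff_prime_int.mp hp
  have hD8 : D % 8 = 5 := by
    obtain ⟨k, rfl⟩ := hno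
    have : (D : ℤ) = 4 * (k * (k + 1)) - 3 := by rw [hD]; ring
    obtain ⟨j, hj⟩ := Int.even_mul_succ_self k
    rw [hj] at this
    omega
  have hDo : Odd D := by rw [Nat.odd_iff]; omega
  have hst : ∀ g : RQ n, star g = ((2 * g.re + n * g.im : ℤ) : RQ n) - g := by
    intro g
    ext
    · rw [QuadraticAlgebra.re_star, QuadraticAlgebra.re_sub, QuadraticAlgebra.re_intCast, Int.cast_id]; ring
    · rw [QuadraticAlgebra.im_star, QuadraticAlgebra.im_sub, QuadraticAlgebra.im_intCast]; ring
  rcases hp.eq_two_or_odd' with rfl | hpo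
  · left
    constructor
    · push_cast
      rw [jacobiSym.at_two hDo, ZMod.χ₈_nat_eq_if_mod_eight]
      rw [if_neg (by omega), if_neg (by omega)]
    · intro z hz
      rw [normRQ] at hz
      have h2 : Even (z.re ^ 2 + n * z.re * z.im + z.im ^ 2) := by
        rw [even_iff_two_dvd]; exact_mod_cast hz
      simp only [Int.even_add, Int.even_mul, Int.even_pow] at h2
      have hne : ¬ Even n := Int.not_even_iff_odd.mpr hno
      apply natCast_dvd_RQ
      · push_cast; rw [← even_iff_two_dvd]; tauto
      · push_cast; rw [← even_iff_two_dvd]; tauto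
  haveI := Fact.mk hp
  have hex : ∀ c : ℤ, (p : ℤ) ∣ c ^ 2 - (n ^ 2 - 4) → ∃ g : RQ n, g.norm.natAbs = p := by
    intro c hc
    obtain ⟨b, hb⟩ := half_sub_dvd n c p hpo
    apply exists_norm_prime n hns p hp ⟨b, 1⟩
    · apply dvd_of_four hpo
      rw [four_norm]
      have : (2 * b + n * 1) ^ 2 - (n ^ 2 - 4) * 1 ^ 2 = (2 * b + n - c) * (2 * b + n + c) + (c ^ 2 - (n ^ 2 - 4)) := by ring
      simp only
      rw [this]
      exact dvd_add (hb.mul_right _) hc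
    · rintro ⟨k, hk⟩
      have := congrArg QuadraticAlgebra.im hk
      simp at this
      exact hpi.not_dvd_one ⟨_, this⟩
  by_cases hpd : p ∣ D
  · right; left
    constructor
    · rw [jacobiSym.eq_zero_iff]
      refine ⟨by omega, ?_⟩
      simp only [Int.gcd_natCast_natCast]
      rw [Nat.gcd_eq_left hpd]; exact hp.one_lt.ne'
    · have hpd' : (p : ℤ) ∣ n ^ 2 - 4 := by rw [← hD]; exact_mod_cast hpd
      obtain ⟨g, hg⟩ := hex 0 (by simpa using (dvd_neg.mpr hpd'))
      refine ⟨g, hg, ?_⟩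
      have hN : (p : ℤ) ∣ g.norm := by rw [Int.natCast_dvd, hg]
      have ht : (p : ℤ) ∣ 2 * g.re + n * g.im := by
        apply hpi.dvd_of_dvd_pow (n := 2)
        have : (2 * g.re + n * g.im) ^ 2 = 4 * g.norm + (n ^ 2 - 4) * g.im ^ 2 := by
          rw [four_norm]; ring
        rw [this]
        exact dvd_add (hN.mul_left _) (hpd'.mul_right _)
      rw [hst]
      apply dvd_sub _ dvd_rfl
      obtain ⟨k, hk⟩ := ht
      rw [hk]
      push_cast
      apply Dvd.dvd.mul_right
      exact (dvd_mul_right _ _).trans (assoc_p n p g hg).symm.dvd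
  · have hpd' : ¬ (p : ℤ) ∣ n ^ 2 - 4 := by rw [← hD]; exact_mod_cast hpd
    have hrec : J((p : ℤ) | D) = legendreSym p D := by
      rw [jacobiSym.legendreSym.to_jacobiSym]
      exact (jacobiSym.quadratic_reciprocity_one_mod_four (by omega) hpo).symm
    have hD0 : (((D : ℕ) : ℤ) : ZMod p) ≠ 0 := by
      rw [Ne, ZMod.intCast_zmod_eq_zero_iff_dvd]; exact_mod_cast hpd
    rw [hrec]
    rcases legendreSym.eq_one_or_neg_one p hD0 with h | h
    · right; right
      refine ⟨h, ?_⟩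
      rw [legendreSym.eq_one_iff p hD0] at h
      obtain ⟨c, hc⟩ := h
      obtain ⟨c', rfl⟩ := ZMod.intCast_surjective c
      obtain ⟨g, hg⟩ := hex c' (by
        rw [← hD, ← ZMod.intCast_zmod_eq_zero_iff_dvd]; push_cast; push_cast at hc; rw [hc]; ring)
      refine ⟨g, hg, ?_⟩
      intro hd
      have h2 : g ∣ ((2 * g.re + n * g.im : ℤ) : RQ n) := by
        have := hst g
        have h3 : ((2 * g.re + n * g.im : ℤ) : RQ n) = star g + g := by rw [this]; ring
        rw [h3]; exact dvd_add hd dvd_rfl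
      obtain ⟨w, hw⟩ := h2
      have h4 := congrArg QuadraticAlgebra.norm hw
      rw [QuadraticAlgebra.norm_intCast, map_mul, Int.cast_id] at h4
      have hN : (p : ℤ) ∣ g.norm := by rw [Int.natCast_dvd, hg]
      have h5 : (p : ℤ) ∣ (n ^ 2 - 4) * g.im ^ 2 := by
        have : (n ^ 2 - 4) * g.im ^ 2 = (2 * g.re + n * g.im) ^ 2 - 4 * g.norm := by
          rw [four_norm]; ring
        rw [this, h4]
        exact dvd_sub (hN.mul_right _) (hN.mul_left _)
      rcases hpi.dvd_or_dvd h5 with h6 | h6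
      · exact hpd' h6
      · exact not_dvd_norm_prime hp hg (hpi.dvd_of_dvd_pow h6)
    · left
      refine ⟨h, ?_⟩
      rw [legendreSym.eq_neg_one_iff] at h
      intro z hz
      have him : (p : ℤ) ∣ z.im := by
        by_contra him
        apply h
        have hy : (z.im : ZMod p) ≠ 0 := by
          rw [Ne, ZMod.intCast_zmod_eq_zero_iff_dvd]; exact him
        have h4 := four_norm n z
        have h5 := congrArg (Int.cast : ℤ → ZMod p) h4
        rw [← hD] at h5
        push_cast at h5
        rw [(ZMod.intCast_zmod_eq_zero_iff_dvd _ _).mpr hz] at h5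
        refine ⟨(2 * z.re + n * z.im) / z.im, ?_⟩
        field_simp
        push_cast
        linear_combination h5
      have hre : (p : ℤ) ∣ z.re := by
        apply hpi.dvd_of_dvd_pow (n := 2)
        have : z.re ^ 2 = z.norm - z.im * (n * z.re + z.im) := by rw [normRQ]; ring
        rw [this]
        exact dvd_sub hz (him.mul_right _)
      exact natCast_dvd_RQ hre him

/-- the counting identity -/
theorem counting (n : ℤ) (hn : 5 ≤ n) (hno : Odd n) (hns : ¬ IsSquare (n ^ 2 - 4)) [IsPrincipalIdealRing (RQ n)]
    (D : ℕ) (hD : (D : ℤ) = n ^ 2 - 4) (k : ℕ) (hk : 1 ≤ k) :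
    ∑ b ∈ k.divisors, J((b : ℤ) | D) = ((A1 n k).ncard : ℤ) + (A2 n k).ncard := by
  have h := count_of_tri n (by omega) hns (fun b => J((b : ℤ) | D))
    (by intro a b; push_cast; exact jacobiSym.mul_left _ _ _) (by simp)
    (trich n hn hno hns D hD) k hk
  rw [h]
  unfold aA
  rw [(SA_fin_card n (by omega) hns k hk).2]
  push_cast; ring

open Real

/-- the real quadratic form -/
noncomputable def Qr (n x y : ℝ) : ℝ := x ^ 2 + n * x * y + y ^ 2

lemma exp_cubic (w : ℝ) (hw : 0 ≤ w) : |exp (-w) - (1 - w + w ^ 2 / 2)| ≤ 4 * w ^ 3 := by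
  rcases le_total w 1 with h | h
  · have := Real.exp_bound (x := -w) (by rw [abs_neg, abs_of_nonneg hw]; exact h) (n := 3) (by norm_num)
    rw [abs_neg, abs_of_nonneg hw] at this
    simp [Finset.sum_range_succ, Nat.factorial] at this
    have e : exp (-w) - (1 - w + w ^ 2 / 2) = exp (-w) - (1 + -w + w ^ 2 / 2) := by ring
    rw [e]
    refine this.trans ?_
    have : 0 ≤ w ^ 3 := by positivity
    norm_num
    linarith
  · have h1 : 0 ≤ exp (-w) := (exp_pos _).le
    have h2 : exp (-w) ≤ 1 := by rw [exp_le_one_iff]; linarith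
    have h3 : w ≤ w ^ 2 := by nlinarith
    have h4 : w ^ 2 ≤ w ^ 3 := by nlinarith
    rw [abs_le]; constructor <;> linarith

lemma exp_quad (w : ℝ) (hw : 0 ≤ w) : |1 - exp (-w) - w| ≤ 5 * w ^ 2 := by
  rcases le_total w 1 with h | h
  · have h1 := exp_cubic w hw
    rw [abs_le] at h1 ⊢
    have : w ^ 3 ≤ w ^ 2 := by nlinarith [sq_nonneg w]
    constructor <;> nlinarith [sq_nonneg w]
  · have h1 : 0 ≤ exp (-w) := (exp_pos _).le
    have h2 : exp (-w) ≤ 1 := by rw [exp_le_one_iff]; linarith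
    have h3 : w ≤ w ^ 2 := by nlinarith
    rw [abs_le]; constructor <;> nlinarith

lemma one_sub_exp_ge (h : ℝ) (h0 : 0 < h) (h1 : h ≤ 1) : h / 2 ≤ 1 - exp (-h) := by
  have : exp (-h) ≤ 1 / (1 + h) := by
    rw [exp_neg, ← one_div]
    apply one_div_le_one_div_of_le (by linarith)
    linarith [add_one_le_exp h]
  have h2 : 1 / (1 + h) ≤ 1 - h / 2 := by
    rw [div_le_iff₀ (by linarith)]; nlinarith
  linarith

lemma geo_hasSum (h : ℝ) (h0 : 0 < h) : HasSum (fun X : ℕ => exp (-(h * X))) (1 - exp (-h))⁻¹ := by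
  have := hasSum_geometric_of_lt_one (r := exp (-h)) (exp_pos _).le (by rw [exp_lt_one_iff]; linarith)
  convert this using 2 with X
  rw [← exp_nat_mul]; ring_nf

lemma geo_inv_le (h : ℝ) (h0 : 0 < h) (h1 : h ≤ 1) : (1 - exp (-h))⁻¹ ≤ 2 / h := by
  have := one_sub_exp_ge h h0 h1
  rw [inv_le_comm₀ (by linarith) (by positivity)]
  rw [inv_div]; exact this

lemma geo2_hasSum (h : ℝ) (h0 : 0 < h) :
    HasSum (fun p : ℕ × ℕ => exp (-(h * p.1)) * exp (-(h * p.2))) ((1 - exp (-h))⁻¹ * (1 - exp (-h))⁻¹) := by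
  have s := (geo_hasSum h h0).summable
  have := (geo_hasSum h h0).mul (geo_hasSum h h0)
    (s.mul_of_nonneg s (fun _ => (exp_pos _).le) (fun _ => (exp_pos _).le))
  exact this

lemma cube_exp (s : ℝ) (hs : 0 ≤ s) : (1 + s) ^ 3 * exp (-(s ^ 2 / 2)) ≤ 6 * exp 3 * exp (-s) := by
  have h1 : (1 + s) ^ 3 / 6 ≤ exp (1 + s) := by
    have := Real.pow_div_factorial_le_exp (1 + s) (by linarith) 3
    simpa [Nat.factorial] using this
  calc (1 + s) ^ 3 * exp (-(s ^ 2 / 2)) ≤ (6 * exp (1 + s)) * exp (-(s ^ 2 / 2)) := by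
        gcongr; linarith
    _ = 6 * exp (1 + s - s ^ 2 / 2) := by rw [mul_assoc, ← exp_add]; ring_nf
    _ ≤ 6 * exp (3 - s) := mul_le_mul_of_nonneg_left (exp_le_exp.mpr (by nlinarith [sq_nonneg (s - 2)])) (by norm_num)
    _ = 6 * exp 3 * exp (-s) := by rw [mul_assoc, ← exp_add]; ring_nf

/-- quadratic Taylor polynomial -/
noncomputable def Pq (n h X Y a b : ℝ) : ℝ :=
  1 - (h ^ 2 * (a * (2 * X + n * Y) + b * (n * X + 2 * Y)) + h ^ 2 * Qr n a b)
    + (h ^ 2 * (a * (2 * X + n * Y) + b * (n * X + 2 * Y))) ^ 2 / 2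

noncomputable def eQ (n h a b X Y : ℝ) : ℝ := exp (-(h ^ 2 * Qr n (X + a) (Y + b)))

lemma Qr_ge (n X Y : ℝ) (hn : 0 ≤ n) (hX : 0 ≤ X) (hY : 0 ≤ Y) : (X + Y) ^ 2 / 2 ≤ Qr n X Y := by
  unfold Qr
  nlinarith [sq_nonneg (X - Y), mul_nonneg (mul_nonneg hn hX) hY]

lemma eQ_le (n h X Y : ℝ) (hn : 0 ≤ n) (hX : 0 ≤ X) (hY : 0 ≤ Y) :
    eQ n h 0 0 X Y ≤ exp (-((h * (X + Y)) ^ 2 / 2)) := by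
  unfold eQ
  apply exp_le_exp.mpr
  simp only [add_zero]
  have := Qr_ge n X Y hn hX hY
  nlinarith [sq_nonneg h]

lemma taylor_bound (n a b : ℝ) (hn : 0 ≤ n) (ha : 0 ≤ a) (hb : 0 ≤ b) : ∃ K : ℝ, 0 ≤ K ∧
    ∀ h X Y : ℝ, 0 < h → h ≤ 1 → 0 ≤ X → 0 ≤ Y →
      |eQ n h a b X Y - eQ n h 0 0 X Y * Pq n h X Y a b| ≤ K * h ^ 3 * (exp (-(h * X)) * exp (-(h * Y))) := by
  set c1 := (a + b) * (n + 2) with hc1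
  set c2 := Qr n a b with hc2
  have hc1p : 0 ≤ c1 := by positivity
  have hc2p : 0 ≤ c2 := by rw [hc2]; unfold Qr; positivity
  set c := c1 + c2 with hc
  have hcp : 0 ≤ c := by positivity
  refine ⟨(4 * c ^ 3 + 2 * c ^ 2) * (6 * exp 3), by positivity, ?_⟩
  intro h X Y h0 h1 hX hY
  set s := h * (X + Y) with hs
  have hsp : 0 ≤ s := by positivity
  set B := h ^ 2 * (a * (2 * X + n * Y) + b * (n * X + 2 * Y)) with hB
  set C := h ^ 2 * c2 with hC
  have hBp : 0 ≤ B := by positivity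
  have hCp : 0 ≤ C := by positivity
  have hBle : B ≤ h * s * c1 := by
    have : h * s * c1 - B = h ^ 2 * (a * (n * X + 2 * Y) + b * (2 * X + n * Y)) := by
      rw [hs, hc1, hB]; ring
    have h2 : 0 ≤ h ^ 2 * (a * (n * X + 2 * Y) + b * (2 * X + n * Y)) := by positivity
    linarith
  have hB2 : B ≤ h * (1 + s) * c := by
    refine hBle.trans ?_
    have : h * s ≤ h * (1 + s) := by nlinarith
    exact mul_le_mul this (by linarith) hc1p (by positivity)
  have hC2 : C ≤ h ^ 2 * c := by rw [hC]; gcongr; linarith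
  have hw : B + C ≤ h * (1 + s) * c := by
    have e1 : B ≤ h * (1 + s) * c1 := hBle.trans (by gcongr; linarith)
    have e2 : C ≤ h * (1 + s) * c2 := by
      rw [hC]; gcongr; nlinarith
    calc B + C ≤ h * (1 + s) * c1 + h * (1 + s) * c2 := add_le_add e1 e2
      _ = _ := by rw [hc]; ring
  have key : eQ n h a b X Y = eQ n h 0 0 X Y * exp (-(B + C)) := by
    unfold eQ; rw [← exp_add, hB, hC, hc2]; congr 1; unfold Qr; ring
  have hP : Pq n h X Y a b = 1 - (B + C) + B ^ 2 / 2 := by unfold Pq; rw [hB, hC, hc2]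
  have e0p : 0 ≤ eQ n h 0 0 X Y := (exp_pos _).le
  rw [key, hP, ← mul_sub, abs_mul, abs_of_nonneg e0p]
  have h3 : h ^ 2 * h ^ 2 ≤ h ^ 3 := by nlinarith [pow_pos h0 3]
  have h1s : 1 ≤ (1 + s) ^ 3 := one_le_pow₀ (by linarith)
  have h1s' : 1 + s ≤ (1 + s) ^ 3 := by nlinarith [sq_nonneg s, mul_nonneg hsp hsp]
  have b1 : |exp (-(B + C)) - (1 - (B + C) + B ^ 2 / 2)| ≤ (4 * c ^ 3 + 2 * c ^ 2) * (h ^ 3 * (1 + s) ^ 3) := by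
    have t1 := exp_cubic (B + C) (by positivity)
    have t2 : (B + C) ^ 3 ≤ (h * (1 + s) * c) ^ 3 := by gcongr
    have t3 : B * C ≤ (h * (1 + s) * c) * (h ^ 2 * c) := by gcongr
    have t4 : C * C ≤ (h ^ 2 * c) * (h ^ 2 * c) := by gcongr
    have t5 : (h * (1 + s) * c) * (h ^ 2 * c) ≤ c ^ 2 * (h ^ 3 * (1 + s) ^ 3) := by
      calc (h * (1 + s) * c) * (h ^ 2 * c) = c ^ 2 * (h ^ 3 * (1 + s)) := by ring
        _ ≤ _ := by gcongr
    have t6 : (h ^ 2 * c) * (h ^ 2 * c) ≤ c ^ 2 * (h ^ 3 * (1 + s) ^ 3) := by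
      calc (h ^ 2 * c) * (h ^ 2 * c) = c ^ 2 * ((h ^ 2 * h ^ 2) * 1) := by ring
        _ ≤ _ := by gcongr
    have e : exp (-(B + C)) - (1 - (B + C) + B ^ 2 / 2) =
      (exp (-(B + C)) - (1 - (B + C) + (B + C) ^ 2 / 2)) + (B * C + C * C / 2) := by ring
    rw [e]
    refine (abs_add_le _ _).trans ?_
    rw [abs_of_nonneg (a := B * C + C * C / 2) (by positivity)]
    have : (h * (1 + s) * c) ^ 3 = c ^ 3 * (h ^ 3 * (1 + s) ^ 3) := by ring
    have : 0 ≤ C * C := by positivity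
    linarith
  calc eQ n h 0 0 X Y * |exp (-(B + C)) - (1 - (B + C) + B ^ 2 / 2)|
      ≤ exp (-(s ^ 2 / 2)) * ((4 * c ^ 3 + 2 * c ^ 2) * (h ^ 3 * (1 + s) ^ 3)) :=
        mul_le_mul (eQ_le n h X Y hn hX hY) b1 (abs_nonneg _) (exp_pos _).le
    _ = (4 * c ^ 3 + 2 * c ^ 2) * h ^ 3 * ((1 + s) ^ 3 * exp (-(s ^ 2 / 2))) := by ring
    _ ≤ (4 * c ^ 3 + 2 * c ^ 2) * h ^ 3 * (6 * exp 3 * exp (-s)) := mul_le_mul_of_nonneg_left (cube_exp s hsp) (by positivity)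
    _ = _ := by rw [← exp_add, hs]; ring_nf

lemma eQ_summable (n h a b : ℝ) (hn : 0 ≤ n) (ha : 0 ≤ a) (hb : 0 ≤ b) (h0 : 0 < h) :
    Summable (fun p : ℕ × ℕ => eQ n h a b p.1 p.2) := by
  refine Summable.of_nonneg_of_le (fun _ => (exp_pos _).le) ?_
    ((geo2_hasSum (h ^ 2 * (1 / 2)) (by positivity)).summable.mul_left (exp (h ^ 2)))
  rintro ⟨X, Y⟩
  unfold eQ
  rw [← exp_add, ← exp_add]
  apply exp_le_exp.mpr
  have : (X : ℝ) / 2 + Y / 2 - 1 ≤ Qr n (X + a) (Y + b) := by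
    unfold Qr
    have hX : (0 : ℝ) ≤ X := by positivity
    have hY : (0 : ℝ) ≤ Y := by positivity
    have : 0 ≤ n * (X + a) * (Y + b) := by positivity
    nlinarith [sq_nonneg ((X : ℝ) + a - 1), sq_nonneg ((Y : ℝ) + b - 1)]
  have h2 : 0 < h ^ 2 := by positivity
  simp only
  nlinarith

open Real

noncomputable def Zc (n h a b : ℝ) : ℝ := ∑' p : ℕ × ℕ, eQ n h a b p.1 p.2

lemma Zc_symm (n h a b : ℝ) : Zc n h a b = Zc n h b a := by
  unfold Zc
  rw [← (Equiv.prodComm ℕ ℕ).tsum_eq]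
  apply tsum_congr
  rintro ⟨X, Y⟩
  simp only [eQ, Qr, Equiv.prodComm_apply, Prod.swap]
  congr 1; ring

lemma eQ_row_summable (n h a b : ℝ) (hn : 0 ≤ n) (ha : 0 ≤ a) (hb : 0 ≤ b) (h0 : 0 < h) :
    Summable (fun Y : ℕ => eQ n h a b 0 Y) := by
  have := (eQ_summable n h a b hn ha hb h0).comp_injective (i := fun Y : ℕ => ((0 : ℕ), Y))
    (fun a b h => by simpa using h)
  simpa [Function.comp_def] using this

/-- shifting the first variable -/
lemma Zc_shift (n h a b : ℝ) (hn : 0 ≤ n) (ha : 0 ≤ a) (hb : 0 ≤ b) (h0 : 0 < h) :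
    Zc n h a b - Zc n h (a + 1) b = ∑' Y : ℕ, eQ n h a b 0 Y := by
  have s1 := eQ_summable n h a b hn ha hb h0
  have s2 := eQ_summable n h (a + 1) b hn (by linarith) hb h0
  unfold Zc
  have e1 := s1.tsum_prod
  have e2 := s2.tsum_prod
  rw [e1, e2]
  have s3 := s1.prod
  have := s3.tsum_eq_zero_add
  rw [this]
  have : ∀ X : ℕ, ∑' Y : ℕ, eQ n h a b ((X + 1 : ℕ) : ℝ) Y = ∑' Y : ℕ, eQ n h (a + 1) b X Y := by
    intro X
    apply tsum_congr; intro Y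
    unfold eQ; congr 4; push_cast; ring
  simp only [this]
  simp

lemma Zc_M (n h : ℝ) (hn : 0 ≤ n) (h0 : 0 < h) :
    Zc n h 1 1 - Zc n h 1 0 - Zc n h 0 1 + Zc n h 0 0 = 1 := by
  have e1 := Zc_shift n h 0 0 hn le_rfl le_rfl h0
  have e2 := Zc_shift n h 0 1 hn le_rfl zero_le_one h0
  rw [zero_add] at e1 e2
  have s := (eQ_row_summable n h 0 0 hn le_rfl le_rfl h0).tsum_eq_zero_add
  have : ∀ Y : ℕ, eQ n h 0 0 0 ((Y + 1 : ℕ) : ℝ) = eQ n h 0 1 0 Y := by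
    intro Y; unfold eQ; congr 4; push_cast; ring
  simp only [this] at s
  rw [s] at e1
  have : eQ n h 0 0 0 ((0 : ℕ) : ℝ) = 1 := by simp [eQ, Qr]
  linarith

lemma tele (h : ℝ) (h0 : 0 < h) (n : ℝ) (hn : 0 ≤ n) :
    HasSum (fun Y : ℕ => eQ n h 0 0 0 Y - eQ n h 0 1 0 Y) 1 := by
  have s0 := (eQ_row_summable n h 0 0 hn le_rfl le_rfl h0)
  have s1 := (eQ_row_summable n h 0 1 hn le_rfl zero_le_one h0)
  have s := s0.tsum_eq_zero_add
  have : ∀ Y : ℕ, eQ n h 0 0 0 ((Y + 1 : ℕ) : ℝ) = eQ n h 0 1 0 Y := by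
    intro Y; unfold eQ; congr 4; push_cast; ring
  simp only [this] at s
  have h2 := s0.hasSum.sub s1.hasSum
  have : eQ n h 0 0 0 ((0 : ℕ) : ℝ) = 1 := by simp [eQ, Qr]
  rw [s, this, add_sub_cancel_right] at h2
  exact h2

lemma Zc_D (n : ℝ) (hn : 0 ≤ n) : ∃ K : ℝ, 0 ≤ K ∧ ∀ h : ℝ, 0 < h → h ≤ 1 →
    |Zc n h 2 0 - 2 * Zc n h 1 0 + Zc n h 0 0 - n / 2| ≤ K * h := by
  set c := 1 + n with hc
  have hcp : 1 ≤ c := by linarith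
  set K0 := c + 5 * c ^ 2 + 20 * n with hK0
  have hK0p : 0 ≤ K0 := by positivity
  refine ⟨K0 * (6 * exp 3) * 2, by positivity, ?_⟩
  intro h h0 h1
  have e1 := Zc_shift n h 0 0 hn le_rfl le_rfl h0
  have e2 := Zc_shift n h 1 0 hn zero_le_one le_rfl h0
  rw [zero_add] at e1
  rw [show (1 : ℝ) + 1 = 2 by norm_num] at e2
  have s0 := (eQ_row_summable n h 0 0 hn le_rfl le_rfl h0)
  have s1 := (eQ_row_summable n h 1 0 hn zero_le_one le_rfl h0)
  have hs := (s0.hasSum.sub s1.hasSum).sub ((tele h h0 n hn).mul_left (n / 2))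
  have hval : Zc n h 2 0 - 2 * Zc n h 1 0 + Zc n h 0 0 - n / 2 =
      ∑' Y : ℕ, eQ n h 0 0 0 Y - ∑' Y : ℕ, eQ n h 1 0 0 Y - n / 2 * 1 := by
    rw [← e1, ← e2]; ring
  rw [hval, ← hs.tsum_eq]
  have hg := (geo_hasSum h h0).mul_left (K0 * (6 * exp 3) * h ^ 2)
  have bound : ∀ Y : ℕ, |eQ n h 0 0 0 Y - eQ n h 1 0 0 Y - n / 2 * (eQ n h 0 0 0 Y - eQ n h 0 1 0 Y)|
      ≤ K0 * (6 * exp 3) * h ^ 2 * exp (-(h * Y)) := by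
    intro Y
    have hY : (0 : ℝ) ≤ Y := by positivity
    set s := h * (Y : ℝ) with hs
    have hsp : 0 ≤ s := by positivity
    have k1 : eQ n h 1 0 0 Y = eQ n h 0 0 0 Y * exp (-(h ^ 2 * (1 + n * Y))) := by
      unfold eQ; rw [← exp_add]; congr 1; unfold Qr; ring
    have k2 : eQ n h 0 1 0 Y = eQ n h 0 0 0 Y * exp (-(h ^ 2 * (1 + 2 * Y))) := by
      unfold eQ; rw [← exp_add]; congr 1; unfold Qr; ring
    have t1 := exp_quad (h ^ 2 * (1 + n * Y)) (by positivity)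
    have t2 := exp_quad (h ^ 2 * (1 + 2 * Y)) (by positivity)
    have hh : h * (1 + n * Y) ≤ c * (1 + s) := by rw [hc, hs]; nlinarith [mul_nonneg hn hY, mul_nonneg h0.le hY]
    have hh2 : h * (1 + 2 * Y) ≤ 2 * (1 + s) := by rw [hs]; nlinarith
    have u1 : (h ^ 2 * (1 + n * Y)) ^ 2 ≤ h ^ 2 * (c * (1 + s)) ^ 2 := by
      calc (h ^ 2 * (1 + n * Y)) ^ 2 = h ^ 2 * (h * (1 + n * Y)) ^ 2 := by ring
        _ ≤ _ := by gcongr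
    have u2 : (h ^ 2 * (1 + 2 * Y)) ^ 2 ≤ h ^ 2 * (2 * (1 + s)) ^ 2 := by
      calc (h ^ 2 * (1 + 2 * Y)) ^ 2 = h ^ 2 * (h * (1 + 2 * Y)) ^ 2 := by ring
        _ ≤ _ := by gcongr
    set E1 := exp (-(h ^ 2 * (1 + n * Y)))
    set E2 := exp (-(h ^ 2 * (1 + 2 * Y)))
    have main : |(1 - E1) - n / 2 * (1 - E2)| ≤ K0 * (h ^ 2 * (1 + s) ^ 3) := by
      have e : (1 - E1) - n / 2 * (1 - E2) = (1 - E1 - h ^ 2 * (1 + n * Y)) -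
         n / 2 * (1 - E2 - h ^ 2 * (1 + 2 * Y)) + h ^ 2 * (1 - n / 2) := by ring
      have a1 : |n / 2 * (1 - E2 - h ^ 2 * (1 + 2 * Y))| ≤ n / 2 * (5 * (h ^ 2 * (2 * (1 + s)) ^ 2)) := by
        rw [abs_mul, abs_of_nonneg (a := n / 2) (by positivity)]; gcongr; linarith
      have a2 : |h ^ 2 * (1 - n / 2)| ≤ h ^ 2 * c := by
        rw [abs_mul, abs_of_nonneg (a := h ^ 2) (by positivity)]; gcongr
        rw [abs_le]; constructor <;> linarith
      rw [e]
      refine (abs_add_le _ _).trans ?_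
      have a3 := abs_sub (1 - E1 - h ^ 2 * (1 + n * Y)) (n / 2 * (1 - E2 - h ^ 2 * (1 + 2 * Y)))
      have q1 : 1 ≤ (1 + s) ^ 3 := one_le_pow₀ (by linarith)
      have q2 : (1 + s) ^ 2 ≤ (1 + s) ^ 3 := pow_le_pow_right₀ (by linarith) (by norm_num)
      have r1 : h ^ 2 * c ≤ c * (h ^ 2 * (1 + s) ^ 3) := by
        calc h ^ 2 * c = c * (h ^ 2 * 1) := by ring
          _ ≤ _ := by gcongr
      have r2 : h ^ 2 * (1 + s) ^ 2 ≤ h ^ 2 * (1 + s) ^ 3 := by gcongr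
      have r3 : 5 * (h ^ 2 * (c * (1 + s)) ^ 2) ≤ 5 * c ^ 2 * (h ^ 2 * (1 + s) ^ 3) := by
        calc 5 * (h ^ 2 * (c * (1 + s)) ^ 2) = 5 * c ^ 2 * (h ^ 2 * (1 + s) ^ 2) := by ring
          _ ≤ _ := by gcongr
      have r4 : n / 2 * (5 * (h ^ 2 * (2 * (1 + s)) ^ 2)) ≤ 20 * n * (h ^ 2 * (1 + s) ^ 3) := by
        calc n / 2 * (5 * (h ^ 2 * (2 * (1 + s)) ^ 2)) = 10 * n * (h ^ 2 * (1 + s) ^ 2) := by ring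
          _ ≤ 10 * n * (h ^ 2 * (1 + s) ^ 3) := by gcongr
          _ ≤ _ := by gcongr; norm_num
      rw [hK0]
      linarith
    have e0 := eQ_le n h 0 Y hn le_rfl hY
    rw [zero_add, ← hs] at e0
    have e0p : 0 ≤ eQ n h 0 0 0 Y := (exp_pos _).le
    have e : eQ n h 0 0 0 Y - eQ n h 1 0 0 Y - n / 2 * (eQ n h 0 0 0 Y - eQ n h 0 1 0 Y) =
      eQ n h 0 0 0 Y * ((1 - E1) - n / 2 * (1 - E2)) := by rw [k1, k2]; ring
    rw [e, abs_mul, abs_of_nonneg e0p]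
    calc eQ n h 0 0 0 Y * |(1 - E1) - n / 2 * (1 - E2)| ≤ exp (-(s ^ 2 / 2)) * (K0 * (h ^ 2 * (1 + s) ^ 3)) :=
          mul_le_mul e0 main (abs_nonneg _) (exp_pos _).le
      _ = K0 * h ^ 2 * ((1 + s) ^ 3 * exp (-(s ^ 2 / 2))) := by ring
      _ ≤ K0 * h ^ 2 * (6 * exp 3 * exp (-s)) :=
          mul_le_mul_of_nonneg_left (cube_exp s hsp) (by positivity)
      _ = _ := by ring
  have := tsum_of_norm_bounded (f := fun Y : ℕ => eQ n h 0 0 0 Y - eQ n h 1 0 0 Y - n / 2 * (eQ n h 0 0 0 Y - eQ n h 0 1 0 Y)) hg bound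
  rw [Real.norm_eq_abs] at this
  refine this.trans ?_
  calc K0 * (6 * exp 3) * h ^ 2 * (1 - exp (-h))⁻¹ ≤ K0 * (6 * exp 3) * h ^ 2 * (2 / h) :=
        mul_le_mul_of_nonneg_left (geo_inv_le h h0 h1) (by positivity)
    _ = _ := by field_simp

lemma Zc_lim (n a b : ℝ) (hn : 0 ≤ n) (ha : 0 ≤ a) (hb : 0 ≤ b) : ∃ K : ℝ, 0 ≤ K ∧
    ∀ h : ℝ, 0 < h → h ≤ 1 →
      |Zc n h a b - Zc n h 0 0 - (a + b) * (Zc n h 1 0 - Zc n h 0 0)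
        - (a * b + n / 4 * (a ^ 2 + b ^ 2 - a - b))| ≤ K * h := by
  obtain ⟨KD, hKD, hD⟩ := Zc_D n hn
  obtain ⟨K, hK, h1⟩ := taylor_bound n a b hn ha hb
  obtain ⟨K10, hK10, h10⟩ := taylor_bound n 1 0 hn (by norm_num) (by norm_num)
  obtain ⟨K01, hK01, h01⟩ := taylor_bound n 0 1 hn (by norm_num) (by norm_num)
  obtain ⟨K11, hK11, h11⟩ := taylor_bound n 1 1 hn (by norm_num) (by norm_num)
  obtain ⟨K20, hK20, h20⟩ := taylor_bound n 2 0 hn (by norm_num) (by norm_num)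
  obtain ⟨K02, hK02, h02⟩ := taylor_bound n 0 2 hn (by norm_num) (by norm_num)
  -- coefficients of the interpolation formula
  set c10 := a - a * b - a * (a - 1) with hc10
  set c01 := b - a * b - b * (b - 1) with hc01
  set c11 := a * b with hc11
  set c20 := a * (a - 1) / 2 with hc20
  set c02 := b * (b - 1) / 2 with hc02
  set c00 := 1 - c10 - c01 - c11 - c20 - c02 with hc00
  set KK := K + |c10| * K10 + |c01| * K01 + |c11| * K11 + |c20| * K20 + |c02| * K02 with hKK
  have hKKp : 0 ≤ KK := by positivity
  refine ⟨KK * 4 + (|c20| + |c02|) * KD, by positivity, ?_⟩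
  intro h h0 hle
  have S := fun a b ha hb => (eQ_summable n h a b hn ha hb h0).hasSum
  have hs := ((((((S a b ha hb).sub ((S 0 0 le_rfl le_rfl).mul_left c00)).sub
    ((S 1 0 (by norm_num) (by norm_num)).mul_left c10)).sub
    ((S 0 1 (by norm_num) (by norm_num)).mul_left c01)).sub
    ((S 1 1 (by norm_num) (by norm_num)).mul_left c11)).sub
    ((S 2 0 (by norm_num) (by norm_num)).mul_left c20)).sub
    ((S 0 2 (by norm_num) (by norm_num)).mul_left c02)
  have hg := (geo2_hasSum h h0).mul_left (KK * h ^ 3)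
  have bd := tsum_of_norm_bounded (f := fun p : ℕ × ℕ => eQ n h a b p.1 p.2 - c00 * eQ n h 0 0 p.1 p.2 - c10 * eQ n h 1 0 p.1 p.2 - c01 * eQ n h 0 1 p.1 p.2
        - c11 * eQ n h 1 1 p.1 p.2 - c20 * eQ n h 2 0 p.1 p.2 - c02 * eQ n h 0 2 p.1 p.2) hg (fun p => by
    have hX : (0 : ℝ) ≤ p.1 := by positivity
    have hY : (0 : ℝ) ≤ p.2 := by positivity
    have b1 := h1 h p.1 p.2 h0 hle hX hY
    have b10 := h10 h p.1 p.2 h0 hle hX hY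
    have b01 := h01 h p.1 p.2 h0 hle hX hY
    have b11 := h11 h p.1 p.2 h0 hle hX hY
    have b20 := h20 h p.1 p.2 h0 hle hX hY
    have b02 := h02 h p.1 p.2 h0 hle hX hY
    set G := exp (-(h * (p.1 : ℝ))) * exp (-(h * (p.2 : ℝ)))
    set e0 := eQ n h 0 0 p.1 p.2
    have id1 : Pq n h p.1 p.2 a b = c00 + c10 * Pq n h p.1 p.2 1 0 + c01 * Pq n h p.1 p.2 0 1
      + c11 * Pq n h p.1 p.2 1 1 + c20 * Pq n h p.1 p.2 2 0 + c02 * Pq n h p.1 p.2 0 2 := by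
      rw [hc00, hc10, hc01, hc11, hc20, hc02]; unfold Pq Qr; ring
    have mulb : ∀ c x y : ℝ, |x| ≤ y → |c * x| ≤ |c| * y := by
      intro c x y hxy; rw [abs_mul]; gcongr
    have b10 := mulb c10 _ _ b10
    have b01 := mulb c01 _ _ b01
    have b11 := mulb c11 _ _ b11
    have b20 := mulb c20 _ _ b20
    have b02 := mulb c02 _ _ b02
    have e : eQ n h a b p.1 p.2 - c00 * e0 - c10 * eQ n h 1 0 p.1 p.2 - c01 * eQ n h 0 1 p.1 p.2
        - c11 * eQ n h 1 1 p.1 p.2 - c20 * eQ n h 2 0 p.1 p.2 - c02 * eQ n h 0 2 p.1 p.2 =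
        (eQ n h a b p.1 p.2 - e0 * Pq n h p.1 p.2 a b)
        - c10 * (eQ n h 1 0 p.1 p.2 - e0 * Pq n h p.1 p.2 1 0)
        - c01 * (eQ n h 0 1 p.1 p.2 - e0 * Pq n h p.1 p.2 0 1)
        - c11 * (eQ n h 1 1 p.1 p.2 - e0 * Pq n h p.1 p.2 1 1)
        - c20 * (eQ n h 2 0 p.1 p.2 - e0 * Pq n h p.1 p.2 2 0)
        - c02 * (eQ n h 0 2 p.1 p.2 - e0 * Pq n h p.1 p.2 0 2) := by
      rw [id1]; ring
    show |eQ n h a b p.1 p.2 - c00 * e0 - c10 * eQ n h 1 0 p.1 p.2 - c01 * eQ n h 0 1 p.1 p.2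
        - c11 * eQ n h 1 1 p.1 p.2 - c20 * eQ n h 2 0 p.1 p.2 - c02 * eQ n h 0 2 p.1 p.2| ≤ KK * h ^ 3 * G
    rw [e, hKK]
    rw [abs_le] at b1 b10 b01 b11 b20 b02 ⊢
    constructor <;> linarith)
  rw [hs.tsum_eq, Real.norm_eq_abs] at bd
  change |Zc n h a b - c00 * Zc n h 0 0 - c10 * Zc n h 1 0 - c01 * Zc n h 0 1 - c11 * Zc n h 1 1
    - c20 * Zc n h 2 0 - c02 * Zc n h 0 2| ≤ _ at bd
  have bd2 : KK * h ^ 3 * ((1 - exp (-h))⁻¹ * (1 - exp (-h))⁻¹) ≤ KK * 4 * h := by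
    have g0 : 0 ≤ (1 - exp (-h))⁻¹ := by
      have := one_sub_exp_ge h h0 hle
      rw [inv_nonneg]; linarith
    calc KK * h ^ 3 * ((1 - exp (-h))⁻¹ * (1 - exp (-h))⁻¹) ≤ KK * h ^ 3 * ((2 / h) * (2 / h)) := by
          have := geo_inv_le h h0 hle
          gcongr
      _ = KK * 4 * h := by field_simp; norm_num
  have bd := bd.trans bd2
  have hM := Zc_M n h hn h0
  have hD' := hD h h0 hle
  have d1 : |c20 * (Zc n h 2 0 - 2 * Zc n h 1 0 + Zc n h 0 0 - n / 2)| ≤ |c20| * (KD * h) := by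
    rw [abs_mul]; gcongr
  have d2 : |c02 * (Zc n h 2 0 - 2 * Zc n h 1 0 + Zc n h 0 0 - n / 2)| ≤ |c02| * (KD * h) := by
    rw [abs_mul]; gcongr
  rw [Zc_symm n h 0 1] at hM bd
  rw [Zc_symm n h 0 2] at bd
  have fin : Zc n h a b - Zc n h 0 0 - (a + b) * (Zc n h 1 0 - Zc n h 0 0)
        - (a * b + n / 4 * (a ^ 2 + b ^ 2 - a - b)) =
    (Zc n h a b - c00 * Zc n h 0 0 - c10 * Zc n h 1 0 - c01 * Zc n h 1 0 - c11 * Zc n h 1 1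
    - c20 * Zc n h 2 0 - c02 * Zc n h 2 0) + c20 * (Zc n h 2 0 - 2 * Zc n h 1 0 + Zc n h 0 0 - n / 2)
    + c02 * (Zc n h 2 0 - 2 * Zc n h 1 0 + Zc n h 0 0 - n / 2) := by
    have : Zc n h 1 1 = 1 + Zc n h 1 0 + Zc n h 1 0 - Zc n h 0 0 := by linarith
    rw [this, hc00, hc10, hc01, hc11, hc20, hc02]; ring
  rw [fin]
  rw [abs_le] at bd d1 d2 ⊢
  constructor <;> linarith

open Real Filter Topology

lemma weighted_summable (n h a b : ℝ) (hn : 0 ≤ n) (ha : 0 ≤ a) (hb : 0 ≤ b) (h0 : 0 < h)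
    (F : ℕ → ℕ → ℝ) (C : ℝ) (hC : ∀ x y, |F x y| ≤ C) :
    Summable (fun p : ℕ × ℕ => F p.1 p.2 * eQ n h a b p.1 p.2) := by
  refine Summable.of_norm_bounded ((eQ_summable n h a b hn ha hb h0).mul_left C) ?_
  intro p
  have : 0 ≤ eQ n h a b p.1 p.2 := (exp_pos _).le
  rw [norm_mul, Real.norm_eq_abs, Real.norm_eq_abs, abs_of_nonneg this]
  gcongr; exact hC _ _

lemma split_tsum (P : ℕ) [NeZero P] (g : ℕ × ℕ → ℝ) (hg : Summable g) :
    ∑' p, g p = ∑ u : Fin P, ∑ v : Fin P, ∑' p : ℕ × ℕ, g (p.1 * P + u, p.2 * P + v) := by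
  let e : (Fin P × Fin P) × (ℕ × ℕ) ≃ ℕ × ℕ :=
    (Equiv.prodComm _ _).trans ((Equiv.prodProdProdComm ℕ ℕ (Fin P) (Fin P)).trans
      (Equiv.prodCongr (Nat.divModEquiv P).symm (Nat.divModEquiv P).symm))
  have he : ∀ u v X Y, e ((u, v), (X, Y)) = (X * P + u, Y * P + v) := by
    intro u v X Y
    rfl
  rw [← e.tsum_eq]
  have hs : Summable (fun x => g (e x)) := (Equiv.summable_iff e).mpr hg
  rw [hs.tsum_prod, tsum_fintype, Fintype.sum_prod_type]
  rfl

lemma eQ_scale (n h : ℝ) (P : ℕ) (hP : 0 < P) (u v X Y : ℕ) :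
    eQ n h 1 0 ((X * P + u : ℕ) : ℝ) ((Y * P + v : ℕ) : ℝ) =
      eQ n (h * P) (((u : ℝ) + 1) / P) ((v : ℝ) / P) X Y := by
  have : (P : ℝ) ≠ 0 := by positivity
  unfold eQ Qr; congr 1; push_cast; field_simp; ring

lemma cone_limit (n : ℝ) (hn : 0 ≤ n) (P : ℕ) (hP : 0 < P) (F : ℕ → ℕ → ℝ) (C : ℝ)
    (hC : ∀ x y, |F x y| ≤ C) (hF : ∀ X Y u v, F (X * P + u) (Y * P + v) = F u v)
    (h0 : ∑ u : Fin P, ∑ v : Fin P, F u v = 0)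
    (h1 : ∑ u : Fin P, ∑ v : Fin P, F u v * (((u : ℕ) : ℝ) + 1 + (v : ℕ)) = 0) :
    Tendsto (fun h : ℝ => ∑' p : ℕ × ℕ, F p.1 p.2 * eQ n h 1 0 p.1 p.2) (𝓝[>] 0)
      (𝓝 ((∑ u : Fin P, ∑ v : Fin P, F u v * (4 * (((u : ℕ) : ℝ) + 1) * (v : ℕ) +
        n * ((((u : ℕ) : ℝ) + 1) ^ 2 + ((v : ℕ) : ℝ) ^ 2))) / (4 * P ^ 2))) := by
  haveI : NeZero P := ⟨hP.ne'⟩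
  have hPr : (0 : ℝ) < P := by positivity
  have hPn : (P : ℝ) ≠ 0 := hPr.ne'
  -- the sum rewritten
  have key : ∀ h : ℝ, 0 < h → ∑' p : ℕ × ℕ, F p.1 p.2 * eQ n h 1 0 p.1 p.2 =
      ∑ u : Fin P, ∑ v : Fin P, F u v * (Zc n (h * P) ((((u : ℕ) : ℝ) + 1) / P) (((v : ℕ) : ℝ) / P)
        - Zc n (h * P) 0 0 - ((((u : ℕ) : ℝ) + 1) / P + ((v : ℕ) : ℝ) / P) * (Zc n (h * P) 1 0 - Zc n (h * P) 0 0)) := by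
    intro h hh
    rw [split_tsum P _ (weighted_summable n h 1 0 hn zero_le_one le_rfl hh F C hC)]
    simp only [hF, eQ_scale n h P hP, tsum_mul_left]
    simp only [mul_sub, Finset.sum_sub_distrib]
    rw [← sub_eq_zero]
    have e0 : ∑ u : Fin P, ∑ v : Fin P, F u v * Zc n (h * P) 0 0 = 0 := by
      simp only [← Finset.sum_mul, h0, zero_mul]
    have e1 : ∀ Z : ℝ, ∑ u : Fin P, ∑ v : Fin P, F u v * (((((u : ℕ) : ℝ) + 1) / P + ((v : ℕ) : ℝ) / P) * Z) = 0 := by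
      intro Z
      have : ∀ u v : Fin P, F u v * (((((u : ℕ) : ℝ) + 1) / P + ((v : ℕ) : ℝ) / P) * Z) =
        F u v * (((u : ℕ) : ℝ) + 1 + (v : ℕ)) * (Z / P) := by intro u v; field_simp
      simp only [this, ← Finset.sum_mul, h1, zero_mul]
    rw [e0, e1, e1]
    unfold Zc
    ring
  have lim : ∀ u v : Fin P, Tendsto (fun h : ℝ => F u v * (Zc n (h * P) ((((u : ℕ) : ℝ) + 1) / P) (((v : ℕ) : ℝ) / P)
        - Zc n (h * P) 0 0 - ((((u : ℕ) : ℝ) + 1) / P + ((v : ℕ) : ℝ) / P) * (Zc n (h * P) 1 0 - Zc n (h * P) 0 0)))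
      (𝓝[>] 0) (𝓝 (F u v * (((((u : ℕ) : ℝ) + 1) / P) * (((v : ℕ) : ℝ) / P) +
        n / 4 * (((((u : ℕ) : ℝ) + 1) / P) ^ 2 + (((v : ℕ) : ℝ) / P) ^ 2 - ((((u : ℕ) : ℝ) + 1) / P) - (((v : ℕ) : ℝ) / P))))) := by
    intro u v
    apply Tendsto.const_mul
    obtain ⟨K, hK, hb⟩ := Zc_lim n ((((u : ℕ) : ℝ) + 1) / P) (((v : ℕ) : ℝ) / P) hn (by positivity) (by positivity)
    rw [tendsto_iff_dist_tendsto_zero]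
    have hz : Tendsto (fun h : ℝ => K * (h * P)) (𝓝[>] 0) (𝓝 0) := by
      have : Tendsto (fun h : ℝ => K * (h * P)) (𝓝 0) (𝓝 (K * (0 * P))) :=
        (Continuous.tendsto (by fun_prop) 0)
      simp only [zero_mul, mul_zero] at this
      exact this.mono_left nhdsWithin_le_nhds
    refine squeeze_zero' (Eventually.of_forall fun _ => dist_nonneg) ?_ hz
    have hmem : Set.Ioc (0 : ℝ) (1 / P) ∈ 𝓝[>] (0 : ℝ) := Ioc_mem_nhdsGT (by positivity)
    filter_upwards [hmem] with h hh
    rw [Real.dist_eq]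
    apply hb (h * P) (by have := hh.1; positivity)
    have := hh.2
    rw [le_div_iff₀ hPr] at this
    exact this
  have tot := tendsto_finsetSum (Finset.univ : Finset (Fin P)) (fun u _ =>
    tendsto_finsetSum (Finset.univ : Finset (Fin P)) (fun v _ => lim u v))
  refine (Tendsto.congr' ?_ tot).trans_eq ?_
  · filter_upwards [self_mem_nhdsWithin] with h hh
    exact (key h hh).symm
  · congr 1
    rw [eq_div_iff (by positivity)]
    have : ∀ u v : Fin P, F u v * (((((u : ℕ) : ℝ) + 1) / P) * (((v : ℕ) : ℝ) / P) +
        n / 4 * (((((u : ℕ) : ℝ) + 1) / P) ^ 2 + (((v : ℕ) : ℝ) / P) ^ 2 - ((((u : ℕ) : ℝ) + 1) / P) - (((v : ℕ) : ℝ) / P))) * (4 * P ^ 2)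
        = F u v * (4 * (((u : ℕ) : ℝ) + 1) * (v : ℕ) +
        n * ((((u : ℕ) : ℝ) + 1) ^ 2 + ((v : ℕ) : ℝ) ^ 2)) - F u v * (((u : ℕ) : ℝ) + 1 + (v : ℕ)) * (n * P) := by
      intro u v; field_simp; ring
    simp only [Finset.sum_mul, this, Finset.sum_sub_distrib]
    simp only [← Finset.sum_mul, h1]
    ring

open Real Filter Topology

lemma split_tsum1 (P : ℕ) [NeZero P] (g : ℕ → ℝ) (hg : Summable g) :
    ∑' p, g p = ∑ u : Fin P, ∑' X : ℕ, g (X * P + u) := by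
  let e : Fin P × ℕ ≃ ℕ := (Equiv.prodComm _ _).trans (Nat.divModEquiv P).symm
  rw [← e.tsum_eq]
  have hs : Summable (fun x => g (e x)) := (Equiv.summable_iff e).mpr hg
  rw [hs.tsum_prod, tsum_fintype]
  rfl

lemma lip_of_contDiff (f : ℝ → ℝ) (hf : ContDiff ℝ 1 f) : ∃ K : ℝ, 0 ≤ K ∧
    ∀ x ∈ Set.Icc (0 : ℝ) 1, ∀ y ∈ Set.Icc (0 : ℝ) 1, |f y - f x| ≤ K * |y - x| := by
  obtain ⟨K, hK⟩ := (isCompact_Icc (a := (0 : ℝ)) (b := 1)).exists_bound_of_continuousOn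
    (f := deriv f) (hf.continuous_deriv le_rfl).continuousOn
  refine ⟨K, (norm_nonneg _).trans (hK 0 (by simp)), fun x hx y hy => ?_⟩
  exact Convex.norm_image_sub_le_of_norm_deriv_le (s := Set.Icc (0 : ℝ) 1)
    (fun x _ => (hf.differentiable one_ne_zero).differentiableAt) hK (convex_Icc _ _) hx hy

lemma mvt_le (f : ℝ → ℝ) (hf : ContDiff ℝ 1 f) (a b : ℝ) (hab : a ≤ b) :
    ∃ c ∈ Set.Icc a b, f b - f a = deriv f c * (b - a) := by
  rcases hab.eq_or_lt with rfl | h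
  · exact ⟨a, by simp, by simp⟩
  · obtain ⟨c, hc, h2⟩ := exists_deriv_eq_slope f h hf.continuous.continuousOn
      (hf.differentiable one_ne_zero).differentiableOn
    refine ⟨c, Set.Ioo_subset_Icc_self hc, ?_⟩
    rw [h2]; field_simp [sub_ne_zero.mpr h.ne']

lemma pow_summable_comp (f : ℝ → ℝ) (hf : ContDiff ℝ 1 f) (hf0 : f 0 = 0) (z : ℝ) (hz0 : 0 < z) (hz1 : z < 1)
    (q : ℕ) (hq : 0 < q) (c : ℕ) : Summable (fun X : ℕ => f (z ^ (X * q + c))) := by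
  obtain ⟨K, hK0, hK⟩ := lip_of_contDiff f hf
  have hs : Summable (fun X : ℕ => K * (z ^ q) ^ X) :=
    (summable_geometric_of_lt_one (by positivity) (pow_lt_one₀ hz0.le hz1 hq.ne')).mul_left K
  refine Summable.of_norm_bounded hs ?_
  intro X
  have h1 : z ^ (X * q + c) ∈ Set.Icc (0 : ℝ) 1 := ⟨by positivity, pow_le_one₀ hz0.le hz1.le⟩
  have := hK 0 (by simp) _ h1
  rw [hf0, sub_zero, sub_zero, abs_of_nonneg h1.1] at this
  refine this.trans ?_
  rw [← pow_mul, mul_comm q X]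
  exact mul_le_mul_of_nonneg_left (pow_le_pow_of_le_one hz0.le hz1.le (Nat.le_add_right _ _)) hK0

/-- `Σ_X (f(z^{qX+a}) - f(z^{qX+q})) → (1-a/q) f(1)` -/
lemma half_sum_limit (f : ℝ → ℝ) (hf : ContDiff ℝ 2 f) (hf0 : f 0 = 0) (q : ℕ) (hq : 0 < q) (a : ℕ) (ha : a ≤ q) :
    Tendsto (fun z : ℝ => ∑' X : ℕ, f (z ^ (X * q + a)) - ∑' X : ℕ, f (z ^ (X * q + q))) (𝓝[<] 1)
      (𝓝 ((1 - a / q) * f 1)) := by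
  have hf1 : ContDiff ℝ 1 f := hf.of_le (by norm_num)
  have hd : ContDiff ℝ 1 (deriv f) := by
    have : ContDiff ℝ (1 + 1) f := by
      have e : (1 : WithTop ℕ∞) + 1 = 2 := by norm_num
      rw [e]; exact hf
    exact (contDiff_succ_iff_deriv.mp this).2.2
  obtain ⟨K, hK0, hK⟩ := lip_of_contDiff (deriv f) hd
  -- the error estimate
  have est : ∀ z : ℝ, 0 < z → z < 1 →
      |(∑' X : ℕ, f (z ^ (X * q + a)) - ∑' X : ℕ, f (z ^ (X * q + q))) -
        (z ^ a - z ^ q) / (1 - z ^ q) * f 1| ≤ K * (1 - z ^ q) := by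
    intro z hz0 hz1
    set y := z ^ q with hy
    have hy0 : 0 < y := by positivity
    have hy1 : y < 1 := pow_lt_one₀ hz0.le hz1 hq.ne'
    set ρ := z ^ a with hρ
    have hρy : y ≤ ρ := pow_le_pow_of_le_one hz0.le hz1.le ha
    have hρ1 : ρ ≤ 1 := pow_le_one₀ hz0.le hz1.le
    have h1y : 0 < 1 - y := by linarith
    have sa := pow_summable_comp f hf1 hf0 z hz0 hz1 q hq a
    have s0 := pow_summable_comp f hf1 hf0 z hz0 hz1 q hq 0
    have sq := pow_summable_comp f hf1 hf0 z hz0 hz1 q hq q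
    have t1 : ∑' X : ℕ, f (z ^ (X * q + 0)) - ∑' X : ℕ, f (z ^ (X * q + q)) = f 1 := by
      rw [s0.tsum_eq_zero_add]
      have : ∀ X : ℕ, f (z ^ ((X + 1) * q + 0)) = f (z ^ (X * q + q)) := by
        intro X; congr 2; ring
      simp only [this]
      simp
    have hs := (sa.hasSum.sub sq.hasSum).sub ((s0.hasSum.sub sq.hasSum).mul_left ((ρ - y) / (1 - y)))
    rw [t1] at hs
    rw [← hs.tsum_eq]
    have hg := (hasSum_geometric_of_lt_one hy0.le hy1).mul_left (K * (1 - y) ^ 2)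
    have bd := tsum_of_norm_bounded (f := fun X : ℕ => f (z ^ (X * q + a)) - f (z ^ (X * q + q)) -
      (ρ - y) / (1 - y) * (f (z ^ (X * q + 0)) - f (z ^ (X * q + q)))) hg (by
      intro X
      set s := y ^ X with hs
      have hs0 : 0 < s := by positivity
      have hs1 : s ≤ 1 := pow_le_one₀ hy0.le hy1.le
      have e1 : z ^ (X * q + a) = s * ρ := by rw [hs, hy, hρ, ← pow_mul, ← pow_add]; ring_nf
      have e2 : z ^ (X * q + q) = s * y := by rw [hs, hy, ← pow_mul, ← pow_add]; ring_nf
      have e3 : z ^ (X * q + 0) = s := by rw [hs, hy, ← pow_mul]; ring_nf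
      simp only [e1, e2, e3]
      obtain ⟨c1, hc1, m1⟩ := mvt_le f hf1 (s * y) (s * ρ) (by gcongr)
      obtain ⟨c2, hc2, m2⟩ := mvt_le f hf1 (s * y) s (by nlinarith)
      rw [m1, m2]
      have hsρ : s * ρ ≤ s := by nlinarith
      have hsy : 0 < s * y := by positivity
      have hsy1 : s * y ≤ s := by nlinarith
      have hk := hK c2 ⟨by linarith [hc2.1], by linarith [hc2.2]⟩ c1 ⟨by linarith [hc1.1], by linarith [hc1.2]⟩
      have hdist : |c1 - c2| ≤ s * (1 - y) := by
        rw [abs_le]; constructor <;> linarith [hc1.1, hc1.2, hc2.1, hc2.2]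
      have e : deriv f c1 * (s * ρ - s * y) - (ρ - y) / (1 - y) * (deriv f c2 * (s - s * y)) =
        (deriv f c1 - deriv f c2) * (s * (ρ - y)) := by field_simp
      rw [e, Real.norm_eq_abs, abs_mul, abs_of_nonneg (a := s * (ρ - y)) (by apply mul_nonneg <;> linarith)]
      calc |deriv f c1 - deriv f c2| * (s * (ρ - y)) ≤ (K * (s * (1 - y))) * (1 * (1 - y)) := by
            apply mul_le_mul
            · exact hk.trans (by gcongr)
            · apply mul_le_mul hs1 (by linarith) (by linarith) zero_le_one
            · apply mul_nonneg <;> linarith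
            · positivity
        _ = K * (1 - y) ^ 2 * s := by ring)
    rw [Real.norm_eq_abs] at bd
    refine bd.trans (le_of_eq ?_)
    field_simp
  have hr : Tendsto (fun z : ℝ => (z ^ a - z ^ q) / (1 - z ^ q)) (𝓝[<] 1) (𝓝 (1 - a / q)) := by
    -- factor out (1 - z)
    have hG : Tendsto (fun z : ℝ => 1 - (∑ i ∈ Finset.range a, z ^ i) / (∑ i ∈ Finset.range q, z ^ i)) (𝓝 1)
        (𝓝 (1 - (∑ i ∈ Finset.range a, (1 : ℝ) ^ i) / (∑ i ∈ Finset.range q, (1 : ℝ) ^ i))) := by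
      apply Tendsto.const_sub
      apply Tendsto.div
      · exact Continuous.tendsto (by fun_prop) 1
      · exact Continuous.tendsto (by fun_prop) 1
      · simp; omega
    simp only [one_pow, Finset.sum_const, Finset.card_range, nsmul_eq_mul, mul_one] at hG
    refine Tendsto.congr' ?_ (hG.mono_left nhdsWithin_le_nhds)
    filter_upwards [Ioo_mem_nhdsLT (show (0 : ℝ) < 1 by norm_num)] with z hz
    have g1 := geom_sum_mul_neg z a
    have g2 := geom_sum_mul_neg z q
    have hz1 : 1 - z ≠ 0 := by linarith [hz.2]
    have hpos : 0 < ∑ i ∈ Finset.range q, z ^ i := by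
      apply Finset.sum_pos
      · intro i _; exact pow_pos hz.1 i
      · simpa using hq.ne'
    rw [← g2]
    have : z ^ a - z ^ q = ((∑ i ∈ Finset.range q, z ^ i) - (∑ i ∈ Finset.range a, z ^ i)) * (1 - z) := by
      rw [sub_mul, g1, g2]; ring
    rw [this]
    field_simp
  have hz : Tendsto (fun z : ℝ => K * (1 - z ^ q)) (𝓝[<] 1) (𝓝 0) := by
    have : Tendsto (fun z : ℝ => K * (1 - z ^ q)) (𝓝 1) (𝓝 (K * (1 - 1 ^ q))) :=
      Continuous.tendsto (by fun_prop) 1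
    simp only [one_pow, sub_self, mul_zero] at this
    exact this.mono_left nhdsWithin_le_nhds
  have hdiff : Tendsto (fun z : ℝ => (∑' X : ℕ, f (z ^ (X * q + a)) - ∑' X : ℕ, f (z ^ (X * q + q))) -
        (z ^ a - z ^ q) / (1 - z ^ q) * f 1) (𝓝[<] 1) (𝓝 0) := by
    apply squeeze_zero_norm' _ hz
    filter_upwards [Ioo_mem_nhdsLT (show (0 : ℝ) < 1 by norm_num)] with z hz
    exact est z hz.1 hz.2
  have := hdiff.add (hr.mul_const (f 1))
  simpa using this

open Real Filter Topology

noncomputable def Gs (k : ℕ) (s : ℝ) : ℝ := ∑ i ∈ Finset.range k, s ^ i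

noncomputable def fA (N : ℕ) (W : ℕ → ℕ → ℝ) (a : ℕ) (s : ℝ) : ℝ :=
  -∑ b : Fin N, W a b * (Gs (b + 1) s / Gs N s)

lemma Gs_contDiff (k : ℕ) : ContDiff ℝ 2 (Gs k) := by
  unfold Gs; fun_prop

lemma fA_contDiff (N : ℕ) (hN : Odd N) (W : ℕ → ℕ → ℝ) (a : ℕ) : ContDiff ℝ 2 (fA N W a) := by
  unfold fA
  apply ContDiff.neg
  apply ContDiff.sum
  intro b _
  apply ContDiff.mul contDiff_const
  exact (Gs_contDiff _).div (Gs_contDiff _) (fun x => (hN.geom_sum_pos (x := x)).ne')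

lemma fA_zero (N : ℕ) (hN : Odd N) (W : ℕ → ℕ → ℝ) (a : ℕ) (hsb : ∑ b : Fin N, W a b = 0) :
    fA N W a 0 = 0 := by
  have hG : ∀ k, Gs (k + 1) 0 = 1 := by intro k; simp [Gs, Finset.sum_range_succ']
  obtain ⟨m, hm⟩ : ∃ m, N = m + 1 := ⟨N - 1, by have := hN.pos; omega⟩
  have hGN : Gs N 0 = 1 := by rw [hm]; exact hG m
  unfold fA
  simp only [hG, hGN, div_one, mul_one, hsb, neg_zero]

lemma fA_one (N : ℕ) (W : ℕ → ℕ → ℝ) (a : ℕ) :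
    fA N W a 1 = -∑ b : Fin N, W a b * ((((b : ℕ) : ℝ) + 1) / N) := by
  simp [fA, Gs]

lemma fA_inner_sum (N : ℕ) (hN : Odd N) (W : ℕ → ℕ → ℝ) (a : ℕ) (C : ℝ) (hC : ∀ x y, |W x y| ≤ C)
    (hW : ∀ Y b, W a (Y * N + b) = W a b) (hsb : ∑ b : Fin N, W a b = 0) (s : ℝ) (hs0 : 0 < s) (hs1 : s < 1) :
    ∑' b : ℕ, W a b * s ^ (b + 1) = fA N W a s := by
  haveI : NeZero N := ⟨hN.pos.ne'⟩
  have hsum : Summable (fun b : ℕ => W a b * s ^ (b + 1)) := by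
    refine Summable.of_norm_bounded (((summable_geometric_of_lt_one hs0.le hs1).mul_left s).mul_left C) ?_
    intro b
    rw [norm_mul, Real.norm_eq_abs, Real.norm_eq_abs, abs_of_nonneg (a := s ^ (b + 1)) (by positivity), pow_succ']
    gcongr; exact hC _ _
  rw [split_tsum1 N _ hsum]
  have hsN : s ^ N < 1 := pow_lt_one₀ hs0.le hs1 hN.pos.ne'
  have e : ∀ j : Fin N, ∑' X : ℕ, W a (X * N + j) * s ^ (X * N + j + 1) = W a j * (s ^ ((j : ℕ) + 1) / (1 - s ^ N)) := by
    intro j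
    have : ∀ X : ℕ, W a (X * N + j) * s ^ (X * N + j + 1) = (W a j * s ^ ((j : ℕ) + 1)) * (s ^ N) ^ X := by
      intro X; rw [hW, ← pow_mul, mul_assoc, ← pow_add]; ring_nf
    simp only [this]
    rw [tsum_mul_left, tsum_geometric_of_lt_one (by positivity) hsN]
    ring
  simp only [e]
  have g : ∀ k, Gs k s * (1 - s) = 1 - s ^ k := fun k => geom_sum_mul_neg s k
  have hG : Gs N s ≠ 0 := (hN.geom_sum_pos (x := s)).ne'
  have h1 : 1 - s ≠ 0 := by linarith
  have e2 : ∀ j : Fin N, W a j * (s ^ ((j : ℕ) + 1) / (1 - s ^ N)) =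
      W a j * (1 / (1 - s ^ N)) - W a j * (Gs (j + 1) s / Gs N s) := by
    intro j
    rw [← g N]
    have : s ^ ((j : ℕ) + 1) = 1 - Gs (j + 1) s * (1 - s) := by rw [g]; ring
    rw [this]; field_simp
  simp only [e2, Finset.sum_sub_distrib, ← Finset.sum_mul, hsb]
  unfold fA; ring

lemma lhs_summable (W : ℕ → ℕ → ℝ) (C : ℝ) (hC : ∀ x y, |W x y| ≤ C) (z : ℝ) (hz0 : 0 < z) (hz1 : z < 1) :
    Summable (fun p : ℕ × ℕ => W p.1 p.2 * z ^ ((p.1 + 1) * (p.2 + 1))) := by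
  have s := summable_geometric_of_lt_one hz0.le hz1
  have s2 := s.mul_of_nonneg s (fun _ => by positivity) (fun _ => by positivity)
  refine Summable.of_norm_bounded (s2.mul_left C) ?_
  rintro ⟨a, b⟩
  rw [norm_mul, Real.norm_eq_abs, Real.norm_eq_abs, abs_of_nonneg (a := z ^ _) (by positivity), ← pow_add]
  have hc : 0 ≤ C := (abs_nonneg _).trans (hC 0 0)
  apply mul_le_mul (hC _ _) _ (by positivity) hc
  apply pow_le_pow_of_le_one hz0.le hz1.le
  simp only; nlinarith

lemma lhs_limit (q N : ℕ) (hq : 0 < q) (hN : Odd N) (W : ℕ → ℕ → ℝ) (C : ℝ) (hC : ∀ x y, |W x y| ≤ C)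
    (hW1 : ∀ X a b, W (X * q + a) b = W a b) (hW2 : ∀ Y a b, W a (Y * N + b) = W a b)
    (hsa : ∀ b, ∑ a : Fin q, W a b = 0) (hsb : ∀ a, ∑ b : Fin N, W a b = 0) :
    Tendsto (fun z : ℝ => ∑' p : ℕ × ℕ, W p.1 p.2 * z ^ ((p.1 + 1) * (p.2 + 1))) (𝓝[<] 1)
      (𝓝 ((∑ a : Fin q, ∑ b : Fin N, W a b * ((((a : ℕ) : ℝ) + 1) * (((b : ℕ) : ℝ) + 1))) / (q * N))) := by
  haveI : NeZero q := ⟨hq.ne'⟩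
  have hqr : (q : ℝ) ≠ 0 := by positivity
  have hNr : (N : ℝ) ≠ 0 := by have := hN.pos; positivity
  have hc2 := fA_contDiff N hN W
  have hf0 := fun a => fA_zero N hN W a (hsb a)
  have hper : ∀ X a, fA N W (X * q + a) = fA N W a := by
    intro X a; ext s; simp only [fA, hW1]
  have hsum0 : ∀ s, ∑ a : Fin q, fA N W a s = 0 := by
    intro s
    unfold fA
    rw [Finset.sum_neg_distrib, Finset.sum_comm]
    simp only [← Finset.sum_mul, hsa, zero_mul, Finset.sum_const_zero, neg_zero]
  have key : ∀ z : ℝ, 0 < z → z < 1 → ∑' p : ℕ × ℕ, W p.1 p.2 * z ^ ((p.1 + 1) * (p.2 + 1)) =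
      ∑ a : Fin q, (∑' X : ℕ, fA N W a (z ^ (X * q + (a + 1))) - ∑' X : ℕ, fA N W a (z ^ (X * q + q))) := by
    intro z hz0 hz1
    have hs := lhs_summable W C hC z hz0 hz1
    have hin : ∀ a : ℕ, ∑' b : ℕ, W a b * z ^ ((a + 1) * (b + 1)) = fA N W a (z ^ (a + 1)) := by
      intro a
      rw [← fA_inner_sum N hN W a C hC (fun Y b => hW2 Y a b) (hsb a) (z ^ (a + 1)) (by positivity)
        (pow_lt_one₀ hz0.le hz1 (by omega))]
      simp only [pow_mul]
    rw [hs.tsum_prod]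
    have hs1 : Summable (fun a : ℕ => fA N W a (z ^ (a + 1))) := by
      simp only [← hin]; exact hs.prod
    simp only [hin]
    rw [split_tsum1 q _ hs1]
    simp only [hper, Finset.sum_sub_distrib]
    have : ∑ a : Fin q, ∑' X : ℕ, fA N W a (z ^ (X * q + q)) = 0 := by
      rw [← Summable.tsum_finsetSum (fun (a : Fin q) _ => pow_summable_comp _ ((hc2 a).of_le (by norm_num)) (hf0 a) z hz0 hz1 q hq q)]
      simp [hsum0]
    rw [this, sub_zero]
    rfl
  have lim := tendsto_finsetSum (Finset.univ : Finset (Fin q)) (fun (a : Fin q) _ =>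
    half_sum_limit (fA N W a) (hc2 a) (hf0 a) q hq (a + 1) (by have := a.2; omega))
  refine (Tendsto.congr' ?_ lim).trans_eq ?_
  · filter_upwards [Ioo_mem_nhdsLT (show (0 : ℝ) < 1 by norm_num)] with z hz
    exact (key z hz.1 hz.2).symm
  · congr 1
    simp only [sub_mul, one_mul, Finset.sum_sub_distrib, hsum0, zero_sub]
    simp only [fA_one, Finset.sum_div, Finset.mul_sum, mul_neg, Finset.sum_neg_distrib, neg_neg]
    refine Finset.sum_congr rfl fun a _ => Finset.sum_congr rfl fun b _ => ?_
    push_cast; field_simp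

open Real Filter Topology
open scoped NumberTheorySymbols

lemma fiber_hasSum (g : ℕ × ℕ → ℕ) (e : ℕ × ℕ → ℝ) (v : ℕ → ℝ)
    (hs : Summable fun p => e p * v (g p)) (s : ℕ → Finset (ℕ × ℕ))
    (hsk : ∀ k, v k ≠ 0 → ∀ p, (p ∈ s k → g p = k) ∧ (g p = k → p ∉ s k → e p = 0)) :
    HasSum (fun k => (∑ p ∈ s k, e p) * v k) (∑' p, e p * v (g p)) := by
  have h := HasSum.tsum_fiberwise hs.hasSum g
  suffices hf : (fun k => (∑ p ∈ s k, e p) * v k) = fun k => ∑' b : (g ⁻¹' {k}), e b * v (g b) by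
    rw [hf]; exact h
  funext k
  have e1 : ∀ b : (g ⁻¹' {k}), e b * v (g b) = e b * v k := by
    rintro ⟨b, hb⟩
    simp only [Set.mem_preimage, Set.mem_singleton_iff] at hb
    simp only [hb]
  simp only [e1]
  rw [tsum_mul_right]
  by_cases hv : v k = 0
  · simp [hv]
  · congr 1
    rw [tsum_subtype (g ⁻¹' {k}) e]
    rw [tsum_eq_sum (s := s k)]
    · refine Finset.sum_congr rfl fun p hp => ?_
      rw [Set.indicator_of_mem]
      exact (hsk k hv p).1 hp
    · intro p hp
      by_cases hg : g p = k
      · have := (hsk k hv p).2 hg hp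
        rw [Set.indicator_of_mem (show p ∈ g ⁻¹' {k} from hg), this]
      · rw [Set.indicator_of_notMem]; exact hg

def Qz (n : ℤ) (x y : ℕ) : ℤ := ((x : ℤ) + 1) ^ 2 + n * (x + 1) * y + (y : ℤ) ^ 2

lemma Qz_pos (n : ℤ) (hn : 0 ≤ n) (x y : ℕ) : 0 < Qz n x y := by
  unfold Qz; positivity

lemma eQ_pow (n : ℤ) (hn : 0 ≤ n) (h : ℝ) (x y : ℕ) :
    eQ n h 1 0 x y = exp (-h ^ 2) ^ (Qz n x y).toNat := by
  rw [← exp_nat_mul]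
  unfold eQ
  congr 1
  have : (((Qz n x y).toNat : ℕ) : ℝ) = ((Qz n x y : ℤ) : ℝ) := by
    have := Int.toNat_of_nonneg (Qz_pos n hn x y).le
    exact_mod_cast this
  rw [this]
  unfold Qr Qz; push_cast; ring

lemma Qz_div (n m : ℤ) (hm : m = n - 2) (x y : ℕ) (hd : m ∣ (x : ℤ) + 1 + y) : m ∣ Qz n x y := by
  have : Qz n x y = ((x : ℤ) + 1 + y) * ((x : ℤ) + 1 + y) + m * ((x + 1) * y) := by
    rw [hm]; unfold Qz; ring
  rw [this]
  exact dvd_add (hd.mul_right _) (dvd_mul_right _ _)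

lemma eQ_pow2 (n : ℤ) (hn : 0 ≤ n) (m : ℕ) (hm0 : 0 < m) (h : ℝ) (x y : ℕ) (hd : (m : ℤ) ∣ Qz n x y) :
    eQ n (h / √m) 1 0 x y = exp (-h ^ 2) ^ (Qz n x y / m).toNat := by
  rw [← exp_nat_mul]
  unfold eQ
  congr 1
  obtain ⟨k, hk⟩ := hd
  have hmz : (m : ℤ) ≠ 0 := by positivity
  have hmr : (m : ℝ) ≠ 0 := by positivity
  have hpos := Qz_pos n hn x y
  have hk0 : 0 ≤ k := by
    rw [hk] at hpos
    exact (pos_of_mul_pos_right hpos (by positivity)).le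
  rw [hk, Int.mul_ediv_cancel_left _ hmz]
  have : ((k.toNat : ℕ) : ℝ) = ((k : ℤ) : ℝ) := by
    have := Int.toNat_of_nonneg hk0
    exact_mod_cast this
  rw [this]
  have e : Qr n (x + 1) (y + 0) = m * k := by
    have : ((Qz n x y : ℤ) : ℝ) = ((m * k : ℤ) : ℝ) := by rw [hk]
    unfold Qz at this; push_cast at this
    rw [← this]; unfold Qr; ring
  rw [e, div_pow, Real.sq_sqrt (by positivity)]
  field_simp

/-- LHS fibre sum -/
lemma lhs_fiber (D : ℕ) (v : ℕ → ℝ) (hv0 : v 0 = 0)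
    (hs : Summable fun p : ℕ × ℕ => ((J(((p.2 + 1 : ℕ) : ℤ) | D) : ℤ) : ℝ) * v ((p.1 + 1) * (p.2 + 1))) :
    HasSum (fun k : ℕ => ((∑ b ∈ k.divisors, J((b : ℤ) | D) : ℤ) : ℝ) * v k)
      (∑' p : ℕ × ℕ, ((J(((p.2 + 1 : ℕ) : ℤ) | D) : ℤ) : ℝ) * v ((p.1 + 1) * (p.2 + 1))) := by
  have h := fiber_hasSum (fun p => (p.1 + 1) * (p.2 + 1)) (fun p => ((J(((p.2 + 1 : ℕ) : ℤ) | D) : ℤ) : ℝ)) v hs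
    (fun k => k.divisors.image (fun b => (k / b - 1, b - 1))) (by
    intro k hk ⟨a, b⟩
    have hk0 : k ≠ 0 := by rintro rfl; exact hk hv0
    constructor
    · intro hp
      simp only [Finset.mem_image, Nat.mem_divisors, Prod.mk.injEq] at hp
      obtain ⟨c, ⟨⟨d, rfl⟩, -⟩, h1, h2⟩ := hp
      have hc : 0 < c := Nat.pos_of_ne_zero (by rintro rfl; simp at hk0)
      have hd : 0 < d := Nat.pos_of_ne_zero (by rintro rfl; simp at hk0)
      rw [Nat.mul_div_cancel_left _ hc] at h1
      have e1 : a + 1 = d := by omega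
      have e2 : b + 1 = c := by omega
      simp only [e1, e2]; ring
    · rintro hg hp
      exfalso; apply hp
      simp only [Finset.mem_image, Nat.mem_divisors, Prod.mk.injEq]
      refine ⟨b + 1, ⟨⟨a + 1, by rw [← hg]; ring⟩, hk0⟩, ?_, by omega⟩
      rw [← hg]; simp)
  convert h using 2 with k
  rw [Finset.sum_image]
  · congr 1
    rw [Int.cast_sum]
    refine Finset.sum_congr rfl fun b hb => ?_
    have : 0 < b := Nat.pos_of_mem_divisors hb
    have : b - 1 + 1 = b := by omega
    simp only [this]
  · intro b hb c hc h
    have h1 : 0 < b := Nat.pos_of_mem_divisors hb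
    have h2 : 0 < c := Nat.pos_of_mem_divisors hc
    simp only [Prod.mk.injEq] at h
    omega

lemma s1_fiber (n : ℤ) (hn : 3 ≤ n) (v : ℕ → ℝ)
    (hs : Summable fun p : ℕ × ℕ => v (Qz n p.1 p.2).toNat) :
    HasSum (fun k => ((A1 n k).ncard : ℝ) * v k) (∑' p : ℕ × ℕ, v (Qz n p.1 p.2).toNat) := by
  have h := fiber_hasSum (fun p => (Qz n p.1 p.2).toNat) (fun p => 1) v (by simpa using hs)
    (fun k => (A1_fin n hn k).toFinset) (by
    intro k _ p
    have hmem : p ∈ (A1_fin n hn k).toFinset ↔ Qz n p.1 p.2 = k := by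
      rw [Set.Finite.mem_toFinset]; rfl
    rw [hmem]
    have := Qz_pos n (by omega) p.1 p.2
    constructor
    · intro h; omega
    · intro h1 h2; omega)
  simp only [one_mul] at h
  convert h using 2 with k
  rw [Set.ncard_eq_toFinset_card _ (A1_fin n hn k)]
  simp

lemma s2_fiber (n : ℤ) (hn : 3 ≤ n) (v : ℕ → ℝ)
    (hs : Summable fun p : ℕ × ℕ => (if n - 2 ∣ (p.1 : ℤ) + 1 + p.2 then (1 : ℝ) else 0) * v (Qz n p.1 p.2 / (n - 2)).toNat) :
    HasSum (fun k => ((A2 n k).ncard : ℝ) * v k)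
      (∑' p : ℕ × ℕ, (if n - 2 ∣ (p.1 : ℤ) + 1 + p.2 then (1 : ℝ) else 0) * v (Qz n p.1 p.2 / (n - 2)).toNat) := by
  have h := fiber_hasSum (fun p => (Qz n p.1 p.2 / (n - 2)).toNat)
    (fun p => if n - 2 ∣ (p.1 : ℤ) + 1 + p.2 then (1 : ℝ) else 0) v hs
    (fun k => (A2_fin n hn k).toFinset) (by
    intro k _ p
    have hmem : p ∈ (A2_fin n hn k).toFinset ↔ ((n - 2) ∣ (p.1 : ℤ) + 1 + p.2) ∧ Qz n p.1 p.2 = (n - 2) * k := by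
      rw [Set.Finite.mem_toFinset]; rfl
    rw [hmem]
    have hp := Qz_pos n (by omega) p.1 p.2
    constructor
    · rintro ⟨h1, h2⟩
      rw [h2, Int.mul_ediv_cancel_left _ (by omega)]; simp
    · intro h1 h2
      rw [if_neg]
      intro hd
      apply h2
      refine ⟨hd, ?_⟩
      obtain ⟨c, hc⟩ := Qz_div n (n - 2) rfl p.1 p.2 hd
      rw [hc, Int.mul_ediv_cancel_left _ (by omega)] at h1
      rw [hc]
      have : 0 < c := by
        rw [hc] at hp
        exact pos_of_mul_pos_right hp (by omega)
      congr 1; omega)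
  convert h using 2 with k
  rw [Set.ncard_eq_toFinset_card _ (A2_fin n hn k)]
  rw [Finset.sum_congr rfl (g := fun _ => (1 : ℝ))]
  · simp
  · intro p hp
    rw [Set.Finite.mem_toFinset] at hp
    rw [if_pos hp.1]

open Real Filter Topology
open scoped NumberTheorySymbols

lemma fin2_cast (P R : ℕ) (G : ℕ → ℕ → ℤ) :
    ∑ u : Fin P, ∑ v : Fin R, ((G u v : ℤ) : ℝ) = ((∑ u ∈ Finset.range P, ∑ v ∈ Finset.range R, G u v : ℤ) : ℝ) := by
  push_cast
  rw [Finset.sum_range]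
  refine Finset.sum_congr rfl fun u _ => ?_
  rw [Finset.sum_range]

lemma cone_limit_int (n : ℤ) (hn : 0 ≤ n) (P : ℕ) (hP : 0 < P) (F : ℕ → ℕ → ℤ) (C : ℝ)
    (hC : ∀ x y, |((F x y : ℤ) : ℝ)| ≤ C) (hF : ∀ X Y u v, F (X * P + u) (Y * P + v) = F u v)
    (h0 : ∑ u ∈ Finset.range P, ∑ v ∈ Finset.range P, F u v = 0)
    (h1 : ∑ u ∈ Finset.range P, ∑ v ∈ Finset.range P, F u v * ((u : ℤ) + 1 + v) = 0) :
    Tendsto (fun h : ℝ => ∑' p : ℕ × ℕ, ((F p.1 p.2 : ℤ) : ℝ) * eQ n h 1 0 p.1 p.2) (𝓝[>] 0)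
      (𝓝 (((∑ u ∈ Finset.range P, ∑ v ∈ Finset.range P, F u v * (4 * ((u : ℤ) + 1) * v +
        n * (((u : ℤ) + 1) ^ 2 + (v : ℤ) ^ 2)) : ℤ) : ℝ) / (4 * P ^ 2))) := by
  have := cone_limit n (by exact_mod_cast hn) P hP (fun x y => ((F x y : ℤ) : ℝ)) C hC
    (by intro X Y u v; rw [hF]) (by rw [fin2_cast P P F, h0]; simp)
    (by
      have := fin2_cast P P (fun u v => F u v * ((u : ℤ) + 1 + v))
      rw [h1] at this
      push_cast at this
      simpa using this)
  rw [← fin2_cast P P (fun u v => F u v * (4 * ((u : ℤ) + 1) * v + n * (((u : ℤ) + 1) ^ 2 + (v : ℤ) ^ 2)))]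
  convert this using 3
  push_cast
  rfl

lemma odd_sum (N : ℕ) (G : ℤ → ℤ) (hper : ∀ x, G (x + N) = G x) (hodd : ∀ x, G (-x) = - G x) :
    ∑ b ∈ Finset.range N, G ((b : ℤ) + 1) = 0 := by
  have h1 := Finset.sum_range_reflect (fun b : ℕ => G ((b : ℤ) + 1)) N
  have h2 : ∑ j ∈ Finset.range N, G (((N - 1 - j : ℕ) : ℤ) + 1) = - ∑ j ∈ Finset.range N, G (j : ℤ) := by
    rw [← Finset.sum_neg_distrib]
    refine Finset.sum_congr rfl fun j hj => ?_
    rw [Finset.mem_range] at hj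
    rw [← hodd, ← hper (-(j : ℤ))]
    congr 1; omega
  rw [h2] at h1
  have h3 := Finset.sum_range_succ (fun b : ℕ => G (b : ℤ)) N
  rw [Finset.sum_range_succ'] at h3
  have h4 := hper 0
  rw [zero_add] at h4
  push_cast at h3
  rw [h4] at h3
  linarith

lemma jac_per (D : ℕ) (x : ℤ) (k : ℤ) : J(x + k * D | D) = J(x | D) := by
  rw [jacobiSym.mod_left, Int.add_mul_emod_self_right, ← jacobiSym.mod_left]

lemma jac_abs (x : ℤ) (D : ℕ) : |((J(x | D) : ℤ) : ℝ)| ≤ 1 := by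
  rcases jacobiSym.trichotomy x D with h | h | h <;> rw [h] <;> simp

lemma jac_even (D : ℕ) (hD : D % 4 = 1) (x : ℤ) : J(-x | D) = J(x | D) := by
  rw [jacobiSym.neg _ (by rw [Nat.odd_iff]; omega), ZMod.χ₄_nat_one_mod_four hD, one_mul]

lemma w_bound (q : ℕ) [NeZero q] (w : ZMod q → ℤ) (x : ZMod q) : |((w x : ℤ) : ℝ)| ≤ ∑ y, |((w y : ℤ) : ℝ)| :=
  Finset.single_le_sum (f := fun y => |((w y : ℤ) : ℝ)|) (fun _ _ => abs_nonneg _) (Finset.mem_univ x)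

/-- LHS limit -/
lemma lhs_lim (D q : ℕ) (hD4 : D % 4 = 1) (hq : Odd q) (w : ZMod q → ℤ) (hw : ∀ x, w (-x) = - w x) :
    Tendsto (fun z : ℝ => ∑' p : ℕ × ℕ, ((w (((p.1 + 1) * (p.2 + 1) : ℕ) : ZMod q) * J(((p.2 + 1 : ℕ) : ℤ) | D) : ℤ) : ℝ)
        * z ^ ((p.1 + 1) * (p.2 + 1))) (𝓝[<] 1)
      (𝓝 (((∑ a ∈ Finset.range q, ∑ b ∈ Finset.range (q * D),
        w (((a + 1) * (b + 1) : ℕ) : ZMod q) * J(((b + 1 : ℕ) : ℤ) | D) * (((a : ℤ) + 1) * ((b : ℤ) + 1)) : ℤ) : ℝ) / (q * (q * D)))) := by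
  have : NeZero q := ⟨hq.pos.ne'⟩
  have hDo : Odd D := by rw [Nat.odd_iff]; omega
  have h := lhs_limit q (q * D) hq.pos (hq.mul hDo)
    (fun a b => ((w (((a + 1) * (b + 1) : ℕ) : ZMod q) * J(((b + 1 : ℕ) : ℤ) | D) : ℤ) : ℝ))
    (∑ y, |((w y : ℤ) : ℝ)|) ?_ ?_ ?_ ?_ ?_
  · rw [← fin2_cast q (q * D) (fun a b => w (((a + 1) * (b + 1) : ℕ) : ZMod q) * J(((b + 1 : ℕ) : ℤ) | D) * (((a : ℤ) + 1) * ((b : ℤ) + 1)))]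
    convert h using 3
    · push_cast
      rfl
    · push_cast; rfl
  · intro x y
    rw [Int.cast_mul, abs_mul]
    calc _ ≤ |((w (((x + 1) * (y + 1) : ℕ) : ZMod q) : ℤ) : ℝ)| * 1 := by gcongr; exact jac_abs _ _
      _ ≤ _ := by rw [mul_one]; exact w_bound q w _
  · intro X a b
    simp
  · intro Y a b
    have e1 : J(((Y * (q * D) + b + 1 : ℕ) : ℤ) | D) = J(((b + 1 : ℕ) : ℤ) | D) := by
      rw [← jac_per D ((b + 1 : ℕ) : ℤ) (Y * q)]
      congr 1; push_cast; ring
    have e2 : (((a + 1) * (Y * (q * D) + b + 1) : ℕ) : ZMod q) = (((a + 1) * (b + 1) : ℕ) : ZMod q) := by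
      simp
    simp only [e1, e2]
  · intro b
    have := odd_sum q (fun x => w ((x : ZMod q) * ((b + 1 : ℕ) : ZMod q)) * J(((b + 1 : ℕ) : ℤ) | D))
      (by intro x; simp) (by intro x; simp [hw])
    have h2 := Finset.sum_range (fun a : ℕ => ((w (((a + 1) * (b + 1) : ℕ) : ZMod q) * J(((b + 1 : ℕ) : ℤ) | D) : ℤ) : ℝ)) (n := q)
    rw [← h2, ← Int.cast_sum]
    convert congrArg (Int.cast : ℤ → ℝ) this using 3
    all_goals first | (simp; done) | (push_cast; rfl)
  · intro a
    have := odd_sum (q * D) (fun x => w (((a + 1 : ℕ) : ZMod q) * (x : ZMod q)) * J(x | D))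
      (by
        intro x
        have := jac_per D x q
        simp only [Nat.cast_mul]
        rw [this]; simp) (by intro x; simp only [jac_even D hD4]; simp [hw])
    have h2 := Finset.sum_range (fun b : ℕ => ((w (((a + 1) * (b + 1) : ℕ) : ZMod q) * J(((b + 1 : ℕ) : ℤ) | D) : ℤ) : ℝ)) (n := q * D)
    rw [← h2, ← Int.cast_sum]
    convert congrArg (Int.cast : ℤ → ℝ) this using 3
    all_goals first | (simp; done) | (push_cast; rfl)

open Real Filter Topology
open scoped NumberTheorySymbols

def F1 (n : ℤ) (q : ℕ) (w : ZMod q → ℤ) (x y : ℕ) : ℤ := w ((Qz n x y : ℤ) : ZMod q)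

def F2 (n : ℤ) (q : ℕ) (w : ZMod q → ℤ) (mi : ZMod q) (x y : ℕ) : ℤ :=
  if n - 2 ∣ (x : ℤ) + 1 + y then w (mi * ((Qz n x y : ℤ) : ZMod q)) else 0

lemma Qz_per (n : ℤ) (q : ℕ) (X Y u v k l : ℕ) (hk : X = q * k) (hl : Y = q * l) :
    ((Qz n (X + u) (Y + v) : ℤ) : ZMod q) = ((Qz n u v : ℤ) : ZMod q) := by
  subst hk hl
  unfold Qz; push_cast; simp

lemma limit_identity (n : ℤ) (hn : 5 ≤ n) (hno : Odd n) (hns : ¬ IsSquare (n ^ 2 - 4)) [IsPrincipalIdealRing (RQ n)]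
    (D : ℕ) (hD : (D : ℤ) = n ^ 2 - 4) (m : ℕ) (hm : (m : ℤ) = n - 2) (q : ℕ) (hq : Odd q)
    (w : ZMod q → ℤ) (hw : ∀ x, w (-x) = - w x) (mi : ZMod q) (hmi : mi * (m : ZMod q) = 1)
    (c1 : ∑ u ∈ Finset.range q, ∑ v ∈ Finset.range q, F1 n q w u v = 0)
    (c2 : ∑ u ∈ Finset.range q, ∑ v ∈ Finset.range q, F1 n q w u v * ((u : ℤ) + 1 + v) = 0)
    (c3 : ∑ u ∈ Finset.range (q * m), ∑ v ∈ Finset.range (q * m), F2 n q w mi u v = 0)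
    (c4 : ∑ u ∈ Finset.range (q * m), ∑ v ∈ Finset.range (q * m), F2 n q w mi u v * ((u : ℤ) + 1 + v) = 0) :
    4 * (m : ℤ) ^ 2 * (∑ a ∈ Finset.range q, ∑ b ∈ Finset.range (q * D),
        w (((a + 1) * (b + 1) : ℕ) : ZMod q) * J(((b + 1 : ℕ) : ℤ) | D) * (((a : ℤ) + 1) * ((b : ℤ) + 1))) =
    D * ((m : ℤ) ^ 2 * (∑ u ∈ Finset.range q, ∑ v ∈ Finset.range q, F1 n q w u v * (4 * ((u : ℤ) + 1) * v +
        n * (((u : ℤ) + 1) ^ 2 + (v : ℤ) ^ 2))) +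
      ∑ u ∈ Finset.range (q * m), ∑ v ∈ Finset.range (q * m), F2 n q w mi u v * (4 * ((u : ℤ) + 1) * v +
        n * (((u : ℤ) + 1) ^ 2 + (v : ℤ) ^ 2))) := by
  have : NeZero q := ⟨hq.pos.ne'⟩
  have hn0 : 0 ≤ n := by omega
  have hm0 : 0 < m := by omega
  have hD4 : D % 4 = 1 := by
    obtain ⟨k, rfl⟩ := hno
    have : (D : ℤ) = 4 * (k * (k + 1)) - 3 := by rw [hD]; ring
    omega
  have hD0 : 0 < D := by omega
  set C := ∑ y, |((w y : ℤ) : ℝ)| with hC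
  have hCp : 0 ≤ C := Finset.sum_nonneg fun _ _ => abs_nonneg _
  have hF1b : ∀ x y, |((F1 n q w x y : ℤ) : ℝ)| ≤ C := fun x y => w_bound q w _
  have hF2b : ∀ x y, |((F2 n q w mi x y : ℤ) : ℝ)| ≤ C := by
    intro x y
    unfold F2
    split_ifs
    · exact w_bound q w _
    · simpa using hCp
  have l1 := cone_limit_int n hn0 q hq.pos (F1 n q w) C hF1b (by
    intro X Y u v
    unfold F1
    rw [Qz_per n q (X * q) (Y * q) u v X Y (mul_comm _ _) (mul_comm _ _)]) c1 c2
  have l2 := cone_limit_int n hn0 (q * m) (Nat.mul_pos hq.pos hm0) (F2 n q w mi) C hF2b (by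
    intro X Y u v
    unfold F2
    rw [Qz_per n q (X * (q * m)) (Y * (q * m)) u v (X * m) (Y * m) (by ring) (by ring)]
    congr 1
    have : ((X * (q * m) + u : ℕ) : ℤ) + 1 + ((Y * (q * m) + v : ℕ) : ℤ) = ((u : ℤ) + 1 + v) + (n - 2) * (X * q + Y * q) := by
      rw [← hm]; push_cast; ring
    rw [this]
    exact propext (dvd_add_left (dvd_mul_right _ _))) c3 c4
  have l0 := lhs_lim D q hD4 hq w hw
  have hsc : Tendsto (fun h : ℝ => h / √m) (𝓝[>] 0) (𝓝[>] 0) := by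
    have hsm : 0 < √(m : ℝ) := by positivity
    apply tendsto_nhdsWithin_of_tendsto_nhds_of_eventually_within
    · have : Tendsto (fun h : ℝ => h / √m) (𝓝 0) (𝓝 (0 / √m)) := Continuous.tendsto (by fun_prop) 0
      rw [zero_div] at this
      exact this.mono_left nhdsWithin_le_nhds
    · filter_upwards [self_mem_nhdsWithin] with h hh
      exact div_pos hh hsm
  have hz : Tendsto (fun h : ℝ => exp (-h ^ 2)) (𝓝[>] 0) (𝓝[<] 1) := by
    apply tendsto_nhdsWithin_of_tendsto_nhds_of_eventually_within
    · have : Tendsto (fun h : ℝ => exp (-h ^ 2)) (𝓝 0) (𝓝 (exp (-0 ^ 2))) := Continuous.tendsto (by fun_prop) 0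
      simp only [ne_eq, OfNat.ofNat_ne_zero, not_false_eq_true, zero_pow, neg_zero, exp_zero] at this
      exact this.mono_left nhdsWithin_le_nhds
    · filter_upwards [self_mem_nhdsWithin] with h hh
      have : 0 < h ^ 2 := pow_pos hh 2
      rw [Set.mem_Iio, exp_lt_one_iff]; linarith
  have r := l1.add (l2.comp hsc)
  have l := l0.comp hz
  have heq : ∀ h : ℝ, 0 < h →
      ∑' p : ℕ × ℕ, ((w (((p.1 + 1) * (p.2 + 1) : ℕ) : ZMod q) * J(((p.2 + 1 : ℕ) : ℤ) | D) : ℤ) : ℝ)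
        * exp (-h ^ 2) ^ ((p.1 + 1) * (p.2 + 1)) =
      ∑' p : ℕ × ℕ, ((F1 n q w p.1 p.2 : ℤ) : ℝ) * eQ n h 1 0 p.1 p.2 +
      ∑' p : ℕ × ℕ, ((F2 n q w mi p.1 p.2 : ℤ) : ℝ) * eQ n (h / √m) 1 0 p.1 p.2 := by
    intro h hh
    have hsm : 0 < √(m : ℝ) := by positivity
    have hn0r : (0 : ℝ) ≤ (n : ℝ) := by exact_mod_cast hn0
    set z := exp (-h ^ 2) with hzdef
    have hz0 : 0 < z := exp_pos _
    have hz1 : z < 1 := by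
      have : 0 < h ^ 2 := pow_pos hh 2
      rw [hzdef, exp_lt_one_iff]; linarith
    have hw0 : w 0 = 0 := by
      have := hw 0
      rw [neg_zero] at this; omega
    set v : ℕ → ℝ := fun k => ((w (k : ZMod q) : ℤ) : ℝ) * z ^ k with hv
    have hv0 : v 0 = 0 := by simp [hv, hw0]
    -- LHS
    have e0 : ∀ p : ℕ × ℕ, ((w (((p.1 + 1) * (p.2 + 1) : ℕ) : ZMod q) * J(((p.2 + 1 : ℕ) : ℤ) | D) : ℤ) : ℝ)
        * z ^ ((p.1 + 1) * (p.2 + 1)) = ((J(((p.2 + 1 : ℕ) : ℤ) | D) : ℤ) : ℝ) * v ((p.1 + 1) * (p.2 + 1)) := by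
      intro p; rw [hv, Int.cast_mul]; ring
    have s0 := lhs_summable (fun a b => ((w (((a + 1) * (b + 1) : ℕ) : ZMod q) * J(((b + 1 : ℕ) : ℤ) | D) : ℤ) : ℝ)) C (by
      intro x y
      rw [Int.cast_mul, abs_mul]
      calc _ ≤ |((w (((x + 1) * (y + 1) : ℕ) : ZMod q) : ℤ) : ℝ)| * 1 := by gcongr; exact jac_abs _ _
        _ ≤ _ := by rw [mul_one]; exact w_bound q w _) z hz0 hz1
    simp only [e0] at s0 ⊢
    have H0 := lhs_fiber D v hv0 s0
    have e1 : ∀ p : ℕ × ℕ, ((F1 n q w p.1 p.2 : ℤ) : ℝ) * eQ n h 1 0 p.1 p.2 = v (Qz n p.1 p.2).toNat := by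
      intro p
      have hcast : (((Qz n p.1 p.2).toNat : ℕ) : ZMod q) = ((Qz n p.1 p.2 : ℤ) : ZMod q) := by
        have := Int.toNat_of_nonneg (Qz_pos n hn0 p.1 p.2).le
        rw [← Int.cast_natCast, this]
      rw [hv, eQ_pow n hn0]; simp only [hcast]; rfl
    have s1 := weighted_summable n h 1 0 hn0r zero_le_one le_rfl hh (fun x y => ((F1 n q w x y : ℤ) : ℝ)) C hF1b
    simp only [e1] at s1 ⊢
    have H1 := s1_fiber n (by omega) v s1
    have e2 : ∀ p : ℕ × ℕ, ((F2 n q w mi p.1 p.2 : ℤ) : ℝ) * eQ n (h / √m) 1 0 p.1 p.2 =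
        (if n - 2 ∣ (p.1 : ℤ) + 1 + p.2 then (1 : ℝ) else 0) * v (Qz n p.1 p.2 / (n - 2)).toNat := by
      intro p
      unfold F2
      split_ifs with hd
      · have hdd := Qz_div n m hm p.1 p.2 (by rw [hm]; exact hd)
        rw [eQ_pow2 n hn0 m hm0 h p.1 p.2 hdd, hv, ← hm, one_mul]
        obtain ⟨c, hc⟩ := hdd
        have hc0 : 0 ≤ c := by
          have hp := Qz_pos n hn0 p.1 p.2
          rw [hc] at hp
          exact (pos_of_mul_pos_right hp (by positivity)).le
        have hdiv : Qz n p.1 p.2 / (m : ℤ) = c := by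
          rw [hc, Int.mul_ediv_cancel_left _ (by omega)]
        have hcast : ((c.toNat : ℕ) : ZMod q) = mi * ((Qz n p.1 p.2 : ℤ) : ZMod q) := by
          have := Int.toNat_of_nonneg hc0
          rw [← Int.cast_natCast, this, hc]
          push_cast
          rw [← mul_assoc, hmi, one_mul]
        simp only [hdiv, hcast]
        rfl
      · simp
    have s2 := weighted_summable n (h / √m) 1 0 hn0r zero_le_one le_rfl (div_pos hh hsm)
      (fun x y => ((F2 n q w mi x y : ℤ) : ℝ)) C hF2b
    simp only [e2] at s2 ⊢
    have H2 := s2_fiber n (by omega) v s2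
    have H := H1.add H2
    refine H0.unique ?_
    convert H using 2 with k
    rcases Nat.eq_zero_or_pos k with rfl | hk
    · simp [hv0]
    · rw [counting n hn hno hns D hD k hk]
      push_cast; ring
  have hlim : Tendsto (fun h : ℝ => ∑' p : ℕ × ℕ, ((F1 n q w p.1 p.2 : ℤ) : ℝ) * eQ n h 1 0 p.1 p.2 +
      ∑' p : ℕ × ℕ, ((F2 n q w mi p.1 p.2 : ℤ) : ℝ) * eQ n (h / √m) 1 0 p.1 p.2) (𝓝[>] 0) _ :=
    Tendsto.congr' (by
      filter_upwards [self_mem_nhdsWithin] with h hh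
      exact heq h hh) l
  have := tendsto_nhds_unique hlim r
  have hqr : (q : ℝ) ≠ 0 := by have := hq.pos; positivity
  have hmr : (m : ℝ) ≠ 0 := by positivity
  have hDr : (D : ℝ) ≠ 0 := by positivity
  set L := ∑ a ∈ Finset.range q, ∑ b ∈ Finset.range (q * D),
        w (((a + 1) * (b + 1) : ℕ) : ZMod q) * J(((b + 1 : ℕ) : ℤ) | D) * (((a : ℤ) + 1) * ((b : ℤ) + 1))
  set T1 := ∑ u ∈ Finset.range q, ∑ v ∈ Finset.range q, F1 n q w u v * (4 * ((u : ℤ) + 1) * v +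
        n * (((u : ℤ) + 1) ^ 2 + (v : ℤ) ^ 2))
  set T2 := ∑ u ∈ Finset.range (q * m), ∑ v ∈ Finset.range (q * m), F2 n q w mi u v * (4 * ((u : ℤ) + 1) * v +
        n * (((u : ℤ) + 1) ^ 2 + (v : ℤ) ^ 2))
  clear_value L T1 T2
  push_cast at this
  field_simp at this
  have h2 : 4 * (m : ℝ) ^ 2 * L = D * (m ^ 2 * T1 + T2) := by linarith
  exact_mod_cast h2

open Real Filter Topology
open scoped NumberTheorySymbols

lemma range_mul_split (q m : ℕ) (f : ℕ → ℤ) :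
    ∑ x ∈ Finset.range (q * m), f x = ∑ i ∈ Finset.range m, ∑ u ∈ Finset.range q, f (q * i + u) := by
  induction m with
  | zero => simp
  | succ m ih => rw [Nat.mul_succ, Finset.sum_range_add, ih, Finset.sum_range_succ]

lemma ind_iff (q m σ κ s i j : ℕ) (hco : Nat.Coprime q m) (hκ : κ < m) (hs : q * κ + σ = m * s)
    (hi : i < m) (hj : j < m) :
    ((m : ℤ) ∣ (σ : ℤ) + q * ((i : ℤ) + j)) ↔ j = if i ≤ κ then κ - i else κ + m - i := by
  have h1 : ((m : ℤ) ∣ (σ : ℤ) + q * ((i : ℤ) + j)) ↔ (m : ℤ) ∣ (i : ℤ) + j - κ := by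
    have hs' : (σ : ℤ) = m * s - q * κ := by
      have : (q : ℤ) * κ + σ = m * s := by exact_mod_cast hs
      linarith
    have : (σ : ℤ) + q * ((i : ℤ) + j) = m * s + q * ((i : ℤ) + j - κ) := by rw [hs']; ring
    rw [this, dvd_add_right (dvd_mul_right _ _)]
    constructor
    · intro h
      exact IsCoprime.dvd_of_dvd_mul_left (Nat.isCoprime_iff_coprime.mpr hco.symm) h
    · intro h; exact Dvd.dvd.mul_left h _
  rw [h1]
  constructor
  · rintro ⟨k, hk⟩
    have hk1 : k < 2 := by
      by_contra hc
      have : (m : ℤ) * 2 ≤ m * k := by nlinarith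
      omega
    have hk2 : -1 < k := by
      by_contra hc
      have : (m : ℤ) * k ≤ m * (-1) := by nlinarith
      omega
    have : k = 0 ∨ k = 1 := by omega
    rcases this with rfl | rfl
    · rw [if_pos (by omega)]; omega
    · rw [if_neg (by omega)]; omega
  · intro h
    split_ifs at h with hik
    · exact ⟨0, by omega⟩
    · exact ⟨1, by omega⟩

lemma row_sum (q m σ κ s i : ℕ) (hco : Nat.Coprime q m) (hκ : κ < m) (hs : q * κ + σ = m * s)
    (hi : i < m) (ψ : ℕ → ℤ) :
    ∑ j ∈ Finset.range m, (if ((m : ℤ) ∣ (σ : ℤ) + q * ((i : ℤ) + j)) then ψ (i + j) else 0) =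
      if i ≤ κ then ψ κ else ψ (κ + m) := by
  set j0 := if i ≤ κ then κ - i else κ + m - i with hj0
  have hj0m : j0 ∈ Finset.range m := by
    rw [Finset.mem_range, hj0]; split_ifs <;> omega
  rw [Finset.sum_congr rfl (g := fun j => if j = j0 then ψ (i + j0) else 0)]
  · rw [Finset.sum_ite_eq' (Finset.range m) j0, if_pos hj0m]
    rw [hj0]
    split_ifs with h
    · congr 1; omega
    · congr 1; omega
  · intro j hj
    rw [Finset.mem_range] at hj
    have := ind_iff q m σ κ s i j hco hκ hs hi hj
    by_cases h : j = j0
    · rw [if_pos (this.mpr h), if_pos h, h]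
    · rw [if_neg (fun h' => h (this.mp h')), if_neg h]

lemma sum_step (m κ : ℕ) (hκ : κ < m) (a b : ℤ) :
    ∑ i ∈ Finset.range m, (if i ≤ κ then a else b) = (κ + 1) * a + (m - κ - 1) * b := by
  obtain ⟨k, rfl⟩ := Nat.exists_eq_add_of_lt hκ
  rw [show κ + k + 1 = (κ + 1) + k by ring, Finset.sum_range_add]
  rw [Finset.sum_congr rfl (g := fun _ => a), Finset.sum_congr (s₁ := Finset.range k) rfl (g := fun _ => b)]
  · simp only [Finset.sum_const, Finset.card_range, nsmul_eq_mul]; push_cast; ring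
  · intro i hi; rw [if_neg (by omega)]
  · intro i hi; rw [Finset.mem_range] at hi; rw [if_pos (by omega)]

lemma full_sum (q m σ κ s : ℕ) (hco : Nat.Coprime q m) (hκ : κ < m) (hs : q * κ + σ = m * s)
    (ψ : ℕ → ℤ) :
    ∑ i ∈ Finset.range m, ∑ j ∈ Finset.range m,
      (if ((m : ℤ) ∣ (σ : ℤ) + q * ((i : ℤ) + j)) then ψ (i + j) else 0) =
      (κ + 1) * ψ κ + (m - κ - 1) * ψ (κ + m) := by
  rw [← sum_step m κ hκ]
  apply Finset.sum_congr rfl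
  intro i hi
  exact row_sum q m σ κ s i hco hκ hs (Finset.mem_range.mp hi) ψ

lemma row_one (q m σ κ s : ℕ) (hco : Nat.Coprime q m) (hκ : κ < m) (hs : q * κ + σ = m * s)
    (g : ℕ → ℤ) :
    ∑ i ∈ Finset.range m, ∑ j ∈ Finset.range m,
      (if ((m : ℤ) ∣ (σ : ℤ) + q * ((i : ℤ) + j)) then g i else 0) = ∑ i ∈ Finset.range m, g i := by
  apply Finset.sum_congr rfl
  intro i hi
  rw [row_sum q m σ κ s i hco hκ hs (Finset.mem_range.mp hi) (fun _ => g i)]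
  simp

lemma col_one (q m σ κ s : ℕ) (hco : Nat.Coprime q m) (hκ : κ < m) (hs : q * κ + σ = m * s)
    (g : ℕ → ℤ) :
    ∑ i ∈ Finset.range m, ∑ j ∈ Finset.range m,
      (if ((m : ℤ) ∣ (σ : ℤ) + q * ((i : ℤ) + j)) then g j else 0) = ∑ i ∈ Finset.range m, g i := by
  rw [Finset.sum_comm, ← row_one q m σ κ s hco hκ hs g]
  simp only [add_comm]

lemma inner0 (q m σ κ s : ℕ) (hco : Nat.Coprime q m) (hκ : κ < m) (hs : q * κ + σ = m * s) :
    ∑ i ∈ Finset.range m, ∑ j ∈ Finset.range m,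
      (if ((m : ℤ) ∣ (σ : ℤ) + q * ((i : ℤ) + j)) then (1 : ℤ) else 0) = m := by
  have := full_sum q m σ κ s hco hκ hs (fun _ => 1)
  rw [this]; ring

lemma inner1 (q m σ κ s : ℕ) (hco : Nat.Coprime q m) (hκ : κ < m) (hs : q * κ + σ = m * s) :
    ∑ i ∈ Finset.range m, ∑ j ∈ Finset.range m,
      (if ((m : ℤ) ∣ (σ : ℤ) + q * ((i : ℤ) + j)) then ((σ : ℤ) + q * ((i : ℤ) + j)) else 0) =
      m * (m * q - q + σ) := by
  have := full_sum q m σ κ s hco hκ hs (fun k => (σ : ℤ) + q * (k : ℤ))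
  push_cast at this
  rw [this]
  have hs' : (σ : ℤ) = m * s - q * κ := by
    have : (q : ℤ) * κ + σ = m * s := by exact_mod_cast hs
    linarith
  rw [hs']; ring

lemma inner2 (q m σ κ s : ℕ) (hco : Nat.Coprime q m) (hκ : κ < m) (hs : q * κ + σ = m * s) :
    ∑ i ∈ Finset.range m, ∑ j ∈ Finset.range m,
      (if ((m : ℤ) ∣ (σ : ℤ) + q * ((i : ℤ) + j)) then ((σ : ℤ) + q * ((i : ℤ) + j)) ^ 2 else 0) =
      (m : ℤ) ^ 2 * (-m * s ^ 2 + m * s * q + m * q ^ 2 + 2 * s * σ - 2 * s * q + σ * q - q ^ 2) := by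
  have := full_sum q m σ κ s hco hκ hs (fun k => ((σ : ℤ) + q * (k : ℤ)) ^ 2)
  push_cast at this
  rw [this]
  have hs' : (σ : ℤ) = m * s - q * κ := by
    have : (q : ℤ) * κ + σ = m * s := by exact_mod_cast hs
    linarith
  rw [hs']; ring

lemma sum_id (m : ℕ) : 2 * ∑ i ∈ Finset.range m, (i : ℤ) = m * (m - 1) := by
  induction m with
  | zero => simp
  | succ m ih => rw [Finset.sum_range_succ, mul_add, ih]; push_cast; ring

lemma inner3 (q m u v κ s : ℕ) (hco : Nat.Coprime q m) (hκ : κ < m) (hs : q * κ + (u + 1 + v) = m * s) :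
    ∑ i ∈ Finset.range m, ∑ j ∈ Finset.range m,
      (if ((m : ℤ) ∣ ((u + 1 + v : ℕ) : ℤ) + q * ((i : ℤ) + j)) then
        (((u : ℤ) + 1 + q * i) ^ 2 + ((v : ℤ) + q * j) ^ 2) else 0) =
      m * (((u : ℤ) + 1) ^ 2 + (v : ℤ) ^ 2) + q * m * (m - 1) * (u + 1 + v) +
        2 * q ^ 2 * ∑ i ∈ Finset.range m, (i : ℤ) ^ 2 := by
  have h1 := row_one q m _ κ s hco hκ hs (fun i => ((u : ℤ) + 1 + q * i) ^ 2)
  have h2 := col_one q m _ κ s hco hκ hs (fun i => ((v : ℤ) + q * i) ^ 2)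
  have h3 : ∀ c : ℤ, ∑ i ∈ Finset.range m, (c + q * (i : ℤ)) ^ 2 = m * c ^ 2 + q * m * (m - 1) * c
      + q ^ 2 * ∑ i ∈ Finset.range m, (i : ℤ) ^ 2 := by
    intro c
    have : ∀ i : ℕ, (c + q * (i : ℤ)) ^ 2 = c ^ 2 + 2 * q * c * i + q ^ 2 * (i : ℤ) ^ 2 := fun i => by ring
    simp only [this, Finset.sum_add_distrib, ← Finset.mul_sum, Finset.sum_const, Finset.card_range,
      nsmul_eq_mul]
    have := sum_id m
    linear_combination q * c * this
  rw [h3] at h1 h2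
  have h4 : ∀ i j : ℕ, (if ((m : ℤ) ∣ ((u + 1 + v : ℕ) : ℤ) + q * ((i : ℤ) + j)) then
        (((u : ℤ) + 1 + q * i) ^ 2 + ((v : ℤ) + q * j) ^ 2) else 0) =
        (if ((m : ℤ) ∣ ((u + 1 + v : ℕ) : ℤ) + q * ((i : ℤ) + j)) then ((u : ℤ) + 1 + q * i) ^ 2 else 0) +
        (if ((m : ℤ) ∣ ((u + 1 + v : ℕ) : ℤ) + q * ((i : ℤ) + j)) then ((v : ℤ) + q * j) ^ 2 else 0) := by
    intro i j; split_ifs <;> simp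
  simp only [h4, Finset.sum_add_distrib]
  rw [h1, h2]; ring

lemma F2_split (n : ℤ) (q m : ℕ) (hm : (m : ℤ) = n - 2) (w : ZMod q → ℤ) (mi : ZMod q) (W : ℕ → ℕ → ℤ) :
    ∑ x ∈ Finset.range (q * m), ∑ y ∈ Finset.range (q * m), F2 n q w mi x y * W x y =
    ∑ u ∈ Finset.range q, ∑ v ∈ Finset.range q, w (mi * ((Qz n u v : ℤ) : ZMod q)) *
      ∑ i ∈ Finset.range m, ∑ j ∈ Finset.range m,
        (if ((m : ℤ) ∣ ((u + 1 + v : ℕ) : ℤ) + q * ((i : ℤ) + j)) then W (q * i + u) (q * j + v) else 0) := by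
  rw [range_mul_split]
  simp_rw [range_mul_split q m]
  rw [Finset.sum_comm]
  apply Finset.sum_congr rfl
  intro u _
  have : ∀ i ∈ Finset.range m, ∑ j ∈ Finset.range m, ∑ v ∈ Finset.range q,
      F2 n q w mi (q * i + u) (q * j + v) * W (q * i + u) (q * j + v) =
      ∑ v ∈ Finset.range q, ∑ j ∈ Finset.range m,
      F2 n q w mi (q * i + u) (q * j + v) * W (q * i + u) (q * j + v) := fun i _ => Finset.sum_comm
  rw [Finset.sum_congr rfl this, Finset.sum_comm]
  apply Finset.sum_congr rfl
  intro v _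
  rw [Finset.mul_sum]
  apply Finset.sum_congr rfl
  intro i _
  rw [Finset.mul_sum]
  apply Finset.sum_congr rfl
  intro j _
  unfold F2
  rw [Qz_per n q (q * i) (q * j) u v i j rfl rfl, ← hm]
  have : ((q * i + u : ℕ) : ℤ) + 1 + ((q * j + v : ℕ) : ℤ) = ((u + 1 + v : ℕ) : ℤ) + q * ((i : ℤ) + j) := by
    push_cast; ring
  rw [this]
  split_ifs <;> simp

lemma master (n : ℤ) (hn : 5 ≤ n) (hno : Odd n) (hns : ¬ IsSquare (n ^ 2 - 4)) [IsPrincipalIdealRing (RQ n)]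
    (D : ℕ) (hD : (D : ℤ) = n ^ 2 - 4) (m : ℕ) (hm : (m : ℤ) = n - 2) (q : ℕ) (hq : Odd q)
    (hco : Nat.Coprime q m)
    (w : ZMod q → ℤ) (hw : ∀ x, w (-x) = - w x) (mi : ZMod q) (hmi : mi * (m : ZMod q) = 1)
    (S : ℕ → ℕ → ℕ) (hS : ∀ u < q, ∀ v < q, ∃ κ < m, q * κ + (u + 1 + v) = m * S u v)
    (c1 : ∑ u ∈ Finset.range q, ∑ v ∈ Finset.range q, w ((Qz n u v : ℤ) : ZMod q) = 0)
    (c2 : ∑ u ∈ Finset.range q, ∑ v ∈ Finset.range q, w ((Qz n u v : ℤ) : ZMod q) * ((u : ℤ) + 1 + v) = 0)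
    (c3 : ∑ u ∈ Finset.range q, ∑ v ∈ Finset.range q, w (mi * ((Qz n u v : ℤ) : ZMod q)) = 0)
    (c4 : ∑ u ∈ Finset.range q, ∑ v ∈ Finset.range q, w (mi * ((Qz n u v : ℤ) : ZMod q)) * ((u : ℤ) + 1 + v) = 0) :
    4 * (∑ a ∈ Finset.range q, ∑ b ∈ Finset.range (q * D),
        w (((a + 1) * (b + 1) : ℕ) : ZMod q) * J(((b + 1 : ℕ) : ℤ) | D) * (((a : ℤ) + 1) * ((b : ℤ) + 1))) =
    D * (∑ u ∈ Finset.range q, ∑ v ∈ Finset.range q,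
      (w ((Qz n u v : ℤ) : ZMod q) * (4 * ((u : ℤ) + 1) * v + n * (((u : ℤ) + 1) ^ 2 + (v : ℤ) ^ 2)) +
       w (mi * ((Qz n u v : ℤ) : ZMod q)) * (((u : ℤ) + 1) ^ 2 + (v : ℤ) ^ 2 + 4 * S u v * ((u : ℤ) + 1 + v)
         + 2 * q * (m - 2) * S u v - 2 * m * (S u v : ℤ) ^ 2))) := by
  have d3 : ∑ u ∈ Finset.range (q * m), ∑ v ∈ Finset.range (q * m), F2 n q w mi u v = 0 := by
    have := F2_split n q m hm w mi (fun _ _ => 1)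
    simp only [mul_one] at this
    rw [this]
    have h0 : (m : ℤ) * ∑ u ∈ Finset.range q, ∑ v ∈ Finset.range q, w (mi * ((Qz n u v : ℤ) : ZMod q)) = 0 := by
      rw [c3, mul_zero]
    refine Eq.trans ?_ h0
    rw [Finset.mul_sum]
    apply Finset.sum_congr rfl; intro u hu
    rw [Finset.mul_sum]
    apply Finset.sum_congr rfl; intro v hv
    obtain ⟨κ, h1, h2⟩ := hS u (Finset.mem_range.mp hu) v (Finset.mem_range.mp hv)
    rw [inner0 q m _ κ _ hco h1 h2, mul_comm]
  have d4 : ∑ u ∈ Finset.range (q * m), ∑ v ∈ Finset.range (q * m), F2 n q w mi u v * ((u : ℤ) + 1 + v) = 0 := by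
    rw [F2_split n q m hm w mi (fun u v => (u : ℤ) + 1 + v)]
    have : (m : ℤ) * (m * q - q) * ∑ u ∈ Finset.range q, ∑ v ∈ Finset.range q, w (mi * ((Qz n u v : ℤ) : ZMod q)) +
      m * ∑ u ∈ Finset.range q, ∑ v ∈ Finset.range q, w (mi * ((Qz n u v : ℤ) : ZMod q)) * ((u : ℤ) + 1 + v) = 0 := by
      rw [c3, c4]; ring
    refine Eq.trans ?_ this
    simp only [Finset.mul_sum (Finset.range q), ← Finset.sum_add_distrib]
    apply Finset.sum_congr rfl; intro u hu
    apply Finset.sum_congr rfl; intro v hv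
    obtain ⟨κ, h1, h2⟩ := hS u (Finset.mem_range.mp hu) v (Finset.mem_range.mp hv)
    have h3 := inner1 q m _ κ _ hco h1 h2
    have h4 : ∀ i j : ℕ, ((q * i + u : ℕ) : ℤ) + 1 + ((q * j + v : ℕ) : ℤ) = ((u + 1 + v : ℕ) : ℤ) + q * ((i : ℤ) + j) := by
      intro i j; push_cast; ring
    simp only [h4]
    rw [h3]; push_cast; ring
  have d5 : ∑ u ∈ Finset.range (q * m), ∑ v ∈ Finset.range (q * m), F2 n q w mi u v * (4 * ((u : ℤ) + 1) * v +
        n * (((u : ℤ) + 1) ^ 2 + (v : ℤ) ^ 2)) = (m : ℤ) ^ 2 * ∑ u ∈ Finset.range q, ∑ v ∈ Finset.range q,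
       w (mi * ((Qz n u v : ℤ) : ZMod q)) * (((u : ℤ) + 1) ^ 2 + (v : ℤ) ^ 2 + 4 * S u v * ((u : ℤ) + 1 + v)
         + 2 * q * (m - 2) * S u v - 2 * m * (S u v : ℤ) ^ 2) := by
    rw [F2_split n q m hm w mi (fun u v => (4 * ((u : ℤ) + 1) * v + n * (((u : ℤ) + 1) ^ 2 + (v : ℤ) ^ 2)))]
    set C := ∑ i ∈ Finset.range m, (i : ℤ) ^ 2 with hC
    have : ((m : ℤ) ^ 2 * (2 * m * q ^ 2 - 2 * q ^ 2) + m * (2 * q ^ 2 * C)) *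
      ∑ u ∈ Finset.range q, ∑ v ∈ Finset.range q, w (mi * ((Qz n u v : ℤ) : ZMod q)) +
      ((m : ℤ) ^ 2 * (2 * q + q * (m - 1))) * ∑ u ∈ Finset.range q, ∑ v ∈ Finset.range q, w (mi * ((Qz n u v : ℤ) : ZMod q)) * ((u : ℤ) + 1 + v) = 0 := by
      rw [c3, c4]; ring
    refine Eq.trans ?_ (add_zero ((m : ℤ) ^ 2 * _))
    refine Eq.trans ?_ (congrArg _ this)
    simp only [Finset.mul_sum (Finset.range q), ← Finset.sum_add_distrib]
    apply Finset.sum_congr rfl; intro u hu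
    apply Finset.sum_congr rfl; intro v hv
    obtain ⟨κ, h1, h2⟩ := hS u (Finset.mem_range.mp hu) v (Finset.mem_range.mp hv)
    have h3 := inner2 q m _ κ _ hco h1 h2
    have h3' := inner3 q m u v κ _ hco h1 h2
    have h4 : ∑ i ∈ Finset.range m, ∑ j ∈ Finset.range m,
        (if ((m : ℤ) ∣ ((u + 1 + v : ℕ) : ℤ) + q * ((i : ℤ) + j)) then
          (4 * (((q * i + u : ℕ) : ℤ) + 1) * ((q * j + v : ℕ) : ℤ) + n * ((((q * i + u : ℕ) : ℤ) + 1) ^ 2 + (((q * j + v : ℕ) : ℤ)) ^ 2)) else 0)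
        = 2 * (∑ i ∈ Finset.range m, ∑ j ∈ Finset.range m,
      (if ((m : ℤ) ∣ ((u + 1 + v : ℕ) : ℤ) + q * ((i : ℤ) + j)) then (((u + 1 + v : ℕ) : ℤ) + q * ((i : ℤ) + j)) ^ 2 else 0))
       + m * (∑ i ∈ Finset.range m, ∑ j ∈ Finset.range m,
      (if ((m : ℤ) ∣ ((u + 1 + v : ℕ) : ℤ) + q * ((i : ℤ) + j)) then
        (((u : ℤ) + 1 + q * i) ^ 2 + ((v : ℤ) + q * j) ^ 2) else 0)) := by
      simp only [Finset.mul_sum, ← Finset.sum_add_distrib]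
      apply Finset.sum_congr rfl; intro i _
      apply Finset.sum_congr rfl; intro j _
      have hn' : n = m + 2 := by omega
      split_ifs
      · rw [hn']; push_cast; ring
      · simp
    rw [h4, h3, h3']; push_cast; ring
  have key := limit_identity n hn hno hns D hD m hm q hq w hw mi hmi c1 c2 d3 d4
  rw [d5] at key
  have hm0 : (m : ℤ) ^ 2 ≠ 0 := by
    have : (m : ℤ) ≠ 0 := by omega
    positivity
  apply mul_left_cancel₀ hm0
  simp only [Finset.sum_add_distrib]
  simp only [F1] at key
  linear_combination key


def ksum (f : ℕ → ℕ) (k : ℕ) : ℕ := Nat.rec 0 (fun i s => Nat.add s (f i)) k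

def tb (tab x : ℕ) : ℕ := Nat.mod (Nat.div tab (Nat.pow 64 x)) 64

/-- residue of the form value -/
def kQ (q n0 u v : ℕ) : ℕ :=
  Nat.mod (Nat.add (Nat.mul (Nat.add u 1) (Nat.add (Nat.add u 1) (Nat.mul n0 v))) (Nat.mul v v)) q

def kS (q mi u v : ℕ) : ℕ :=
  Nat.add (Nat.mod (Nat.sub (Nat.add (Nat.mul mi (Nat.add (Nat.add u 1) v)) q) 1) q) 1

def kD (q : ℕ) (f : ℕ → ℕ → ℕ) : ℕ := ksum (fun u => ksum (f u) q) q

def kE1 (q tab n0 mi : ℕ) (g : ℕ → ℕ → ℕ) : ℕ :=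
  kD q (fun u v => Nat.mul (tb tab (Nat.mod (Nat.mul mi (kQ q n0 u v)) q)) (g u v))

def kN (u v : ℕ) : ℕ := Nat.add (Nat.mul (Nat.add u 1) (Nat.add u 1)) (Nat.mul v v)

def kA2 (q r mi u v : ℕ) : ℕ :=
  Nat.add (kN u v) (Nat.mul (Nat.mul 4 (kS q mi u v))
    (Nat.add (Nat.add (Nat.add u 1) v) (Nat.mul q (Nat.sub r 1))))

def kB2 (q mi u v : ℕ) : ℕ := Nat.mul (Nat.mul 2 (kS q mi u v)) (Nat.sub q (kS q mi u v))

def kA1 (u v : ℕ) : ℕ := Nat.add (Nat.mul (Nat.mul 4 (Nat.add u 1)) v) (Nat.mul 2 (kN u v))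

def kσ (u v : ℕ) : ℕ := Nat.add (Nat.add u 1) v

def kOne (_ _ : ℕ) : ℕ := 1

def tab105 : ℕ := 851947785398934595605141736365786628503537579658940568521384728531549683609515602712470738486099409174844670170668197599613246242226414417550616765779890696720643847530507253693657212302221

def tab91 : ℕ := 132468771178107486997478362967370281992676932045725367658997732378643246103337370417648175336782397458335534174530443040323059944590436952872189956878181126056278437

set_option maxRecDepth 100000

structure ClassCheck (q r tab n0 mi a0 b0 : ℕ) : Prop where
  c1 : kE1 q tab n0 1 kOne = r * kD q kOne
  c2 : kE1 q tab n0 1 kσ = r * kD q kσ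
  c3 : kE1 q tab n0 mi kOne = r * kD q kOne
  c4 : kE1 q tab n0 mi kσ = r * kD q kσ
  hA : (kE1 q tab n0 1 kA1 + kE1 q tab n0 mi (kA2 q r mi)) % r = a0
  hB : (kE1 q tab n0 1 kN + kE1 q tab n0 mi (kB2 q mi)) % r = b0

def kBad (q r tab a b : ℕ) : ℕ :=
  cond (Nat.beq (Nat.mod (tb tab (Nat.mod (Nat.mul a b) q)) r) (Nat.mod (Nat.mul (tb tab a) (tb tab b)) r)) 0 1

def kOdd (q r tab a : ℕ) : ℕ :=
  cond (Nat.beq (Nat.add (tb tab a) (tb tab (Nat.mod (Nat.sub q a) q))) (Nat.mul 2 r)) 0 1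

structure TabCheck (q r tab : ℕ) : Prop where
  mul : kD q (kBad q r tab) = 0
  odd : ksum (kOdd q r tab) q = 0
  sum : ksum (fun a => (a + 1) * tb tab ((a + 1) % q)) q % r = 0

lemma tc105 : TabCheck 105 13 tab105 := by constructor <;> decide +kernel
lemma tc91 : TabCheck 91 37 tab91 := by constructor <;> decide +kernel
lemma cc1 : ClassCheck 105 13 tab105 21 94 9 5 := by constructor <;> decide +kernel
lemma cc2 : ClassCheck 105 13 tab105 24 43 10 6 := by constructor <;> decide +kernel
lemma cc3 : ClassCheck 105 13 tab105 39 88 6 6 := by constructor <;> decide +kernel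
lemma cc4 : ClassCheck 105 13 tab105 66 64 5 6 := by constructor <;> decide +kernel
lemma cc5 : ClassCheck 105 13 tab105 81 4 1 6 := by constructor <;> decide +kernel
lemma cc6 : ClassCheck 105 13 tab105 84 73 11 5 := by constructor <;> decide +kernel
lemma cc7 : ClassCheck 91 37 tab91 21 24 3 31 := by constructor <;> decide +kernel
lemma cc8 : ClassCheck 91 37 tab91 70 87 10 31 := by constructor <;> decide +kernel

open Real Filter Topology
open scoped NumberTheorySymbols

lemma ksum_eq (f : ℕ → ℕ) (k : ℕ) : ksum f k = ∑ i ∈ Finset.range k, f i := by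
  induction k with
  | zero => simp [ksum]
  | succ k ih => rw [Finset.sum_range_succ, ← ih]; rfl

lemma kD_eq (q : ℕ) (f : ℕ → ℕ → ℕ) : kD q f = ∑ u ∈ Finset.range q, ∑ v ∈ Finset.range q, f u v := by
  unfold kD; rw [ksum_eq]; simp only [ksum_eq]

def wt (q r tab : ℕ) (x : ZMod q) : ℤ := (tb tab x.val : ℤ) - r

lemma wt_val (q r tab a : ℕ) (x : ZMod q) (h : x = (a : ZMod q)) :
    (tb tab (a % q) : ℤ) = wt q r tab x + r := by
  subst h; unfold wt; rw [ZMod.val_natCast]; ring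

lemma kQ_cast (n : ℤ) (q n0 u v : ℕ) (hn0 : (n : ZMod q) = (n0 : ZMod q)) :
    ((kQ q n0 u v : ℕ) : ZMod q) = ((Qz n u v : ℤ) : ZMod q) := by
  have : kQ q n0 u v = ((u + 1) * (u + 1 + n0 * v) + v * v) % q := rfl
  rw [this, ZMod.natCast_mod]
  unfold Qz
  push_cast
  rw [hn0]; ring

lemma kE1_eq (n : ℤ) (q r tab n0 mi : ℕ) (hn0 : (n : ZMod q) = (n0 : ZMod q)) (g : ℕ → ℕ → ℕ) :
    ((kE1 q tab n0 mi g : ℕ) : ℤ) = ∑ u ∈ Finset.range q, ∑ v ∈ Finset.range q,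
      (wt q r tab ((mi : ZMod q) * ((Qz n u v : ℤ) : ZMod q)) + r) * (g u v : ℤ) := by
  unfold kE1
  rw [kD_eq]
  push_cast
  apply Finset.sum_congr rfl; intro u _
  apply Finset.sum_congr rfl; intro v _
  rw [← wt_val q r tab (mi * kQ q n0 u v)]
  · simp only [Nat.mul_eq, Nat.cast_mul]; rfl
  · rw [Nat.cast_mul, kQ_cast n q n0 u v hn0]

lemma kE1_zero (n : ℤ) (q r tab n0 mi : ℕ) (hn0 : (n : ZMod q) = (n0 : ZMod q)) (g : ℕ → ℕ → ℕ)
    (h : kE1 q tab n0 mi g = r * kD q g) :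
    ∑ u ∈ Finset.range q, ∑ v ∈ Finset.range q,
      wt q r tab ((mi : ZMod q) * ((Qz n u v : ℤ) : ZMod q)) * (g u v : ℤ) = 0 := by
  have h1 := kE1_eq n q r tab n0 mi hn0 g
  rw [h, kD_eq] at h1
  simp only [add_mul, Finset.sum_add_distrib] at h1
  push_cast at h1
  simp only [← Finset.mul_sum] at h1
  linarith

lemma wt_odd (q r tab : ℕ) [NeZero q] (h : ksum (kOdd q r tab) q = 0) (x : ZMod q) :
    wt q r tab (-x) = - wt q r tab x := by
  rw [ksum_eq, Finset.sum_eq_zero_iff] at h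
  have h1 := h x.val (Finset.mem_range.mpr (ZMod.val_lt x))
  have h2 : tb tab x.val + tb tab ((q - x.val) % q) = 2 * r := by
    by_contra hc
    unfold kOdd at h1
    have : Nat.beq (Nat.add (tb tab x.val) (tb tab (Nat.mod (Nat.sub q x.val) q))) (Nat.mul 2 r) = false := by
      rw [Bool.eq_false_iff]
      intro hb
      exact hc (Nat.eq_of_beq_eq_true hb)
    rw [this] at h1
    simp at h1
  unfold wt
  rw [ZMod.neg_val']
  have : (tb tab x.val : ℤ) + tb tab ((q - x.val) % q) = 2 * r := by exact_mod_cast h2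
  linarith

lemma wt_mul (q r tab : ℕ) [NeZero q] (h : kD q (kBad q r tab) = 0) (x y : ZMod q) :
    ((wt q r tab (x * y) : ℤ) : ZMod r) = (wt q r tab x : ZMod r) * (wt q r tab y : ZMod r) := by
  rw [kD_eq, Finset.sum_eq_zero_iff] at h
  have h1 := h x.val (Finset.mem_range.mpr (ZMod.val_lt x))
  rw [Finset.sum_eq_zero_iff] at h1
  replace h1 := h1 y.val (Finset.mem_range.mpr (ZMod.val_lt y))
  have h2 : tb tab ((x.val * y.val) % q) % r = (tb tab x.val * tb tab y.val) % r := by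
    by_contra hc
    unfold kBad at h1
    have : Nat.beq (Nat.mod (tb tab (Nat.mod (Nat.mul x.val y.val) q)) r) (Nat.mod (Nat.mul (tb tab x.val) (tb tab y.val)) r) = false := by
      rw [Bool.eq_false_iff]
      intro hb
      exact hc (Nat.eq_of_beq_eq_true hb)
    rw [this] at h1
    simp at h1
  have h3 := (ZMod.natCast_eq_natCast_iff' _ _ r).mpr h2
  unfold wt
  rw [ZMod.val_mul]
  push_cast at h3 ⊢
  rw [h3]; simp

lemma lhs_zero (q r tab N : ℕ) [NeZero q] (h : TabCheck q r tab) (c : ℕ → ℤ) :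
    (((∑ a ∈ Finset.range q, ∑ b ∈ Finset.range N,
        wt q r tab (((a + 1) * (b + 1) : ℕ) : ZMod q) * c b * (((a : ℤ) + 1) * ((b : ℤ) + 1)) : ℤ)) : ZMod r) = 0 := by
  have h1 : ∑ a ∈ Finset.range q, (wt q r tab ((a + 1 : ℕ) : ZMod q) : ZMod r) * ((a : ZMod r) + 1) = 0 := by
    have h2 := h.sum
    rw [ksum_eq] at h2
    have h3 := (ZMod.natCast_eq_zero_iff _ r).mpr (Nat.dvd_of_mod_eq_zero h2)
    rw [← h3]
    push_cast
    apply Finset.sum_congr rfl; intro a _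
    have h4 := wt_val q r tab (a + 1) _ rfl
    have h5 := congrArg (fun z : ℤ => (z : ZMod r)) h4
    simp only [Int.cast_add, Int.cast_natCast, CharP.cast_eq_zero, add_zero] at h5
    rw [h5]; push_cast; ring
  push_cast
  have : ∀ a ∈ Finset.range q, ∑ b ∈ Finset.range N,
      (wt q r tab (((a : ZMod q) + 1) * ((b : ZMod q) + 1)) : ZMod r) * (c b : ZMod r) * (((a : ZMod r) + 1) * ((b : ZMod r) + 1))
      = ((wt q r tab ((a + 1 : ℕ) : ZMod q) : ZMod r) * ((a : ZMod r) + 1)) * ∑ b ∈ Finset.range N,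
        (wt q r tab ((b + 1 : ℕ) : ZMod q) : ZMod r) * (c b : ZMod r) * ((b : ZMod r) + 1) := by
    intro a _
    rw [Finset.mul_sum]
    apply Finset.sum_congr rfl; intro b _
    rw [wt_mul q r tab h.mul]; push_cast; ring
  rw [Finset.sum_congr rfl this, ← Finset.sum_mul, h1, zero_mul]

lemma class_result (n : ℤ) (hno : Odd n) (hns : ¬ IsSquare (n ^ 2 - 4)) [IsPrincipalIdealRing (RQ n)]
    (q r tab n0 mi a0 b0 : ℕ) (hq : Odd q) (hq3 : 3 ≤ q) (hr : r.Prime) (hrD : ¬ (r : ℤ) ∣ n ^ 2 - 4)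
    (hbig : 2 * (q : ℤ) + 2 ≤ n) (hn0 : (q : ℤ) ∣ n - n0) (hmi : (q : ℤ) ∣ mi * (n0 - 2) - 1)
    (ht : TabCheck q r tab) (hc : ClassCheck q r tab n0 mi a0 b0) :
    (r : ℤ) ∣ a0 + b0 * (n - 2) := by
  have : NeZero q := ⟨hq.pos.ne'⟩
  have : Fact r.Prime := ⟨hr⟩
  obtain ⟨m, hm⟩ : ∃ m : ℕ, (m : ℤ) = n - 2 := ⟨(n - 2).toNat, by omega⟩
  obtain ⟨D, hD⟩ : ∃ D : ℕ, (D : ℤ) = n ^ 2 - 4 := ⟨(n ^ 2 - 4).toNat, by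
    have : 0 ≤ n ^ 2 - 4 := by nlinarith
    omega⟩
  have hn0' : (n : ZMod q) = (n0 : ZMod q) := by
    have := (ZMod.intCast_zmod_eq_zero_iff_dvd (n - n0) q).mpr hn0
    push_cast at this
    exact sub_eq_zero.mp this
  have hmz : (m : ZMod q) = (n0 : ZMod q) - 2 := by
    have := congrArg (fun z : ℤ => (z : ZMod q)) hm
    push_cast at this
    rw [this, hn0']
  have hmi' : (mi : ZMod q) * (m : ZMod q) = 1 := by
    have := (ZMod.intCast_zmod_eq_zero_iff_dvd (mi * (n0 - 2) - 1) q).mpr hmi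
    push_cast at this
    rw [hmz]
    exact sub_eq_zero.mp this
  have hco : Nat.Coprime q m := by
    have : IsUnit (m : ZMod q) := .of_mul_eq_one_right _ hmi'
    exact ((ZMod.isUnit_iff_coprime m q).mp this).symm
  have hS : ∀ u < q, ∀ v < q, ∃ κ < m, q * κ + (u + 1 + v) = m * kS q mi u v := by
    intro u hu v hv
    have hk : kS q mi u v = (mi * (u + 1 + v) + q - 1) % q + 1 := rfl
    have h1 : 1 ≤ kS q mi u v := by rw [hk]; omega
    have h2 : kS q mi u v ≤ q := by
      rw [hk]; have := Nat.mod_lt (mi * (u + 1 + v) + q - 1) hq.pos; omega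
    have h3 : ((kS q mi u v : ℕ) : ZMod q) = mi * ((u + 1 + v : ℕ) : ZMod q) := by
      rw [hk]
      push_cast
      rw [ZMod.natCast_mod, Nat.cast_sub (by omega)]
      push_cast; simp
    have h4 : u + 1 + v ≤ m * kS q mi u v := by nlinarith
    have h5 : q ∣ m * kS q mi u v - (u + 1 + v) := by
      rw [← ZMod.natCast_eq_zero_iff, Nat.cast_sub h4, Nat.cast_mul, h3, ← mul_assoc, mul_comm (m : ZMod q), hmi']
      simp
    obtain ⟨κ, hκ⟩ := h5
    refine ⟨κ, ?_, by omega⟩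
    by_contra hcon
    have : q * m ≤ q * κ := Nat.mul_le_mul_left _ (by omega)
    have : m * kS q mi u v ≤ m * q := Nat.mul_le_mul_left _ h2
    have : q * m = m * q := mul_comm _ _
    omega
  have z1 := kE1_zero n q r tab n0 1 hn0' _ hc.c1
  have z2 := kE1_zero n q r tab n0 1 hn0' _ hc.c2
  have z3 := kE1_zero n q r tab n0 mi hn0' _ hc.c3
  have z4 := kE1_zero n q r tab n0 mi hn0' _ hc.c4
  have e1 : ∀ u v, ((kOne u v : ℕ) : ℤ) = 1 := fun _ _ => rfl
  have e2 : ∀ u v : ℕ, ((kσ u v : ℕ) : ℤ) = (u : ℤ) + 1 + v := fun _ _ => by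
    simp [kσ]
  simp only [e1, mul_one, Nat.cast_one, one_mul] at z1 z3
  simp only [e2, Nat.cast_one, one_mul] at z2 z4
  have key := master n (by omega) hno hns D hD m hm q hq hco (wt q r tab) (wt_odd q r tab ht.odd) mi hmi'
    (kS q mi) hS z1 z2 z3 z4
  have k2 := congrArg (fun z : ℤ => (z : ZMod r)) key
  simp only [Int.cast_mul, Int.cast_natCast] at k2
  rw [lhs_zero q r tab (q * D) ht (fun b => J(((b + 1 : ℕ) : ℤ) | D)), mul_zero] at k2
  have hD0 : (D : ZMod r) ≠ 0 := by
    intro h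
    rw [ZMod.natCast_eq_zero_iff] at h
    apply hrD
    rw [← hD]; exact_mod_cast h
  have k3 := (mul_eq_zero.mp k2.symm).resolve_left hD0
  have hA : ((a0 : ℕ) : ZMod r) = ((kE1 q tab n0 1 kA1 + kE1 q tab n0 mi (kA2 q r mi) : ℕ) : ZMod r) := by
    rw [← hc.hA, ZMod.natCast_mod]
  have hB : ((b0 : ℕ) : ZMod r) = ((kE1 q tab n0 1 kN + kE1 q tab n0 mi (kB2 q mi) : ℕ) : ZMod r) := by
    rw [← hc.hB, ZMod.natCast_mod]
  have eK : ∀ (mi : ℕ) (g : ℕ → ℕ → ℕ), ((kE1 q tab n0 mi g : ℕ) : ZMod r) =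
      ∑ u ∈ Finset.range q, ∑ v ∈ Finset.range q,
      (wt q r tab ((mi : ZMod q) * ((Qz n u v : ℤ) : ZMod q)) : ZMod r) * (g u v : ZMod r) := by
    intro mi g
    have := congrArg (fun z : ℤ => (z : ZMod r)) (kE1_eq n q r tab n0 mi hn0' g)
    simpa using this
  rw [← ZMod.intCast_zmod_eq_zero_iff_dvd]
  have hnr : (n : ZMod r) = m + 2 := by
    have := congrArg (fun z : ℤ => (z : ZMod r)) hm
    push_cast at this
    rw [this]; ring
  rw [← hm]
  push_cast
  rw [hA, hB, ← k3]
  push_cast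
  rw [eK, eK, eK, eK]
  simp only [Nat.cast_one, one_mul]
  rw [← Finset.sum_add_distrib, ← Finset.sum_add_distrib, Finset.sum_mul, ← Finset.sum_add_distrib]
  apply Finset.sum_congr rfl; intro u hu
  rw [← Finset.sum_add_distrib, ← Finset.sum_add_distrib, Finset.sum_mul, ← Finset.sum_add_distrib]
  apply Finset.sum_congr rfl; intro v hv
  have hSq : kS q mi u v ≤ q := by
    have hk : kS q mi u v = (mi * (u + 1 + v) + q - 1) % q + 1 := rfl
    rw [hk]; have := Nat.mod_lt (mi * (u + 1 + v) + q - 1) hq.pos; omega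
  have f1 : ((kN u v : ℕ) : ZMod r) = ((u : ZMod r) + 1) ^ 2 + (v : ZMod r) ^ 2 := by
    simp [kN]; ring
  have f2 : ((kA1 u v : ℕ) : ZMod r) = 4 * ((u : ZMod r) + 1) * v + 2 * (((u : ZMod r) + 1) ^ 2 + (v : ZMod r) ^ 2) := by
    rw [← f1]; simp [kA1]
  have f3 : ((kB2 q mi u v : ℕ) : ZMod r) = 2 * (kS q mi u v : ZMod r) * (q - (kS q mi u v : ZMod r)) := by
    have : kB2 q mi u v = 2 * kS q mi u v * (q - kS q mi u v) := rfl
    rw [this, Nat.cast_mul, Nat.cast_sub hSq]; simp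
  have f4 : ((kA2 q r mi u v : ℕ) : ZMod r) = ((u : ZMod r) + 1) ^ 2 + (v : ZMod r) ^ 2 +
      4 * (kS q mi u v : ZMod r) * ((u : ZMod r) + 1 + v - q) := by
    have : kA2 q r mi u v = kN u v + 4 * kS q mi u v * (u + 1 + v + q * (r - 1)) := rfl
    rw [this]
    push_cast
    rw [f1, Nat.cast_sub hr.one_le, ZMod.natCast_self r]; push_cast; ring
  rw [f1, f2, f3, f4, hnr]
  ring

open Real Filter Topology
open scoped NumberTheorySymbols

lemma small_check : ∀ n ∈ List.range 214, 6 ≤ n → n ≠ 9 → n ≠ 21 →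
    ∃ p ∈ [2, 3, 5, 7, 11, 13, 17, 19, 23, 29, 31, 37], p + 2 < n ∧ ∃ b ∈ List.range p, (b * b + n * b + 1) % p = 0 := by
  decide +kernel

lemma res_of (r : ℕ) (hr : 0 < r) (n a b c : ℤ)
    (hbc : ∀ x ∈ List.range r, (r : ℤ) ∣ a + b * ((x : ℤ) - 2) → (x : ℤ) = c)
    (h : (r : ℤ) ∣ a + b * (n - 2)) : n % r = c := by
  have hr' : (0 : ℤ) < r := by exact_mod_cast hr
  have h0 := Int.emod_nonneg n hr'.ne'
  have h1 := Int.emod_lt_of_pos n hr'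
  obtain ⟨x, hx⟩ := Int.eq_ofNat_of_zero_le h0
  rw [hx]
  apply hbc x (List.mem_range.mpr (by omega))
  rw [← hx]
  have h3 : a + b * (n % r - 2) = a + b * (n - 2) - r * (b * (n / r)) := by
    have := Int.emod_add_mul_ediv n r
    linear_combination b * this
  rw [h3]
  exact dvd_sub h (dvd_mul_right _ _)

lemma classes105 (n : ℤ) (m3 : n % 3 = 0) (m5 : n % 5 = 1 ∨ n % 5 = 4) (m7 : n % 7 = 0 ∨ n % 7 = 3 ∨ n % 7 = 4) :
    n % 105 = 21 ∨ n % 105 = 24 ∨ n % 105 = 39 ∨ n % 105 = 66 ∨ n % 105 = 81 ∨ n % 105 = 84 := by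
  rw [← Int.emod_emod_of_dvd n (show (3 : ℤ) ∣ 105 by norm_num)] at m3
  rw [← Int.emod_emod_of_dvd n (show (5 : ℤ) ∣ 105 by norm_num)] at m5
  rw [← Int.emod_emod_of_dvd n (show (7 : ℤ) ∣ 105 by norm_num)] at m7
  have h1 : 0 ≤ n % 105 := by omega
  have h2 : n % 105 < 105 := by omega
  generalize n % 105 = c at *
  interval_cases c <;> simp at *

lemma r91a (n : ℤ) (h : n % 7 = 0) (h' : n % 13 = 8) : n % 91 = 21 := by omega
lemma r91b (n : ℤ) (h : n % 7 = 0) (h' : n % 13 = 5) : n % 91 = 70 := by omega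
lemma dvd_of_res (q : ℕ) (n c : ℤ) (h : n % q = c) : (q : ℤ) ∣ n - c := by
  rw [← h]; exact Int.dvd_self_sub_emod

lemma forward (n : ℤ) (hn : 6 ≤ n) (hns : ¬ IsSquare (n ^ 2 - 4)) [IsPrincipalIdealRing (RQ n)]
    (h9 : n ≠ 9) (h21 : n ≠ 21) : False := by
  have NR := no_root n (by omega) hns
  rcases lt_or_ge n 214 with hlt | hge
  · obtain ⟨k, rfl⟩ := Int.eq_ofNat_of_zero_le (show 0 ≤ n by omega)
    obtain ⟨p, hp, hpn, b, hb, hd⟩ := small_check k (List.mem_range.mpr (by omega)) (by omega) (by omega) (by omega)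
    have hpp : p.Prime := by
      simp only [List.mem_cons, List.not_mem_nil, or_false] at hp
      rcases hp with rfl | rfl | rfl | rfl | rfl | rfl | rfl | rfl | rfl | rfl | rfl | rfl <;> norm_num
    apply NR p hpp (by omega) b
    have : p ∣ b * b + k * b + 1 := Nat.dvd_of_mod_eq_zero hd
    have h2 : (p : ℤ) ∣ ((b * b + k * b + 1 : ℕ) : ℤ) := by exact_mod_cast this
    convert h2 using 1
    push_cast; ring
  · have hno : Odd n := by
      by_contra he
      rw [Int.not_odd_iff_even] at he
      obtain ⟨k, hk⟩ := he
      apply NR 2 Nat.prime_two (by push_cast; omega) 1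
      push_cast; omega
    have NM : ∀ (p : ℕ) (n0 b : ℤ), p.Prime → (p : ℤ) < n - 2 → (p : ℤ) ∣ b ^ 2 + n0 * b + 1 →
        n % p ≠ n0 := by
      intro p n0 b hp hpn hb hd
      apply NR p hp hpn b
      have := dvd_add hb (Dvd.dvd.mul_right (dvd_of_res p n n0 hd) b)
      have h2 : b ^ 2 + n * b + 1 = b ^ 2 + n0 * b + 1 + (n - n0) * b := by ring
      rw [h2]; exact this
    have hnD : ∀ p : ℕ, p.Prime → (p : ℤ) < n - 2 → ¬ (p : ℤ) ∣ n ^ 2 - 4 := by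
      intro p hp hpn hd
      rw [show n ^ 2 - 4 = (n - 2) * (n + 2) by ring] at hd
      rcases (Nat.prime_iff_prime_int.mp hp).dvd_or_dvd hd with h | h
      · apply NR p hp hpn (-1)
        rw [show ((-1 : ℤ)) ^ 2 + n * (-1) + 1 = -(n - 2) by ring]
        exact (dvd_neg).mpr h
      · apply NR p hp hpn 1
        rw [show ((1 : ℤ)) ^ 2 + n * 1 + 1 = n + 2 by ring]
        exact h
    have D13 := hnD 13 (by norm_num) (by push_cast; omega)
    have D37 := hnD 37 (by norm_num) (by push_cast; omega)
    have R := fun n0 mi a0 b0 h1 h2 (h3 : ClassCheck 105 13 tab105 n0 mi a0 b0) =>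
      class_result n hno hns 105 13 tab105 n0 mi a0 b0 (by decide) (by norm_num) (by norm_num) D13
      (by push_cast; omega) h1 h2 tc105 h3
    have R' := fun n0 mi a0 b0 h1 h2 (h3 : ClassCheck 91 37 tab91 n0 mi a0 b0) =>
      class_result n hno hns 91 37 tab91 n0 mi a0 b0 (by decide) (by norm_num) (by norm_num) D37
      (by push_cast; omega) h1 h2 tc91 h3
    have m3 : n % 3 = 0 := by
      have h1 := NM 3 1 1 (by norm_num) (by push_cast; omega) (by norm_num)
      have h2 := NM 3 2 2 (by norm_num) (by push_cast; omega) (by norm_num)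
      clear D13 D37 R R' NR NM hnD hno hns
      push_cast at *
      omega
    have m5 : n % 5 = 1 ∨ n % 5 = 4 := by
      have h0 := NM 5 0 2 (by norm_num) (by push_cast; omega) (by norm_num)
      have h2 := NM 5 2 4 (by norm_num) (by push_cast; omega) (by norm_num)
      have h3 := NM 5 3 1 (by norm_num) (by push_cast; omega) (by norm_num)
      clear m3; clear D13 D37 R R' NR NM hnD hno hns
      push_cast at *
      omega
    have m7 : n % 7 = 0 ∨ n % 7 = 3 ∨ n % 7 = 4 := by
      have h1 := NM 7 1 2 (by norm_num) (by push_cast; omega) (by norm_num)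
      have h2 := NM 7 2 6 (by norm_num) (by push_cast; omega) (by norm_num)
      have h5 := NM 7 5 1 (by norm_num) (by push_cast; omega) (by norm_num)
      have h6 := NM 7 6 3 (by norm_num) (by push_cast; omega) (by norm_num)
      clear m3 m5; clear D13 D37 R R' NR NM hnD hno hns
      push_cast at *
      omega
    have m13 : n % 13 ≠ 9 ∧ n % 13 ≠ 1 ∧ n % 13 ≠ 12 ∧ n % 13 ≠ 4 := by
      have h9 := NM 13 9 6 (by norm_num) (by push_cast; omega) (by norm_num)
      have h1 := NM 13 1 3 (by norm_num) (by push_cast; omega) (by norm_num)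
      have h12 := NM 13 12 4 (by norm_num) (by push_cast; omega) (by norm_num)
      have h4 := NM 13 4 2 (by norm_num) (by push_cast; omega) (by norm_num)
      clear m3 m5 m7; clear D13 D37 R R' NR NM hnD hno hns
      push_cast at *
      omega
    have m37 : n % 37 ≠ 21 ∧ n % 37 ≠ 16 := by
      have h21 := NM 37 21 18 (by norm_num) (by push_cast; omega) (by norm_num)
      have h16 := NM 37 16 2 (by norm_num) (by push_cast; omega) (by norm_num)
      clear m3 m5 m7 m13; clear D13 D37 R R' NR NM hnD hno hns
      push_cast at *
      omega
    have m91 : n % 91 = 21 ∨ n % 91 = 70 := by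
      rcases classes105 n m3 m5 m7 with h | h | h | h | h | h
      · have h13 := res_of 13 (by norm_num) n _ _ 8 (by decide) (R 21 94 9 5 (dvd_of_res 105 n _ h) (by norm_num) cc1)
        exact Or.inl (r91a n (by clear D13 D37; omega) h13)
      · have h13 := res_of 13 (by norm_num) n _ _ 9 (by decide) (R 24 43 10 6 (dvd_of_res 105 n _ h) (by norm_num) cc2)
        exact absurd h13 m13.1
      · have h13 := res_of 13 (by norm_num) n _ _ 1 (by decide) (R 39 88 6 6 (dvd_of_res 105 n _ h) (by norm_num) cc3)
        exact absurd h13 m13.2.1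
      · have h13 := res_of 13 (by norm_num) n _ _ 12 (by decide) (R 66 64 5 6 (dvd_of_res 105 n _ h) (by norm_num) cc4)
        exact absurd h13 m13.2.2.1
      · have h13 := res_of 13 (by norm_num) n _ _ 4 (by decide) (R 81 4 1 6 (dvd_of_res 105 n _ h) (by norm_num) cc5)
        exact absurd h13 m13.2.2.2
      · have h13 := res_of 13 (by norm_num) n _ _ 5 (by decide) (R 84 73 11 5 (dvd_of_res 105 n _ h) (by norm_num) cc6)
        exact Or.inr (r91b n (by clear D13 D37; omega) h13)
    rcases m91 with h | h
    · have h37 := res_of 37 (by norm_num) n _ _ 21 (by decide) (R' 21 24 3 31 (dvd_of_res 91 n _ h) (by norm_num) cc7)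
      exact m37.1 h37
    · have h37 := res_of 37 (by norm_num) n _ _ 16 (by decide) (R' 70 87 10 31 (dvd_of_res 91 n _ h) (by norm_num) cc8)
      exact m37.2 h37

theorem maximal_sub_classNumber_one_iff (n : ℤ) (hn : 0 ≤ n) (hns : ¬ IsSquare (n ^ 2 - 4))
    (hmax : IsMaximalOrder (n ^ 2 - 4)) :
    classNumber (n ^ 2 - 4) = 1 ↔ n ∈ ({0, 1, 3, 4, 5, 9, 21} : Set ℤ) := by
  constructor
  · intro h
    have := pid_of n hns hmax h
    simp only [Set.mem_insert_iff, Set.mem_singleton_iff]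
    by_contra hc
    push Not at hc
    obtain ⟨h0, h1, h3, h4, h5, h9, h21⟩ := hc
    have h2 : n ≠ 2 := by
      rintro rfl
      exact hns ⟨0, by norm_num⟩
    exact forward n (by omega) hns h9 h21
  · exact reverse_dir n hns
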